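/- arXiv:1302.6904 — 3 statements merged into one kernel-verified Lean document; each statement's English description precedes it below -/
import Mathlib

section
/- Let p be an odd prime, q a power of p, and let P be a Sylow p-subgroup of the symplectic group Sp_12(F_q). Then the number of conjugacy classes of P equals v¹¹ + 15v¹⁰ + 112v⁹ + 547v⁸ + 1845v⁷ + 4121v⁶ + 5701v⁵ + 4560v⁴ + 1960v³ + 410v² + 36v + 1, where v = q − 1. -/
set_option linter.unusedSectionVars false
set_option linter.unusedVariables false
section Phase1
variable {ι F : Type*} [Fintype ι] [DecidableEq ι] [Field F]

/-- projection to coordinates in X -/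
def prj (X : Finset ι) : (ι → F) →ₗ[F] (ι → F) where
  toFun x i := if i ∈ X then x i else 0
  map_add' x y := by ext i; by_cases h : i ∈ X <;> simp [h]
  map_smul' c x := by ext i; by_cases h : i ∈ X <;> simp [h]

theorem prj_apply (X : Finset ι) (x : ι → F) (i : ι) :
    prj X x i = if i ∈ X then x i else 0 := rfl

abbrev Bil (ι F : Type*) [Fintype ι] [Field F] := (ι → F) →ₗ[F] (ι → F) →ₗ[F] (ι → F)

def resB (b : Bil ι F) (X : Finset ι) : Bil ι F :=
  LinearMap.mk₂ F (fun x y => prj X (b (prj X x) (prj X y)))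
    (by intros; simp) (by intros; simp) (by intros; simp) (by intros; simp)

theorem resB_apply (b : Bil ι F) (X : Finset ι) (x y : ι → F) :
    resB b X x y = prj X (b (prj X x) (prj X y)) := rfl

structure IsLieB (b : Bil ι F) : Prop where
  anti : ∀ x y, b x y = - b y x
  jac : ∀ x y z, b (b x y) z = b x (b y z) - b y (b x z)

def Sup (X : Finset ι) (x : ι → F) : Prop := ∀ i, i ∉ X → x i = 0

theorem Sup.prj {X : Finset ι} {x : ι → F} (h : Sup X x) : prj X x = x := by
  ext i; by_cases hi : i ∈ X <;> simp [prj_apply, hi, h i]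

theorem prj_sup (X : Finset ι) (x : ι → F) : Sup X (prj X x) := by
  intro i hi; simp [prj_apply, hi]

structure Sol (b : Bil ι F) (X Z : Finset ι) (f x : ι → F) : Prop where
  hf : Sup X f
  hx : Sup X x
  hz : ∀ i ∈ Z, f i ≠ 0
  h : ∀ y, f ⬝ᵥ b x y = 0

noncomputable def TT (b : Bil ι F) (X Z : Finset ι) : ℕ :=
  Nat.card {p : (ι → F) × (ι → F) // Sol b X Z p.1 p.2}

abbrev ee (i : ι) : ι → F := Pi.single i 1

theorem prj_erase (X : Finset ι) (g : ι) (hg : g ∈ X) (x : ι → F) :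
    prj (X.erase g) x = prj X x - x g • ee g := by
  ext i
  by_cases h : i = g
  · subst h; simp [prj_apply, hg]
  · simp [prj_apply, h]

theorem prj_prj_sub {X Y : Finset ι} (h : Y ⊆ X) (x : ι → F) : prj X (prj Y x) = prj Y x := by
  ext i
  by_cases hi : i ∈ Y
  · simp [prj_apply, hi, h hi]
  · simp [prj_apply, hi]

theorem prj_prj_sub' {X Y : Finset ι} (h : Y ⊆ X) (x : ι → F) : prj Y (prj X x) = prj Y x := by
  ext i
  by_cases hi : i ∈ Y
  · simp [prj_apply, hi, h hi]
  · simp [prj_apply, hi]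

theorem resB_resB (b : Bil ι F) {X Y : Finset ι} (h : Y ⊆ X) : resB (resB b X) Y = resB b Y := by
  refine LinearMap.ext fun x => LinearMap.ext fun y => ?_
  simp [resB_apply, prj_prj_sub h, prj_prj_sub' h]

def StB (b : Bil ι F) (X : Finset ι) : Prop := resB b X = b

theorem StB.eq {b : Bil ι F} {X : Finset ι} (h : StB b X) (x y : ι → F) :
    b x y = prj X (b (prj X x) (prj X y)) := by
  conv_lhs => rw [← h]
  rfl

theorem StB.left {b : Bil ι F} {X : Finset ι} (h : StB b X) (x y : ι → F) :
    b (prj X x) y = b x y := by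
  rw [h.eq, h.eq x y, prj_prj_sub (le_refl _)]

theorem StB.right {b : Bil ι F} {X : Finset ι} (h : StB b X) (x y : ι → F) :
    b x (prj X y) = b x y := by
  rw [h.eq, h.eq x y, prj_prj_sub (le_refl _)]

theorem StB.sup {b : Bil ι F} {X : Finset ι} (h : StB b X) (x y : ι → F) :
    Sup X (b x y) := by
  rw [h.eq]; exact prj_sup _ _

theorem stB_resB (b : Bil ι F) (X : Finset ι) : StB (resB b X) X := resB_resB b (le_refl _)

theorem sup_dot {X : Finset ι} {f : ι → F} (h : Sup X f) (w : ι → F) : f ⬝ᵥ prj X w = f ⬝ᵥ w := by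
  simp only [dotProduct]
  apply Finset.sum_congr rfl
  intro i _
  by_cases hi : i ∈ X
  · simp [prj_apply, hi]
  · simp [prj_apply, hi, h i hi]

theorem dot_ee (f : ι → F) (i : ι) : f ⬝ᵥ ee i = f i := by simp [ee]

/-! central quotient -/
theorem res_central {b : Bil ι F} {X : Finset ι} (hs : StB b X) (hl : IsLieB b) {g : ι}
    (hg : g ∈ X) (hc : ∀ x, b x (ee g) = 0) :
    (∀ x y, resB b (X.erase g) x y = prj (X.erase g) (b x y)) ∧ IsLieB (resB b (X.erase g)) := by
  have hc' : ∀ x, b (ee g) x = 0 := fun x => by rw [hl.anti, hc, neg_zero]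
  have h1 : ∀ x y, resB b (X.erase g) x y = prj (X.erase g) (b x y) := by
    intro x y
    rw [resB_apply, prj_erase X g hg x, prj_erase X g hg y]
    simp [hc, hc', hs.left, hs.right]
  have hr : ∀ x w, b x (prj (X.erase g) w) = b x w := by
    intro x w; rw [prj_erase X g hg]; simp [hc, hs.right]
  have hL : ∀ x w, b (prj (X.erase g) w) x = b w x := by
    intro x w; rw [prj_erase X g hg]; simp [hc', hs.left]
  refine ⟨h1, ⟨fun x y => ?_, fun x y z => ?_⟩⟩
  · rw [h1, h1, hl.anti, map_neg]
  · simp only [h1, hr, hL]; rw [hl.jac, map_sub]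

theorem sol_central_zero {b : Bil ι F} {X Z : Finset ι} (hs : StB b X) (hl : IsLieB b) {g : ι}
    (hg : g ∈ X) (hgz : g ∉ Z) (hc : ∀ x, b x (ee g) = 0) (f x : ι → F) :
    (Sol b X Z f x ∧ f g = 0) ↔ (Sol (resB b (X.erase g)) (X.erase g) Z f (prj (X.erase g) x) ∧ Sup X x) := by
  have hc' : ∀ x, b (ee g) x = 0 := fun x => by rw [hl.anti, hc, neg_zero]
  obtain ⟨h1, -⟩ := res_central hs hl hg hc
  have hL : ∀ x w, b (prj (X.erase g) w) x = b w x := by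
    intro x w; rw [prj_erase X g hg]; simp [hc', hs.left]
  constructor
  · rintro ⟨⟨hf, hx, hz, h⟩, h0⟩
    have hf' : Sup (X.erase g) f := by
      intro i hi
      by_cases hig : i = g
      · rw [hig, h0]
      · exact hf i (fun hh => hi (Finset.mem_erase.2 ⟨hig, hh⟩))
    refine ⟨⟨hf', prj_sup _ _, hz, fun y => ?_⟩, hx⟩
    rw [h1, sup_dot hf', hL, h]
  · rintro ⟨⟨hf, hx, hz, h⟩, h0⟩
    refine ⟨⟨fun i hi => hf i (fun hh => hi (Finset.mem_of_mem_erase hh)), h0, hz, fun y => ?_⟩,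
      hf g (by simp)⟩
    have := h y
    rwa [h1, sup_dot hf, hL] at this

theorem card_central_zero [Finite F] {b : Bil ι F} {X Z : Finset ι} (hs : StB b X) (hl : IsLieB b) {g : ι}
    (hg : g ∈ X) (hgz : g ∉ Z) (hc : ∀ x, b x (ee g) = 0) :
    Nat.card {p : (ι → F) × (ι → F) // Sol b X Z p.1 p.2 ∧ p.1 g = 0} =
      Nat.card F * TT (resB b (X.erase g)) (X.erase g) Z := by
  rw [TT, ← Nat.card_prod]
  have key := sol_central_zero (Z := Z) hs hl hg hgz hc
  refine Nat.card_congr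
    { toFun := fun p => (p.1.2 g, ⟨(p.1.1, prj (X.erase g) p.1.2), ((key _ _).1 p.2).1⟩)
      invFun := fun p => ⟨(p.2.1.1, p.2.1.2 + p.1 • ee g), ?_⟩
      left_inv := ?_
      right_inv := ?_ }
  · obtain ⟨c, ⟨⟨f, x⟩, h⟩⟩ := p
    dsimp only at h ⊢
    have e1 : prj (X.erase g) (x + c • ee g) = x := by
      rw [map_add, h.hx.prj, map_smul]
      ext i
      by_cases hi : i = g
      · subst hi; simp [prj_apply]
      · simp [prj_apply, hi]
    refine (key _ _).2 ⟨by rw [e1]; exact h, ?_⟩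
    intro i hi
    have : i ≠ g := fun hh => hi (hh ▸ hg)
    simp [this, h.hx i (fun hh => hi (Finset.mem_of_mem_erase hh))]
  · rintro ⟨⟨f, x⟩, h⟩
    have hx := h.1.hx
    dsimp only at hx
    simp only [Subtype.mk.injEq, Prod.mk.injEq, true_and]
    rw [prj_erase X g hg, hx.prj, sub_add_cancel]
  · rintro ⟨c, ⟨⟨f, x⟩, h⟩⟩
    have hx := h.hx
    dsimp only at hx
    have hxg : x g = 0 := hx g (by simp)
    simp only [Prod.mk.injEq, Subtype.mk.injEq, true_and]
    refine ⟨by simp [hxg], ?_⟩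
    rw [map_add, hx.prj, map_smul]
    ext i
    by_cases hi : i = g
    · subst hi; simp [prj_apply]
    · simp [prj_apply, hi]

theorem card_split {α : Type*} [Finite α] (P Q : α → Prop) :
    Nat.card {a // P a} = Nat.card {a // P a ∧ Q a} + Nat.card {a // P a ∧ ¬ Q a} := by
  classical
  have := Fintype.ofFinite α
  simp only [Nat.card_eq_fintype_card, Fintype.card_subtype]
  rw [← Finset.card_filter_add_card_filter_not (s := Finset.univ.filter P) (p := Q)]
  simp [Finset.filter_filter]

theorem TT_central [Finite F] {b : Bil ι F} {X Z : Finset ι} (hs : StB b X) (hl : IsLieB b) {g : ι}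
    (hg : g ∈ X) (hgz : g ∉ Z) (hc : ∀ x, b x (ee g) = 0) :
    TT b X Z = Nat.card F * TT (resB b (X.erase g)) (X.erase g) Z + TT b X (insert g Z) := by
  rw [TT, card_split _ (fun p => p.1 g = 0), card_central_zero hs hl hg hgz hc]
  congr 1
  refine Nat.card_congr (Equiv.subtypeEquivRight fun p => ?_)
  constructor
  · rintro ⟨⟨hf, hx, hz, h⟩, h0⟩
    exact ⟨hf, hx, by simpa using ⟨h0, hz⟩, h⟩
  · rintro ⟨hf, hx, hz, h⟩
    exact ⟨⟨hf, hx, fun i hi => hz i (Finset.mem_insert_of_mem hi), h⟩,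
      hz g (Finset.mem_insert_self _ _)⟩

/-! pair rule -/
structure PairH (b : Bil ι F) (X Z : Finset ι) (α β γ : ι) (c : F) : Prop where
  hs : StB b X
  hl : IsLieB b
  hα : α ∈ X
  hβ : β ∈ X
  hαz : α ∉ Z
  hβz : β ∉ Z
  hγ : γ ∈ Z
  hZ : Z ⊆ X
  hzc : ∀ z ∈ Z, ∀ x, b x (ee z) = 0
  hc : c ≠ 0
  ne : α ≠ β
  hbr : ∀ x, b x (ee β) = (c * x α) • ee γ

end Phase1

set_option linter.unusedSectionVars false
set_option linter.unusedVariables false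
section Phase1
variable {ι F : Type*} [Fintype ι] [DecidableEq ι] [Field F]
namespace PairH
variable {b : Bil ι F} {X Z : Finset ι} {α β γ : ι} {c : F} 

theorem alpha0 (H : PairH b X Z α β γ c) (x y : ι → F) : b x y α = 0 := by
  have h1 := congrFun (H.hl.jac x y (ee β)) γ
  simp [H.hbr, H.hzc γ H.hγ, H.hc] at h1
  simpa [H.hc] using h1

theorem hbl (H : PairH b X Z α β γ c) (x : ι → F) : b (ee β) x = (-(c * x α)) • ee γ := by
  rw [H.hl.anti, H.hbr, neg_smul]

theorem αγ (H : PairH b X Z α β γ c) : α ≠ γ := fun h => H.hαz (h ▸ H.hγ)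
theorem βγ (H : PairH b X Z α β γ c) : β ≠ γ := fun h => H.hβz (h ▸ H.hγ)

theorem prjw (H : PairH b X Z α β γ c) (x y : ι → F) :
    prj (X.erase α) (b x y) = b x y := by
  rw [prj_erase X α H.hα, H.alpha0, (H.hs.sup x y).prj]; simp

theorem res1 (H : PairH b X Z α β γ c) (x y : ι → F) : resB b (X.erase α) x y =
    b (prj (X.erase α) x) (prj (X.erase α) y) := by
  rw [resB_apply, H.prjw]

theorem lie1 (H : PairH b X Z α β γ c) : IsLieB (resB b (X.erase α)) := by
  refine ⟨fun x y => ?_, fun x y z => ?_⟩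
  · simp only [H.res1]; rw [H.hl.anti]
  · simp only [H.res1, H.prjw]; rw [H.hl.jac]

theorem central1 (H : PairH b X Z α β γ c) (x : ι → F) : resB b (X.erase α) x (ee β) = 0 := by
  have : prj (X.erase α) (ee β : ι → F) = ee β := by
    apply Sup.prj
    intro i hi
    have : i ≠ β := by rintro rfl; exact hi (Finset.mem_erase.2 ⟨H.ne.symm, H.hβ⟩)
    simp [this]
  rw [H.res1, this, H.hbr]; simp [prj_apply]

theorem dot_erase (f w : ι → F) (hw : w α = 0) : prj (Finset.univ.erase α) f ⬝ᵥ w = f ⬝ᵥ w := by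
  simp only [dotProduct]
  apply Finset.sum_congr rfl
  intro i _
  by_cases hi : i = α
  · subst hi; simp [hw]
  · simp [prj_apply, hi]

theorem p1_aux (H : PairH b X Z α β γ c) {f x : ι → F} (h : Sol b X Z f x) : x α = 0 := by
  have h1 := h.h (ee β)
  have := h.hz γ H.hγ
  rw [H.hbr, dotProduct_smul, dot_ee] at h1
  simpa [H.hc, this] using h1

theorem upd_eq (x : ι → F) (i : ι) (s : F) : Function.update x i s = x + (s - x i) • ee i := by
  ext j
  by_cases h : j = i
  · subst h; simp
  · simp [h]

theorem p1 (H : PairH b X Z α β γ c) : TT b X Z = TT (resB b (X.erase α)) (X.erase α) Z := by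
  have hL : ∀ x : ι → F, Sup (X.erase α) x ↔ Sup X x ∧ x α = 0 := by
    intro x
    constructor
    · intro h
      exact ⟨fun i hi => h i (fun hh => hi (Finset.mem_of_mem_erase hh)), h α (by simp)⟩
    · rintro ⟨h1, h2⟩ i hi
      by_cases h : i = α
      · rw [h, h2]
      · exact h1 i (fun hh => hi (Finset.mem_erase.2 ⟨h, hh⟩))
  have hβα := H.ne.symm
  have hup : ∀ (x : ι → F) i s, Sup X x → i ∈ X → Sup X (Function.update x i s) := by
    intro x i s h hi j hj
    have : j ≠ i := by rintro rfl; exact hj hi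
    simp [this, h j hj]
  refine Nat.card_congr
    { toFun := fun p => ⟨(Function.update p.1.1 α 0, Function.update p.1.2 β (p.1.1 α)), ?_⟩
      invFun := fun p => ⟨(Function.update p.1.1 α (p.1.2 β),
        Function.update p.1.2 β (p.1.2 β + (p.1.1 ⬝ᵥ b p.1.2 (ee α)) / (c * p.1.1 γ))), ?_⟩
      left_inv := ?_
      right_inv := ?_ }
  · obtain ⟨⟨f, x⟩, h⟩ := p
    have hx := H.p1_aux h
    dsimp only at h hx ⊢
    refine ⟨(hL _).2 ⟨hup _ _ _ h.hf H.hα, by simp⟩, (hL _).2 ⟨hup _ _ _ h.hx H.hβ, by simp [H.ne, hx]⟩,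
      fun i hi => ?_, fun y => ?_⟩
    · have : i ≠ α := by rintro rfl; exact H.hαz hi
      simpa [this] using h.hz i hi
    · rw [upd_eq f, H.res1, add_dotProduct, smul_dotProduct, single_dotProduct, H.alpha0, mul_zero,
        smul_zero, add_zero, Sup.prj ((hL _).2 ⟨hup _ _ _ h.hx H.hβ, by simp [H.ne, hx]⟩), upd_eq x, map_add,
        LinearMap.add_apply, map_smul, LinearMap.smul_apply, H.hbl]
      simp [prj_apply, h.h]
  · obtain ⟨⟨f, x⟩, h⟩ := p
    dsimp only at h ⊢
    have hf := (hL _).1 h.hf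
    have hx := (hL _).1 h.hx
    refine ⟨hup _ _ _ hf.1 H.hα, hup _ _ _ hx.1 H.hβ, fun i hi => ?_, fun y => ?_⟩
    · have : i ≠ α := by rintro rfl; exact H.hαz hi
      simpa [this] using h.hz i hi
    · have h1 := h.h y
      rw [H.res1, h.hx.prj, prj_erase X α H.hα, map_sub, H.hs.right, map_smul, dotProduct_sub,
        dotProduct_smul, sub_eq_zero] at h1
      have hg := h.hz γ H.hγ
      have hc := H.hc
      rw [upd_eq f, add_dotProduct, smul_dotProduct, single_dotProduct, H.alpha0, mul_zero,
        smul_zero, add_zero, upd_eq x, map_add,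
        LinearMap.add_apply, map_smul, LinearMap.smul_apply, H.hbl, dotProduct_add, h1]
      simp
      field_simp
      ring
  · rintro ⟨⟨f, x⟩, h⟩
    have hx := H.p1_aux h
    have hb := h.h (ee α)
    have hg := h.hz γ H.hγ
    have hc := H.hc
    dsimp only at h hb hx hg
    simp only [Subtype.mk.injEq, Prod.mk.injEq]
    refine ⟨by simp, ?_⟩
    rw [Function.update_idem]
    convert Function.update_eq_self β x using 2
    rw [upd_eq f, add_dotProduct, smul_dotProduct, single_dotProduct, H.alpha0, mul_zero,
        smul_zero, add_zero, upd_eq x, map_add,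
        LinearMap.add_apply, map_smul, LinearMap.smul_apply, H.hbl, dotProduct_add, hb]
    simp [H.αγ.symm]
    field_simp
    ring
  · rintro ⟨⟨f, x⟩, h⟩
    have hf := (hL _).1 h.hf
    dsimp only at hf
    simp only [Subtype.mk.injEq, Prod.mk.injEq]
    refine ⟨?_, ?_⟩
    · rw [Function.update_idem, ← hf.2]; simp
    · rw [Function.update_idem]; simp
end PairH
end Phase1

set_option linter.unusedSectionVars false
set_option linter.unusedVariables false
section Phase1
variable {ι F : Type*} [Fintype ι] [DecidableEq ι] [Field F]

def expD (D : (ι → F) →ₗ[F] (ι → F)) (t : F) : (ι → F) →ₗ[F] (ι → F) :=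
  LinearMap.id + t • D + (t ^ 2 / 2) • (D ∘ₗ D)

theorem expD_apply (D : (ι → F) →ₗ[F] (ι → F)) (t : F) (x : ι → F) :
    expD D t x = x + t • D x + (t ^ 2 / 2) • D (D x) := rfl

theorem expD_inv (h2 : (2 : F) ≠ 0) {D : (ι → F) →ₗ[F] (ι → F)} (h4 : ∀ x, D (D (D (D x))) = 0) (t : F)
    (x : ι → F) : expD D t (expD D (-t) x) = x := by
  simp only [expD_apply, map_add, map_smul, h4]
  ext i
  have h : (t ^ 2 / 2) * 2 = t ^ 2 := by field_simp
  simp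
  linear_combination (D (D x) i) * h

def coE (X : Finset ι) (D : (ι → F) →ₗ[F] (ι → F)) (t : F) (f : ι → F) : ι → F :=
  prj X fun i => f ⬝ᵥ expD D t (ee i)

theorem coE_dot (X : Finset ι) (D : (ι → F) →ₗ[F] (ι → F)) (t : F) (f w : ι → F) (hw : Sup X w) :
    coE X D t f ⬝ᵥ w = f ⬝ᵥ expD D t w := by
  have h1 : coE X D t f ⬝ᵥ w = (fun i => f ⬝ᵥ expD D t (ee i)) ⬝ᵥ w := by
    rw [dotProduct_comm, coE, sup_dot hw, dotProduct_comm]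
  rw [h1]
  conv_rhs => rw [pi_eq_sum_univ' w]
  rw [map_sum, dotProduct_sum, dotProduct]
  refine Finset.sum_congr rfl fun i _ => ?_
  rw [map_smul, dotProduct_smul, smul_eq_mul, mul_comm]

namespace PairH
variable {b : Bil ι F} {X Z : Finset ι} {α β γ : ι} {c : F}

theorem expD_br (H : PairH b X Z α β γ c) (h2 : (2 : F) ≠ 0)
    (hn : ∀ x y, b (b (ee α) (b (ee α) x)) (b (ee α) y) = 0) (t : F) (x y : ι → F) :
    expD (b (ee α)) t (b x y) = b (expD (b (ee α)) t x) (expD (b (ee α)) t y) := by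
  have hd : ∀ x y, b (ee α) (b x y) = b (b (ee α) x) y + b x (b (ee α) y) := by
    intro x y; rw [H.hl.jac]; abel
  have hn' : ∀ x y, b (b (ee α) y) (b (ee α) (b (ee α) x)) = 0 := by
    intro x y; rw [H.hl.anti, hn, neg_zero]
  have e1 : b (ee α) (b (ee α) (b x y)) = b (b (ee α) (b (ee α) x)) y
      + (2 : F) • b (b (ee α) x) (b (ee α) y) + b x (b (ee α) (b (ee α) y)) := by
    rw [hd x y, map_add, hd (b (ee α) x) y, hd x (b (ee α) y), two_smul]; abel
  simp only [expD_apply]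
  rw [e1, hd x y]
  simp only [map_add, map_smul, LinearMap.add_apply, LinearMap.smul_apply, hn, hn']
  have h3 : t ^ 2 / 2 * 2 = t ^ 2 := by field_simp
  simp only [smul_add, smul_smul, h3, smul_zero, add_zero]
  rw [pow_two]
  module

theorem sup1 (H : PairH b X Z α β γ c) (x y : ι → F) : Sup (X.erase α) (b x y) := by
  rw [← H.prjw]; exact prj_sup _ _

theorem sup_exp (H : PairH b X Z α β γ c) (t : F) {x : ι → F} (h : Sup (X.erase α) x) :
    Sup (X.erase α) (expD (b (ee α)) t x) := by
  intro i hi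
  rw [expD_apply]
  simp [h i hi, H.sup1 _ _ i hi]

theorem zsup (H : PairH b X Z α β γ c) {z : ι} (hz : z ∈ Z) : z ∈ X.erase α :=
  Finset.mem_erase.2 ⟨fun h => H.hαz (h ▸ hz), H.hZ hz⟩

theorem coE_z (H : PairH b X Z α β γ c) (t : F) (f : ι → F) {z : ι} (hz : z ∈ Z) :
    coE (X.erase α) (b (ee α)) t f z = f z := by
  rw [coE, prj_apply, if_pos (H.zsup hz), expD_apply, H.hzc z hz]
  simp

theorem coE_β (H : PairH b X Z α β γ c) (t : F) (f : ι → F) :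
    coE (X.erase α) (b (ee α)) t f β = f β + t * (c * f γ) := by
  rw [coE, prj_apply, if_pos (Finset.mem_erase.2 ⟨H.ne.symm, H.hβ⟩), expD_apply, H.hbr]
  simp [H.hzc γ H.hγ]

theorem phi_sol (H : PairH b X Z α β γ c) (h2 : (2 : F) ≠ 0)
    (h4 : ∀ x, b (ee α) (b (ee α) (b (ee α) (b (ee α) x))) = 0)
    (hn : ∀ x y, b (b (ee α) (b (ee α) x)) (b (ee α) y) = 0) (t : F) {f x : ι → F}
    (h : Sol (resB b (X.erase α)) (X.erase α) Z f x) :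
    Sol (resB b (X.erase α)) (X.erase α) Z (coE (X.erase α) (b (ee α)) t f)
      (expD (b (ee α)) (-t) x) := by
  refine ⟨prj_sup _ _, H.sup_exp _ h.hx, fun i hi => ?_, fun y => ?_⟩
  · rw [H.coE_z _ _ hi]; exact h.hz i hi
  · rw [H.res1, coE_dot _ _ _ _ _ (H.sup1 _ _), (H.sup_exp _ h.hx).prj, H.expD_br h2 hn,
      expD_inv h2 h4]
    have := h.h (expD (b (ee α)) t (prj (X.erase α) y))
    rwa [H.res1, h.hx.prj, (H.sup_exp _ (prj_sup _ _)).prj] at this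

theorem phi_inv (H : PairH b X Z α β γ c) (h2 : (2 : F) ≠ 0)
    (h4 : ∀ x, b (ee α) (b (ee α) (b (ee α) (b (ee α) x))) = 0) (t : F) {f : ι → F}
    (h : Sup (X.erase α) f) :
    coE (X.erase α) (b (ee α)) (-t) (coE (X.erase α) (b (ee α)) t f) = f := by
  ext i
  by_cases hi : i ∈ X.erase α
  · have hs : Sup (X.erase α) (ee i : ι → F) := by
      intro j hj
      have : j ≠ i := by rintro rfl; exact hj hi
      simp [this]
    rw [coE, prj_apply, if_pos hi, coE_dot _ _ _ _ _ (H.sup_exp _ hs), expD_inv h2 h4, dot_ee]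
  · rw [h i hi, coE, prj_apply, if_neg hi]

theorem p2 (H : PairH b X Z α β γ c) (h2 : (2 : F) ≠ 0)
    (h4 : ∀ x, b (ee α) (b (ee α) (b (ee α) (b (ee α) x))) = 0)
    (hn : ∀ x y, b (b (ee α) (b (ee α) x)) (b (ee α) y) = 0) :
    TT (resB b (X.erase α)) (X.erase α) Z = Nat.card F *
    Nat.card {p : (ι → F) × (ι → F) // Sol (resB b (X.erase α)) (X.erase α) Z p.1 p.2 ∧ p.1 β = 0} := by
  rw [TT, ← Nat.card_prod]
  have hc := H.hc
  refine Nat.card_congr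
    { toFun := fun p => (p.1.1 β, ⟨(coE (X.erase α) (b (ee α)) (-(p.1.1 β / (c * p.1.1 γ))) p.1.1,
        expD (b (ee α)) (- -(p.1.1 β / (c * p.1.1 γ))) p.1.2), H.phi_sol h2 h4 hn _ p.2, ?_⟩)
      invFun := fun p => ⟨(coE (X.erase α) (b (ee α)) (p.1 / (c * p.2.1.1 γ)) p.2.1.1,
        expD (b (ee α)) (-(p.1 / (c * p.2.1.1 γ))) p.2.1.2), H.phi_sol h2 h4 hn _ p.2.2.1⟩
      left_inv := ?_
      right_inv := ?_ }
  · have hg := p.2.hz γ H.hγ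
    dsimp only
    rw [H.coE_β]
    field_simp
    ring
  · rintro ⟨⟨f, x⟩, h⟩
    dsimp only at h
    simp only [Subtype.mk.injEq, Prod.mk.injEq]
    rw [H.coE_z _ _ H.hγ]
    refine ⟨?_, ?_⟩
    · have := H.phi_inv h2 h4 (-(f β / (c * f γ))) h.hf
      rwa [neg_neg] at this
    · rw [neg_neg]
      have := expD_inv h2 h4 (-(f β / (c * f γ))) x
      rwa [neg_neg] at this
  · rintro ⟨s, ⟨⟨f, x⟩, h, h0⟩⟩
    dsimp only at h h0
    have hg := h.hz γ H.hγ
    have e1 : coE (X.erase α) (b (ee α)) (s / (c * f γ)) f β = s := by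
      rw [H.coE_β, h0]; field_simp; ring
    simp only [Subtype.mk.injEq, Prod.mk.injEq]
    rw [H.coE_z _ _ H.hγ, e1]
    refine ⟨rfl, H.phi_inv h2 h4 _ h.hf, ?_⟩
    rw [neg_neg, expD_inv h2 h4]

theorem pair_rule [Finite F] (H : PairH b X Z α β γ c) (h2 : (2 : F) ≠ 0)
    (h4 : ∀ x, b (ee α) (b (ee α) (b (ee α) (b (ee α) x))) = 0)
    (hn : ∀ x y, b (b (ee α) (b (ee α) x)) (b (ee α) y) = 0) :
    TT b X Z = Nat.card F ^ 2 * TT (resB b ((X.erase α).erase β)) ((X.erase α).erase β) Z ∧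
      IsLieB (resB b ((X.erase α).erase β)) := by
  have hb : β ∈ X.erase α := Finset.mem_erase.2 ⟨H.ne.symm, H.hβ⟩
  have e := resB_resB b (Finset.erase_subset β (X.erase α))
  refine ⟨?_, ?_⟩
  · rw [H.p1, H.p2 h2 h4 hn, card_central_zero (stB_resB _ _) H.lie1 hb H.hβz H.central1, e]
    ring
  · rw [← e]
    exact (res_central (stB_resB _ _) H.lie1 hb H.central1).2
end PairH
end Phase1

def spRows : List (List (ℕ × ℕ × ℤ)) := [
  [(1,6,-1), (7,11,-1), (12,16,-1), (17,20,-1), (21,24,-1), (25,27,-1), (28,30,-1), (31,32,-1), (33,34,-1), (34,35,-2)],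
  [(0,6,1), (2,7,-1), (8,12,-1), (13,17,-1), (18,21,-1), (22,25,-1), (26,28,-1), (29,31,-1), (31,33,-2), (32,34,-1)],
  [(1,7,1), (3,8,-1), (6,11,1), (9,13,-1), (14,18,-1), (19,22,-1), (23,26,-1), (26,29,-2), (28,31,-1), (30,32,-1)],
  [(2,8,1), (4,9,-1), (7,12,1), (10,14,-1), (11,16,1), (15,19,-1), (19,23,-2), (22,26,-1), (25,28,-1), (27,30,-1)],
  [(3,9,1), (5,10,-1), (8,13,1), (10,15,-2), (12,17,1), (14,19,-1), (16,20,1), (18,22,-1), (21,25,-1), (24,27,-1)],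
  [(4,10,1), (9,14,1), (13,18,1), (17,21,1), (20,24,1)],
  [(2,11,-1), (8,16,-1), (13,20,-1), (18,24,-1), (22,27,-1), (26,30,-1), (29,32,-1), (31,34,-1), (32,35,-2)],
  [(0,11,1), (3,12,-1), (9,17,-1), (14,21,-1), (19,25,-1), (23,28,-1), (26,31,-1), (28,33,-2), (30,34,-1)],
  [(1,12,1), (4,13,-1), (6,16,1), (10,18,-1), (15,22,-1), (19,26,-1), (22,29,-2), (25,31,-1), (27,32,-1)],
  [(2,13,1), (5,14,-1), (7,17,1), (10,19,-1), (11,20,1), (14,23,-2), (18,26,-1), (21,28,-1), (24,30,-1)],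
  [(3,14,1), (4,15,2), (8,18,1), (9,19,1), (12,21,1), (13,22,1), (16,24,1), (17,25,1), (20,27,1)],
  [(3,16,-1), (9,20,-1), (14,24,-1), (19,27,-1), (23,30,-1), (26,32,-1), (28,34,-1), (30,35,-2)],
  [(0,16,1), (4,17,-1), (10,21,-1), (15,25,-1), (19,28,-1), (22,31,-1), (25,33,-2), (27,34,-1)],
  [(1,17,1), (5,18,-1), (6,20,1), (10,22,-1), (14,26,-1), (18,29,-2), (21,31,-1), (24,32,-1)],
  [(2,18,1), (4,19,1), (7,21,1), (9,23,2), (11,24,1), (13,26,1), (17,28,1), (20,30,1)],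
  [(3,19,1), (8,22,1), (12,25,1), (16,27,1)],
  [(4,20,-1), (10,24,-1), (15,27,-1), (19,30,-1), (22,32,-1), (25,34,-1), (27,35,-2)],
  [(0,20,1), (5,21,-1), (10,25,-1), (14,28,-1), (18,31,-1), (21,33,-2), (24,34,-1)],
  [(1,21,1), (4,22,1), (6,24,1), (9,26,1), (13,29,2), (17,31,1), (20,32,1)],
  [(2,22,1), (3,23,2), (7,25,1), (8,26,1), (11,27,1), (12,28,1), (16,30,1)],
  [(5,24,-1), (10,27,-1), (14,30,-1), (18,32,-1), (21,34,-1), (24,35,-2)],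
  [(0,24,1), (4,25,1), (9,28,1), (13,31,1), (17,33,2), (20,34,1)],
  [(1,25,1), (3,26,1), (6,27,1), (8,29,2), (12,31,1), (16,32,1)],
  [(2,26,1), (7,28,1), (11,30,1)],
  [(4,27,1), (9,30,1), (13,32,1), (17,34,1), (20,35,2)],
  [(0,27,1), (3,28,1), (8,31,1), (12,33,2), (16,34,1)],
  [(1,28,1), (2,29,2), (6,30,1), (7,31,1), (11,32,1)],
  [(3,30,1), (8,32,1), (12,34,1), (16,35,2)],
  [(0,30,1), (2,31,1), (7,33,2), (11,34,1)],
  [(1,31,1), (6,32,1)],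
  [(2,32,1), (7,34,1), (11,35,2)],
  [(0,32,1), (1,33,2), (6,34,1)],
  [(1,34,1), (6,35,2)],
  [(0,34,1)],
  [(0,35,2)],
  []]
def spStream : ℕ := 0x228021402293d384c0228383c02102402283902242802140210022529393d4d5d4858680228021402293d38484c585c020c20343848022024340228022002140229353d38494c5902240239343c484c02102434022838493c0210022520343802142820020c02211024350224020c0221352839022002351428022024020c0221140210020c0221252935393d494d595d69755464707c0228021402293d384c0228383c02102402283902242802140210022529393d4d5d485458646870740228021402293d081c44484c5458640238022402395d1c2030444854022430344402300228021402293d453848554c023c021002254d1c3034440228383c022802391c30021c02311024021c02312839022428021402291c0214021002252931393d454d48555d5865687102343c480220340228022002140229353d49593044545c6468020c203038444854022430344402300228021402293d453848554c58655c020c02212434020c02213849023438020c0221140224020c02213539495d1c30445458023c4c1c0208021d0c203110243444023c4c1c0208021d0c20312838485502202402351c3044480214381c283002200208021d31100208021d283d24344502303402200208021d31280220140208021d10290208021d203102140229200208021d140208021d2931353d453849554c590210022504343844021c2802243904021c023124021c023139344548553c4c02202402353c0220240210020c022125354d1c30444802142420383002200208021d3110243445023402200208021d31452838493c0214242830022010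1c021002252031021c0210022531283d3445380228020c0221391c3034021420281c0208021d14282031021c20020c0208021d2131102435021c20023124021c20020c0208021d21313528390208021d1002200208021d3135142802140229041c02203124021402291c20020c0208021d21140208021d10020c0208021d2125293135393d45494d55595d656971757d85606c7880880228021402293d384c0228383c02102402283902242802140210022529393d4d5d4858680228021402293d38484c585c020c20343848022024340228022002140229353d38494c5902240239343c484c02102434022838493c0210022520343802142820020c02211024350224020c0221352839022002351428022024020c0221140210020c0221252935393d494d595d69755460646c70787c80840228021402293d384c0228383c02102402283902242802140210022529393d4d5d04185054586064686c70780228021402293d485802343c480220340228022002140229353d495975181c2c40505460646c0238022402395d202c304048505460024c023c021002254d5d2c3440445002400228021402293d51384c023c022802394d2c400228383c0224023928022402140229393d2c02102402283902242802140210022529393d414d515d48546158646d680238485c020c02212434020c02213849023438020c0221140224020c02213539495d69182c304050546002243440445002400228021402293d51384854614c585c023c4c240210022508203502202402354c59021002253c4c02202402353c0220240210020c022125354d595d182c404450023c4c2c0218022d0c20412838480228380249182c400220100218022d283d0218022d2041243402202802200802140229182d0214022920353d0218022d280218022d200214022918021402292d353d413849514c59022c28022439022802392c4118022402392c0224023941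34513c484c02283802493c0228380228020c022139494d182c4002200218022d4110243402200218022d412838493c0228023d182c02100225204134380214022402353928021402290802243502140229240214022935393d182c0218022d1428200218020c02212d10243502240218020c02212d3528390218022d200218022d3514280220240214021002252918020c0221140210020c022125292d35393d41494d51595d546169646d7570797c810228021402293d444c545c640238022402395d1c3044540224304402300228021402293d4538554c023c021002254d1c30440228383c022802391c30021c02311024021c02312839022428021402291c0214021002252931393d454d555d65712c4050606c74787c0228021402293d081c2c484c50545860646c0238022402395d202c304048505460024c023c021002254d5d2c3440445002400228021402293d51384c023c022802394d2c400228383c0224023928022402140229393d2c02102402283902242802140210022529393d414d515d48546158646d687079740208021d20304448540208021d3034440208021d300208021d280208021d140208021d293d4548555865023402493c4454580208021d1034440208021d2848553c022002353044480208021d14283002200208021d31100208021d283d344502303402200208021d31280220140208021d10290208021d203102140229200208021d140208021d2931353d454955596575182c4050606c70025c681802040219081c2d0c2030404448505460025c681802040219081c2d2434404450025c681802040219081c2d40025c681802040219081c2d28021402295c681802040219140204021929081c2d3d51384854614c58646d021c200231243444021c20023138485502200231343844021c20023114022002312439021c20023124021c200231394548555d182c40506064023c58184c2c021c020402192d0c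203041102402100225003c581802540c020402191025203041384c5d344450023c58184c2c021c020402192d0c2030412838022c28022439003c581802440c020402192839202c3041022402393c58182c0204021924020402193920304144514c5d4854610224303402454c0224303402453c02243034021c0210022531454d5d182c40505402144818382c3040023010021c020402192d283d021c020402192d30412434445102404402302802301c0230140204021910292d3d021c020402192d30410228021402293d30021c020402192d28021402291c020402191402040219292d3d4145513848554c023c024d1448182c3038400230021c020402192d4110243c02301002040219283d2c020402191002040219253041384d344451023c0228021c0231394d2c40440230021c020402192d4128383c0230280230140204021910293d1c2c021c020402192d142802040219243930410224023928022402140229393d2c30020402190c021c020402192d311024020402190c021c020402192d312839021c020402192d2428020402190c14021c10020402190c2529020402191402040219291c2d021402100225291c020402191402040219100204021925292d31393d41454d5148555d6158656d6871020c022134020c022149003040445054586002240218022d35103c022024023548590030404450024c000218022d304128383c480218283802344900400220100218022d283d0218022d20413402202802200802140229182d0214022920353d0218022d280218022d200214022918021402292d353d414944514c595461646d5c68021c200231243444021c2002313848555c1f02380c2102241c31021c020c0221312435444802240c34200214381c31021c20020c0208021d2131243445021c020c02213134021c20020c0208021d2131453849550224020c0221353844480220023124021c200231451438021c020c0221311402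0c0221243934021c20020c0208021d213114021c20023124021c20020c0208021d213135394549555d69182c4050606402201c3c582c021c020402192d0c203041102434445002201c3c582c021c020402192d0c2030412838485461022430340245182c4050540214341c482c3040023010021c020402192d283d021c020402192d30412434445102404402302802301c0230140204021910292d3d021c020402192d30410228021402293d30021c020402192d28021402291c020402191402040219292d3d414551384855614c58655c02380c1c30542002103c4c2c24350220240210020c02212535001c2c30410220240210020c0221253500383c4c5d4448501b02181c4420382c3041023c4c2c024c00020c02211c2d30412834384902203c4c2c021c0c18020c02211c2d3041243402203c4c2c021c0c18020c02211c2d3041384944510218242838022c28020c022124390228020c0221392c4134490002202c0241343802140224023539202c0218020c02212d1402240218020c02212d3539414944513c4c5d546158020c20243034023c4c24023c4c1c024c100208021d0c25203135450224303402102402200208021d3135454c5902243034021c0210022531453c4c0224303402102402200208021d3135453c020c0221243034021c02311024021c200208021d10020c0208021d21253135454d595d182c405054020c1420382c34304840023c4c2c30021c3c4c18020402193c4c1c2d02181c0208020402191d2d0c2031411024344451023c4c2c023c4c1c02180208021d2d0c20314144023c4c2c30021c3c4c18020402193c4c1c2d02181c0208020402191d2d0c20314151283848550214382c3034401702301018241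c2d023010202435021c241802241c2d10021c022d202435283d021c241802241c2d2002181c022d2435304144514802283802200208021d3149182c4044130214302818381c2d02141c38180204021914381c2d10283d02141c38180204021914381c2d2830410208021d201002180208021d2d283d3002181c022d2002181c0208020402191d2d311002181c0208020402191d2d283d4124344502302802301c02140229002d3d2002181c022d3041340208021d20280208021d2014021810290208021d140208021d29182d0208021d140208021d2920353d3002181c022d2002181c0208020402191d2d31280214022904181c0220140208020402191d10292d02181c0208020402191d2d203102140229181c021402292d2002140229181c0208020402191d140208020402191d292d31353d4145384951554c5902142c3430484002102c3002480c0204021910254134445138022c28021c023124390228021c0231392c411844021c282c300f021c28041902040219281c2d021c022d340c31140204021924283941022402392c30020402190c021c020402192d3124020402190c021c020402192d31394134455148553c4c023c020c02214d142c303438400b022808181c2d021c203024350238202402181c022d103530413c0224023528022402353d00182c02202402100225180210020c0221252d353041384d44514802283802200208021d31493c021c0231283802200208021d3128021c20020c0208021d213139494d182c40440702040219100814281c2d020402191424203830410208021d203002181c022d2002181c0208020402191d2d31411024344502203002181c022d41340208021d203002181c022d2002181c0208020402191d2d3141452838493c0228021402293d0004182c0204021914283041240228023d182c3003020c280419020c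2010250220101c2d021002251c020402191002040219252d2031021c10020402190c25020402191c2d021002251c020402191002040219252d31283d413445380228021402293d001c202c02181c022d14280218020c02212d24393041340208021d1402240208021d3539280224100208021d14290208021d243502140229240208021d140208021d2935393d182c30020c10042418021420281c2d02181c0208020402191d2d142820310218022d0c2002181c020402190c0208020402191d212d31102435020c20021c020402192d31240218022d0c2002181c020402190c0208020402191d212d3135283902181c0208020402191d2d1002181c022d2002181c0208020402191d2d313514280220140204021910290c021c020402192d203124021402100225290018021402291c2d2002140210022529181c020402190c0208020402191d21140208020402191d10020402190c0208020402191d2125292d3135393d4145494d5155595d6165696d7175797d8185898d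
def spCores : List (ℕ × ℕ × List ℕ × List (ℕ × ℕ × ℕ)) := [
  (303067, 301632, [0, 0, 0, 0, 0, 0, 1, 1], [(0,0,37), (0,0,36), (0,0,40), (0,0,39), (0,1,43), (0,0,44), (3,0,0)]),
  (1015799, 985088, [0, 0, 0, 0, 0, 1, 1], [(0,0,43), (0,3,49), (0,1,42), (0,1,48), (0,7,41), (0,2,36), (0,2,46), (0,2,50), (0,1,38), (0,1,44), (0,1,40), (0,1,45), (3,0,0)]),
  (2719701, 2697216, [0, 0, 0, 0, 0, 1], [(0,0,43), (0,0,42), (0,0,44), (0,1,36), (0,2,38), (0,2,45), (0,2,46), (0,0,50), (0,1,40), (0,0,48), (3,0,0)]),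
  (4357323, 4347968, [0, 0, 0, 0, 0, 0, 3, 1], [(0,0,37), (0,0,36), (0,0,43), (0,1,39), (1,0,49), (1,0,46), (3,0,0), (0,0,6), (3,0,0), (0,0,6), (3,0,0)]),
  (8912887, 8882176, [0, 0, 0, 0, 0, 0, 3, 2], [(0,0,43), (0,3,49), (0,1,42), (0,1,48), (0,7,41), (0,2,36), (0,2,46), (0,1,38), (0,2,44), (0,2,45), (1,0,40), (1,0,50), (1,0,37), (3,0,0), (0,0,6), (3,0,0), (1,0,37), (0,0,15), (3,0,0), (0,0,6), (3,0,0), (0,2,23), (0,0,6), (3,0,0)]),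
  (10616789, 10594304, [0, 0, 0, 0, 0, 0, 3, 1], [(0,0,43), (0,0,42), (0,0,44), (0,1,36), (0,2,38), (0,2,40), (0,2,46), (0,2,45), (1,0,50), (1,0,48), (3,0,0), (0,0,15), (3,0,0), (0,0,15), (3,0,0)]),
  (44040173, 43319296, [0, 0, 0, 0, 0, 1, 2, 1], [(0,3,49), (0,12,48), (0,9,51), (0,9,41), (0,7,44), (0,0,53), (0,0,50), (0,3,42), (0,2,55), (0,5,36), (0,0,47), (0,3,38), (0,3,43), (0,2,39), (3,0,0)]),
  (144733068, 144716032, [0, 0, 0, 0, 0, 0, 1, 1], [(0,0,39), (0,0,38), (0,2,43), (0,0,45), (3,0,0)])]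

def spAct (X b : ℕ) : List (ℕ × ℕ × ℤ) :=
  (spRows.getD b []).filter fun t => X.testBit t.1 && X.testBit t.2.1

def pAdd : List ℕ → List ℕ → List ℕ
  | [], l => l
  | a :: l, [] => a :: l
  | a :: l, b :: m => (a + b) :: pAdd l m

/-- coefficients of `v ^ (number of bits of Z in X) * (v+1) ^ (others)` -/
def leafP (X Z : ℕ) : ℕ → List ℕ
  | 0 => [1]
  | n + 1 =>
    bif X.testBit n then
      (bif Z.testBit n then 0 :: leafP X Z n else pAdd (leafP X Z n) (0 :: leafP X Z n))
    else leafP X Z n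

def spRun : ℕ → ℕ → ℕ → ℕ → Option (List ℕ × ℕ)
  | 0, _, _, _ => none
  | n + 1, s, X, Z =>
    match s % 4 with
    | 0 =>
      match spAct X (s / 4 % 64) with
      | [(a, k, _)] =>
        bif X.testBit (s / 4 % 64) && !Z.testBit (s / 4 % 64) && Z.testBit k && !Z.testBit a then
          spRun n (s / 256) (X ^^^ (2 ^ a ||| 2 ^ (s / 4 % 64))) Z
        else none
      | _ => none
    | 1 =>
      match spAct X (s / 4 % 64) with
      | [] =>
        bif X.testBit (s / 4 % 64) && !Z.testBit (s / 4 % 64) && Nat.blt (s / 4 % 64) 36 then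
          match spRun n (s / 256) (X ^^^ 2 ^ (s / 4 % 64)) Z with
          | none => none
          | some (P, s') =>
            match spRun n s' X (Z ||| 2 ^ (s / 4 % 64)) with
            | none => none
            | some (Q, s'') => some (pAdd P Q, s'')
        else none
      | _ => none
    | 2 =>
      bif (List.range 36).all fun b => !X.testBit b || (spAct X b).isEmpty then
        some (leafP X Z 36, s / 256)
      else none
    | _ =>
      match spCores.find? fun c => c.1 == X && c.2.1 == Z with
      | none => none
      | some c => some (c.2.2.1, s / 256)


theorem spRun_eq : (spRun 100 spStream (2 ^ 36 - 1) 0).map Prod.fst =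
    some [1, 36, 410, 1960, 4560, 5701, 4121, 1845, 547, 112, 15, 1] := by
  decide +kernel

set_option linter.unusedSectionVars false
set_option linter.unusedVariables false
def evP (v : ℕ) : List ℕ → ℕ
  | [] => 0
  | a :: l => a + v * evP v l

theorem evP_pAdd (v : ℕ) : ∀ l m, evP v (pAdd l m) = evP v l + evP v m
  | [], m => by simp [pAdd, evP]
  | a :: l, [] => by simp [pAdd, evP]
  | a :: l, b :: m => by simp [pAdd, evP, evP_pAdd v l m]; ring

def cfac (q v V U i : ℕ) : ℕ := if V.testBit i then (if U.testBit i then v else q) else 1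

theorem evP_leafP (v V U n : ℕ) : evP v (leafP V U n) = ∏ i : Fin n, cfac (v + 1) v V U i := by
  induction n with
  | zero => simp [leafP, evP]
  | succ n ih =>
    rw [Fin.prod_univ_castSucc]
    simp only [Fin.val_castSucc, Fin.val_last, ← ih, leafP]
    cases h : V.testBit n <;> cases h' : U.testBit n <;> simp [cfac, h, h', evP, evP_pAdd] <;> ring

section
variable {F : Type*} [Field F] [Fintype F]

theorem card_box (V U n : ℕ) (hU : ∀ i, U.testBit i = true → V.testBit i = true) :
    Nat.card {f : Fin n → F // (∀ i : Fin n, V.testBit i = false → f i = 0) ∧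
      ∀ i : Fin n, U.testBit i = true → f i ≠ 0} =
    evP (Nat.card F - 1) (leafP V U n) := by
  classical
  have hq : Nat.card F - 1 + 1 = Nat.card F := Nat.sub_add_cancel Nat.card_pos
  rw [evP_leafP, hq]
  have e : {f : Fin n → F // (∀ i : Fin n, V.testBit i = false → f i = 0) ∧
      ∀ i : Fin n, U.testBit i = true → f i ≠ 0} ≃
      ((i : Fin n) → {a : F // (V.testBit i = false → a = 0) ∧ (U.testBit i = true → a ≠ 0)}) :=
    { toFun := fun f i => ⟨f.1 i, f.2.1 i, f.2.2 i⟩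
      invFun := fun g => ⟨fun i => (g i).1, fun i => (g i).2.1, fun i => (g i).2.2⟩
      left_inv := fun f => rfl
      right_inv := fun g => rfl }
  rw [Nat.card_congr e, Nat.card_pi]
  refine Finset.prod_congr rfl fun i _ => ?_
  have h1 := hU i
  cases h : V.testBit i <;> cases h' : U.testBit i <;> simp [cfac, h, h'] at h1 ⊢

abbrev V36 (F : Type*) := Fin 36 → F
def eN (k : ℕ) : V36 F := fun i => if i.val = k then 1 else 0
def xN (x : V36 F) (a : ℕ) : F := if h : a < 36 then x ⟨a, h⟩ else 0
def mS (X : ℕ) : Finset (Fin 36) := Finset.univ.filter fun i => X.testBit i = true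

theorem mem_mS (X : ℕ) (i : Fin 36) : i ∈ mS X ↔ X.testBit i = true := by simp [mS]

theorem xN_prj (X : ℕ) (x : V36 F) (a : ℕ) : xN (prj (mS X) x) a = if X.testBit a then xN x a else 0 := by
  unfold xN
  by_cases h : a < 36 <;> simp [h, prj_apply, mem_mS]

theorem prj_eN (X : ℕ) (k : ℕ) : prj (mS X) (eN k : V36 F) = if X.testBit k then eN k else 0 := by
  ext i
  by_cases h : i.val = k
  · subst h
    cases h : X.testBit i <;> simp [prj_apply, mem_mS, h, eN]
  · cases h' : X.testBit k <;> simp [prj_apply, eN, h]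

theorem eN_fin (k : Fin 36) : (eN k.val : V36 F) = ee k := by
  ext i; simp [eN, ee, Pi.single_apply, Fin.ext_iff]

theorem xN_fin (x : V36 F) (k : Fin 36) : xN x k.val = x k := by
  simp [xN]

/-- The bracket has the rows in the table -/
def RowH (b : Bil (Fin 36) F) : Prop :=
  ∀ (j : Fin 36) (x : V36 F), b x (ee j) =
    ((spRows.getD j.val []).map fun t => (((t.2.2 : ℤ) : F) * xN x t.1) • (eN t.2.1 : V36 F)).sum

theorem res_act {b : Bil (Fin 36) F} (hb : RowH b) (X : ℕ) (j : Fin 36) (hj : X.testBit j = true)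
    (x : V36 F) : resB b (mS X) x (ee j) =
    ((spAct X j).map fun t => (((t.2.2 : ℤ) : F) * xN x t.1) • (eN t.2.1 : V36 F)).sum := by
  rw [resB_apply, ← eN_fin, prj_eN, hj, if_pos rfl, eN_fin, hb j, spAct]
  induction spRows.getD j.val [] with
  | nil => simp
  | cons t l ih =>
    rw [List.map_cons, List.sum_cons, map_add, ih, map_smul, prj_eN, xN_prj]
    cases h1 : X.testBit t.1 <;> cases h2 : X.testBit t.2.1 <;> simp [h1, h2]

theorem res_supp {b : Bil (Fin 36) F} (hb : RowH b) (X : ℕ) (j i : Fin 36)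
    (x : V36 F) (h : resB b (mS X) x (ee j) i ≠ 0) :
    ∃ t ∈ spRows.getD j.val [], t.2.1 = i.val ∧ xN x t.1 ≠ 0 := by
  cases hj : X.testBit j
  · exfalso; apply h
    rw [resB_apply, ← eN_fin, prj_eN, hj]; simp
  · rw [res_act hb X j hj] at h
    by_contra! hc
    apply h
    have : ∀ t ∈ spAct X j, ((((t.2.2 : ℤ) : F) * xN x t.1) • (eN t.2.1 : V36 F)) i = 0 := by
      intro t ht
      by_cases h1 : t.2.1 = i.val
      · rw [hc t (List.mem_of_mem_filter ht) h1]; simp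
      · have : ¬ (i.val = t.2.1) := fun h => h1 h.symm
        simp [eN, this]
    revert this
    induction spAct X j with
    | nil => simp
    | cons t l ih =>
      intro h
      rw [List.map_cons, List.sum_cons, Pi.add_apply, h t (by simp), ih (fun t ht => h t (by simp [ht])), add_zero]

def tK (a : ℕ) : List ℕ := (spRows.getD a []).map fun t => t.2.1
def tS (a : ℕ) : List ℕ := ((spRows.getD a []).filter fun t => (tK a).contains t.1).map fun t => t.2.1

theorem tab1 : ∀ a < 36, ∀ t ∈ spRows.getD a [], t.1 < 36 ∧ t.2.1 < 36 ∧ t.1 ≠ a ∧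
    (t.2.2 = 1 ∨ t.2.2 = -1 ∨ t.2.2 = 2 ∨ t.2.2 = -2) ∧ (tS a).contains t.1 = false ∧
    (∀ u ∈ spRows.getD t.2.1 [], (tS a).contains u.1 = false) := by decide +kernel

theorem nil_D2 {b : Bil (Fin 36) F} (hb : RowH b) (X : ℕ) (hl : IsLieB (resB b (mS X))) (j i : Fin 36)
    (x : V36 F) (h : resB b (mS X) (ee j) (resB b (mS X) (ee j) x) i ≠ 0) : (tS j).contains i.val = true := by
  rw [hl.anti, Pi.neg_apply, neg_ne_zero] at h
  obtain ⟨t, ht, h1, h2⟩ := res_supp hb _ _ _ _ h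
  have h3 := (tab1 j j.2 t ht).1
  obtain ⟨a, ha⟩ : ∃ a : Fin 36, a.val = t.1 := ⟨⟨_, h3⟩, rfl⟩
  rw [← ha, xN_fin, hl.anti, Pi.neg_apply, neg_ne_zero] at h2
  obtain ⟨u, hu, h4, h5⟩ := res_supp hb _ _ _ _ h2
  rw [List.contains_iff_mem, tS, ← h1]
  refine List.mem_map_of_mem (List.mem_filter.2 ⟨ht, ?_⟩)
  rw [List.contains_iff_mem, tK, ← ha, ← h4]
  exact List.mem_map_of_mem hu

theorem nil_D4 {b : Bil (Fin 36) F} (hb : RowH b) (X : ℕ) (hl : IsLieB (resB b (mS X))) (j : Fin 36)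
    (x : V36 F) : resB b (mS X) (ee j) (resB b (mS X) (ee j) (resB b (mS X) (ee j) x)) = 0 := by
  ext i
  by_contra h
  rw [hl.anti, Pi.neg_apply, Pi.zero_apply, neg_eq_zero] at h
  obtain ⟨t, ht, h1, h2⟩ := res_supp hb _ _ _ _ h
  have h3 := tab1 j j.2 t ht
  obtain ⟨a, ha⟩ : ∃ a : Fin 36, a.val = t.1 := ⟨⟨_, h3.1⟩, rfl⟩
  rw [← ha, xN_fin] at h2
  have h4 := nil_D2 hb X hl j a x h2
  rw [ha, h3.2.2.2.2.1] at h4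
  exact absurd h4 (by simp)

theorem nil_n {b : Bil (Fin 36) F} (hb : RowH b) (X : ℕ) (hl : IsLieB (resB b (mS X))) (j : Fin 36)
    (x y : V36 F) : resB b (mS X) (resB b (mS X) (ee j) (resB b (mS X) (ee j) x))
      (resB b (mS X) (ee j) y) = 0 := by
  rw [pi_eq_sum_univ' (resB b (mS X) (ee j) y), map_sum]
  refine Finset.sum_eq_zero fun k _ => ?_
  rw [map_smul]
  by_cases hk : resB b (mS X) (ee j) y k = 0
  · rw [hk, zero_smul]
  convert smul_zero _
  ext i
  by_contra h
  obtain ⟨t, ht, h1, h2⟩ := res_supp hb _ _ _ _ h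
  have h3 := tab1 k k.2 t ht
  obtain ⟨a, ha⟩ : ∃ a : Fin 36, a.val = t.1 := ⟨⟨_, h3.1⟩, rfl⟩
  rw [← ha, xN_fin] at h2
  have h4 := nil_D2 hb X hl j a x h2
  rw [hl.anti, Pi.neg_apply, neg_eq_zero] at hk
  obtain ⟨u, hu, h5, h6⟩ := res_supp hb _ _ _ _ hk
  have h7 := (tab1 j j.2 u hu).2.2.2.2.2 t (h5 ▸ ht)
  rw [ha, h7] at h4
  exact absurd h4 (by simp)
end

set_option linter.unusedSectionVars false
set_option linter.unusedVariables false
section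
variable {F : Type*} [Field F] [Fintype F]

structure SpInv (b : Bil (Fin 36) F) (X Z : ℕ) : Prop where
  hl : IsLieB (resB b (mS X))
  hZ : ∀ i : Fin 36, Z.testBit i = true → X.testBit i = true
  hc : ∀ i : Fin 36, Z.testBit i = true → ∀ x, resB b (mS X) x (ee i) = 0

noncomputable def spT (b : Bil (Fin 36) F) (X Z : ℕ) : ℕ := TT (resB b (mS X)) (mS X) (mS Z)

theorem prj_ee {X : Finset (Fin 36)} {i : Fin 36} (h : i ∈ X) : prj X (ee i : V36 F) = ee i := by
  ext j
  by_cases hj : j = i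
  · subst hj; simp [prj_apply, h]
  · simp [prj_apply, hj]

theorem inv_sub {b : Bil (Fin 36) F} {X Z Y : ℕ} (h : SpInv b X Z) (hs : mS Y ⊆ mS X)
    (hl : IsLieB (resB b (mS Y))) (hZ : ∀ i : Fin 36, Z.testBit i = true → Y.testBit i = true) :
    SpInv b Y Z := by
  refine ⟨hl, hZ, fun i hi x => ?_⟩
  rw [← resB_resB b hs, resB_apply, prj_ee ((mem_mS _ _).2 (hZ i hi)), h.hc i hi, map_zero]

theorem op_central {b : Bil (Fin 36) F} (hb : RowH b) {X Z : ℕ} (h : SpInv b X Z) (g : Fin 36)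
    (hg : X.testBit g = true) (hgz : Z.testBit g = false) (ha : spAct X g = []) :
    SpInv b (X ^^^ 2 ^ g.val) Z ∧ SpInv b X (Z ||| 2 ^ g.val) ∧
    (mS X).card = (mS (X ^^^ 2 ^ g.val)).card + 1 ∧
    spT b X Z = Nat.card F * spT b (X ^^^ 2 ^ g.val) Z + spT b X (Z ||| 2 ^ g.val) := by
  have hc : ∀ x, resB b (mS X) x (ee g) = 0 := fun x => by rw [res_act hb X g hg, ha]; simp
  have hgX : g ∈ mS X := (mem_mS _ _).2 hg
  have e1 : mS (X ^^^ 2 ^ g.val) = (mS X).erase g := by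
    ext i
    rw [Finset.mem_erase, mem_mS, mem_mS, Nat.testBit_xor, Nat.testBit_two_pow]
    by_cases hi : i = g
    · subst hi; simp [hg]
    · have : ¬ (g.val = i.val) := fun hh => hi (Fin.ext hh.symm)
      simp [hi, this]
  have e2 : mS (Z ||| 2 ^ g.val) = insert g (mS Z) := by
    ext i
    rw [Finset.mem_insert, mem_mS, mem_mS, Nat.testBit_or, Nat.testBit_two_pow]
    by_cases hi : i = g
    · subst hi; simp
    · have : ¬ (g.val = i.val) := fun hh => hi (Fin.ext hh.symm)
      simp [hi, this]
  have e3 := resB_resB b (Finset.erase_subset g (mS X))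
  have hgz' : g ∉ mS Z := by rw [mem_mS, hgz]; simp
  refine ⟨inv_sub h ?_ ?_ ?_, ⟨h.hl, ?_, ?_⟩, ?_, ?_⟩
  · rw [e1]; exact Finset.erase_subset _ _
  · rw [e1, ← e3]
    exact (res_central (stB_resB _ _) h.hl hgX hc).2
  · intro i hi
    rw [← mem_mS, e1, Finset.mem_erase, mem_mS]
    refine ⟨?_, h.hZ i hi⟩
    rintro rfl; rw [hgz] at hi; exact absurd hi (by simp)
  · intro i hi
    rw [← mem_mS, e2, Finset.mem_insert, mem_mS] at hi
    rcases hi with rfl | hi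
    · exact hg
    · exact h.hZ i hi
  · intro i hi
    rw [← mem_mS, e2, Finset.mem_insert, mem_mS] at hi
    rcases hi with rfl | hi
    · exact hc
    · exact h.hc i hi
  · rw [e1, Finset.card_erase_add_one hgX]
  · rw [spT, TT_central (stB_resB _ _) h.hl hgX hgz' hc, spT, spT, e1, e2, e3]

theorem op_pair {b : Bil (Fin 36) F} (hb : RowH b) (h2 : (2 : F) ≠ 0) {X Z : ℕ} (h : SpInv b X Z) (j : ℕ)
    (a k : ℕ) (N : ℤ) (hact : spAct X j = [(a, k, N)])
    (hj : X.testBit j = true) (hjz : Z.testBit j = false) (hk : Z.testBit k = true)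
    (haz : Z.testBit a = false) :
    SpInv b (X ^^^ (2 ^ a ||| 2 ^ j)) Z ∧
    (mS X).card = (mS (X ^^^ (2 ^ a ||| 2 ^ j))).card + 2 ∧
    spT b X Z = Nat.card F ^ 2 * spT b (X ^^^ (2 ^ a ||| 2 ^ j)) Z := by
  have hm : (a, k, N) ∈ spAct X j := by rw [hact]; simp
  obtain ⟨hm1, hm2⟩ := List.mem_filter.1 hm
  simp only [Bool.and_eq_true] at hm2
  have hj36 : j < 36 := by
    by_contra hc
    rw [List.getD_eq_default] at hm1
    · simp at hm1
    · have : spRows.length = 36 := by decide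
      omega
  obtain ⟨ha, hk36, hne, hN, -, -⟩ := tab1 j hj36 _ hm1
  dsimp only at ha hk36 hne hN
  obtain ⟨β, rfl⟩ : ∃ β : Fin 36, β.val = j := ⟨⟨j, hj36⟩, rfl⟩
  obtain ⟨α, rfl⟩ : ∃ α : Fin 36, α.val = a := ⟨⟨a, ha⟩, rfl⟩
  obtain ⟨γ, rfl⟩ : ∃ γ : Fin 36, γ.val = k := ⟨⟨k, hk36⟩, rfl⟩
  have hne' : α ≠ β := fun hh => hne (by rw [hh])
  have H : PairH (resB b (mS X)) (mS X) (mS Z) α β γ (N : F) :=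
    { hs := stB_resB _ _
      hl := h.hl
      hα := (mem_mS _ _).2 hm2.1
      hβ := (mem_mS _ _).2 hj
      hαz := by rw [mem_mS, haz]; simp
      hβz := by rw [mem_mS, hjz]; simp
      hγ := (mem_mS _ _).2 hk
      hZ := fun i hi => (mem_mS _ _).2 (h.hZ i ((mem_mS _ _).1 hi))
      hzc := fun z hz => h.hc z ((mem_mS _ _).1 hz)
      hc := by rcases hN with h | h | h | h <;> simp [h, h2]
      ne := hne'
      hbr := fun x => by rw [res_act hb X β hj, hact]; simp [xN_fin, eN_fin] }
  have R := H.pair_rule h2 (fun x => nil_D4 hb X h.hl α _) (nil_n hb X h.hl α)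
  have hsub : ((mS X).erase α).erase β ⊆ mS X :=
    (Finset.erase_subset _ _).trans (Finset.erase_subset _ _)
  rw [resB_resB b hsub] at R
  have e1 : mS (X ^^^ (2 ^ α.val ||| 2 ^ β.val)) = ((mS X).erase α).erase β := by
    ext i
    rw [Finset.mem_erase, Finset.mem_erase, mem_mS, mem_mS, Nat.testBit_xor, Nat.testBit_or,
      Nat.testBit_two_pow, Nat.testBit_two_pow]
    by_cases hi : i = α
    · subst hi; simp [hm2.1]
    · by_cases hi' : i = β
      · subst hi'; simp [hj]
      · have t1 : ¬ (α.val = i.val) := fun hh => hi (Fin.ext hh.symm)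
        have t2 : ¬ (β.val = i.val) := fun hh => hi' (Fin.ext hh.symm)
        simp [hi, hi', t1, t2]
  refine ⟨inv_sub h ?_ ?_ ?_, ?_, ?_⟩
  · rw [e1]; exact hsub
  · rw [e1]; exact R.2
  · intro i hi
    rw [← mem_mS, e1, Finset.mem_erase, Finset.mem_erase, mem_mS]
    refine ⟨?_, ?_, h.hZ i hi⟩
    · rintro rfl; rw [hjz] at hi; exact absurd hi (by simp)
    · rintro rfl; rw [haz] at hi; exact absurd hi (by simp)
  · rw [e1]
    have t1 := Finset.card_erase_add_one H.hα
    have t2 := Finset.card_erase_add_one (Finset.mem_erase.2 ⟨hne'.symm, H.hβ⟩)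
    omega
  · rw [spT, spT, R.1, e1]

theorem op_leaf {b : Bil (Fin 36) F} (hb : RowH b) {X Z : ℕ} (h : SpInv b X Z)
    (hall : ((List.range 36).all fun b => !X.testBit b || (spAct X b).isEmpty) = true) :
    spT b X Z = Nat.card F ^ (mS X).card * evP (Nat.card F - 1) (leafP X Z 36) := by
  classical
  have h0 : ∀ x y, resB b (mS X) x y = 0 := by
    intro x y
    rw [pi_eq_sum_univ' y, map_sum]
    refine Finset.sum_eq_zero fun j _ => ?_
    rw [map_smul]
    have := List.all_eq_true.1 hall j.val (List.mem_range.2 j.2)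
    convert smul_zero _
    cases hj : X.testBit j
    · rw [resB_apply]
      have : prj (mS X) (Pi.single j 1 : V36 F) = 0 := by
        have := prj_eN (F := F) X j.val
        rw [hj, eN_fin] at this
        simpa using this
      rw [this]; simp
    · rw [hj] at this
      simp at this
      have r := res_act hb X j hj x
      rw [this] at r
      simpa using r
  let Z' := Z &&& (2 ^ 36 - 1)
  have hZ' : ∀ i, Z'.testBit i = true → X.testBit i = true := by
    intro i hi
    rw [Nat.testBit_and, Nat.testBit_two_pow_sub_one] at hi
    simp at hi
    exact h.hZ ⟨i, hi.2⟩ hi.1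
  have hZZ : ∀ i : Fin 36, Z'.testBit i = Z.testBit i := by
    intro i
    rw [Nat.testBit_and, Nat.testBit_two_pow_sub_one]; simp
  have c1 := card_box (F := F) X Z' 36 hZ'
  have c2 := card_box (F := F) X 0 36 (by simp)
  have e1 : leafP X Z' 36 = leafP X Z 36 := by
    have : ∀ n ≤ 36, leafP X Z' n = leafP X Z n := by
      intro n
      induction n with
      | zero => intro; rfl
      | succ n ih =>
        intro hn
        rw [leafP, leafP, ih (by omega), hZZ ⟨n, by omega⟩]
    exact this 36 le_rfl
  have e2 : evP (Nat.card F - 1) (leafP X 0 36) = Nat.card F ^ (mS X).card := by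
    have hq : Nat.card F - 1 + 1 = Nat.card F := Nat.sub_add_cancel Nat.card_pos
    rw [evP_leafP, hq]
    simp only [cfac, Nat.zero_testBit]
    rw [mS, Finset.prod_ite]
    simp
  rw [← e1, ← c1, ← e2, ← c2, ← Nat.card_prod]
  refine Nat.card_congr
    { toFun := fun p => (⟨p.1.2, ?_, ?_⟩, ⟨p.1.1, ?_, ?_⟩)
      invFun := fun p => ⟨(p.2.1, p.1.1), ?_⟩
      left_inv := fun p => rfl
      right_inv := fun p => rfl }
  · intro i hi; exact p.2.hx i (by rw [mem_mS, hi]; simp)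
  · intro i hi; simp at hi
  · intro i hi; exact p.2.hf i (by rw [mem_mS, hi]; simp)
  · intro i hi; exact p.2.hz i (by rw [mem_mS, ← hZZ, hi])
  · refine ⟨fun i hi => p.2.2.1 i ?_, fun i hi => p.1.2.1 i ?_, fun i hi => p.2.2.2 i ?_, fun y => ?_⟩
    · rw [mem_mS] at hi; simpa using hi
    · rw [mem_mS] at hi; simpa using hi
    · rw [hZZ]; exact (mem_mS _ _).1 hi
    · rw [h0]; simp

theorem spRun_sound {b : Bil (Fin 36) F} (hb : RowH b) (h2 : (2 : F) ≠ 0)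
    (hcore : ∀ c ∈ spCores, spT b c.1 c.2.1 = Nat.card F ^ (mS c.1).card * evP (Nat.card F - 1) c.2.2.1) :
    ∀ (n s X Z : ℕ) (P : List ℕ) (s' : ℕ), spRun n s X Z = some (P, s') → SpInv b X Z →
    spT b X Z = Nat.card F ^ (mS X).card * evP (Nat.card F - 1) P := by
  intro n
  induction n with
  | zero => intro s X Z P s' h; simp [spRun] at h
  | succ n ih =>
    intro s X Z P s' h hi
    rw [spRun] at h
    split at h
    · split at h
      · rename_i a k N hact
        rw [cond_eq_ite] at h
        split at h
        · rename_i hcnd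
          simp only [Bool.and_eq_true, Bool.not_eq_true'] at hcnd
          obtain ⟨⟨⟨c1, c2⟩, c3⟩, c4⟩ := hcnd
          obtain ⟨i1, i2, i3⟩ := op_pair hb h2 hi _ a k N hact c1 c2 c3 c4
          rw [i3, i2, ih _ _ _ _ _ h i1]
          ring
        · simp at h
      · simp at h
    · split at h
      · rename_i hact
        rw [cond_eq_ite] at h
        split at h
        · rename_i hcnd
          simp only [Bool.and_eq_true, Bool.not_eq_true', Nat.blt_eq] at hcnd
          obtain ⟨⟨c1, c2⟩, c3⟩ := hcnd
          obtain ⟨g, hg⟩ : ∃ g : Fin 36, g.val = s / 4 % 64 := ⟨⟨_, c3⟩, rfl⟩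
          rw [← hg] at h c1 c2 hact
          obtain ⟨i1, i2, i3, i4⟩ := op_central hb hi g c1 c2 hact
          split at h
          · simp at h
          · rename_i P1 s1 h1
            split at h
            · simp at h
            · rename_i P2 s2 h3
              simp only [Option.some.injEq, Prod.mk.injEq] at h
              rw [i4, ih _ _ _ _ _ h1 i1, ih _ _ _ _ _ h3 i2, ← h.1, evP_pAdd, i3]
              ring
        · simp at h
      · simp at h
    · rw [cond_eq_ite] at h
      split at h
      · rename_i hcnd
        simp only [Option.some.injEq, Prod.mk.injEq] at h
        rw [← h.1]
        exact op_leaf hb hi hcnd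
      · simp at h
    · split at h
      · simp at h
      · rename_i c hc
        simp only [Option.some.injEq, Prod.mk.injEq] at h
        have h1 := List.mem_of_find?_eq_some hc
        have h3 := List.find?_some hc
        simp only [Bool.and_eq_true, beq_iff_eq] at h3
        have := hcore c h1
        rw [h3.1, h3.2] at this
        rw [this, h.1]
end

set_option linter.unusedSectionVars false
set_option linter.unusedVariables false

abbrev QP := List (ℤ × List ℕ)

def qIns (c : ℤ) (m : List ℕ) : QP → QP
  | [] => [(c, m)]
  | t :: l => if t.2 = m then (c + t.1, m) :: l else t :: qIns c m l

def qAdd : QP → QP → QP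
  | [], r => r
  | t :: l, r => qIns t.1 t.2 (qAdd l r)

def mIns (i : ℕ) : List ℕ → List ℕ
  | [] => [i]
  | j :: l => if i ≤ j then i :: j :: l else j :: mIns i l

def mMul : List ℕ → List ℕ → List ℕ
  | [], r => r
  | i :: l, r => mIns i (mMul l r)

def qMulT (c : ℤ) (m : List ℕ) : QP → QP
  | [] => []
  | t :: l => qIns (c * t.1) (mMul m t.2) (qMulT c m l)

def qMul : QP → QP → QP
  | [], _ => []
  | t :: l, r => qAdd (qMulT t.1 t.2 r) (qMul l r)

def qNorm (V : ℕ) (p : QP) : QP := p.filter fun t => t.1 != 0 && t.2.all fun i => V.testBit i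

def qHas (w : ℕ) (p : QP) : QP := p.filter fun t => t.2.contains w
def qNot (w : ℕ) (p : QP) : QP := p.filter fun t => !t.2.contains w

def isU (c : ℤ) : Bool := c.natAbs == 1 || c.natAbs == 2 || c.natAbs == 4 || c.natAbs == 8

def qSub (w : ℕ) (c : ℤ) (m : List ℕ) (rest : QP) (p : QP) : QP :=
  bif (qHas w p).isEmpty then p else
    qAdd (qMulT c m (qNot w p)) (qMul ((qHas w p).map fun t => (-t.1, t.2.erase w)) rest)

def qUnit (U : ℕ) : QP → Bool
  | [(d, k)] => isU d && k.all (fun i => U.testBit i)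
  | _ => false

def qStep (V U e w : ℕ) (eqs : List QP) : Option (List QP) :=
  match qHas w (eqs.getD e []) with
  | [(c, m)] =>
    bif isU c && !(m.erase w).contains w && (m.erase w).all (fun i => U.testBit i) && V.testBit w &&
      (!U.testBit w || qUnit U (qNot w (eqs.getD e []))) &&
      (eqs.all fun p => (qHas w p).all fun t => !(t.2.erase w).contains w) then
      some ((eqs.eraseIdx e).map fun p => qSub w c (m.erase w) (qNot w (eqs.getD e [])) p)
    else none
  | _ => none

def qClean (V : ℕ) (eqs : List QP) : List QP := (eqs.map (qNorm V)).filter fun p => !p.isEmpty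

def qRun : ℕ → ℕ → ℕ → List QP → List (ℕ × ℕ × ℕ) → Option (List ℕ × List (ℕ × ℕ × ℕ))
  | 0, _, _, _, _ => none
  | _ + 1, _, _, _, [] => none
  | n + 1, V, U, eqs, op :: s =>
    match op.1 with
    | 0 =>
      match qStep V U op.2.1 op.2.2 eqs with
      | none => none
      | some eqs' => qRun n (V ^^^ 2 ^ op.2.2) (bif U.testBit op.2.2 then U ^^^ 2 ^ op.2.2 else U)
          (qClean (V ^^^ 2 ^ op.2.2) eqs') s
    | 1 =>
      bif V.testBit op.2.2 then
        match qRun n (V ^^^ 2 ^ op.2.2) U (qClean (V ^^^ 2 ^ op.2.2) eqs) s with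
        | none => none
        | some (P, s') =>
          match qRun n V (U ||| 2 ^ op.2.2) eqs s' with
          | none => none
          | some (Q, s'') => some (pAdd P Q, s'')
      else none
    | _ =>
      bif eqs.isEmpty && Nat.blt V (2 ^ 72) && Nat.beq (U ||| V) V then some (leafP V U 72, s)
      else none

def mulQ (X : ℕ) (p : List ℕ) : ℕ → List ℕ
  | 0 => p
  | n + 1 => bif X.testBit n then pAdd (mulQ X p n) (0 :: mulQ X p n) else mulQ X p n

def qEq (X j : ℕ) : QP := (spAct X j).map fun t => (t.2.2, [t.2.1, 36 + t.1])

def qInit (X : ℕ) : List QP := ((List.range 36).filter fun j => X.testBit j).map (qEq X)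

def coreOk (c : ℕ × ℕ × List ℕ × List (ℕ × ℕ × ℕ)) : Bool :=
  match qRun 30 (c.1 ||| c.1 <<< 36) c.2.1 (qClean (c.1 ||| c.1 <<< 36) (qInit c.1)) c.2.2.2 with
  | some (P, _) => P == mulQ c.1 c.2.2.1 36
  | none => false


theorem cores_ok : spCores.all coreOk = true := by decide +kernel

set_option linter.unusedSectionVars false
set_option linter.unusedVariables false
section
variable {F : Type*} [Field F]

def mEv (σ : ℕ → F) (m : List ℕ) : F := (m.map σ).prod
def qEv (σ : ℕ → F) (p : QP) : F := (p.map fun t => ((t.1 : ℤ) : F) * mEv σ t.2).sum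

theorem qEv_nil (σ : ℕ → F) : qEv σ [] = 0 := rfl
theorem qEv_cons (σ : ℕ → F) (t) (p : QP) : qEv σ (t :: p) = (t.1 : F) * mEv σ t.2 + qEv σ p := by
  simp [qEv]
theorem mEv_cons (σ : ℕ → F) (i m) : mEv σ (i :: m) = σ i * mEv σ m := by simp [mEv]

theorem qEv_ins (σ : ℕ → F) (c : ℤ) (m : List ℕ) (p : QP) :
    qEv σ (qIns c m p) = (c : F) * mEv σ m + qEv σ p := by
  induction p with
  | nil => simp [qIns, qEv]
  | cons t l ih =>
    rw [qIns]
    split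
    · rename_i h; rw [qEv_cons, qEv_cons, h]; push_cast; ring
    · rw [qEv_cons, ih, qEv_cons]; ring

theorem qEv_add (σ : ℕ → F) (p r : QP) : qEv σ (qAdd p r) = qEv σ p + qEv σ r := by
  induction p with
  | nil => simp [qAdd, qEv]
  | cons t l ih => rw [qAdd, qEv_ins, ih, qEv_cons]; ring

theorem mEv_ins (σ : ℕ → F) (i : ℕ) (m : List ℕ) : mEv σ (mIns i m) = σ i * mEv σ m := by
  induction m with
  | nil => simp [mIns, mEv]
  | cons j l ih =>
    rw [mIns]
    split
    · rw [mEv_cons]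
    · rw [mEv_cons, ih, mEv_cons]; ring

theorem mEv_mul (σ : ℕ → F) (m r : List ℕ) : mEv σ (mMul m r) = mEv σ m * mEv σ r := by
  induction m with
  | nil => simp [mMul, mEv]
  | cons j l ih => rw [mMul, mEv_ins, ih, mEv_cons]; ring

theorem qEv_mulT (σ : ℕ → F) (c : ℤ) (m : List ℕ) (p : QP) :
    qEv σ (qMulT c m p) = (c : F) * mEv σ m * qEv σ p := by
  induction p with
  | nil => simp [qMulT, qEv]
  | cons t l ih => rw [qMulT, qEv_ins, ih, qEv_cons, mEv_mul]; push_cast; ring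

theorem qEv_mul (σ : ℕ → F) (p r : QP) : qEv σ (qMul p r) = qEv σ p * qEv σ r := by
  induction p with
  | nil => simp [qMul, qEv]
  | cons t l ih => rw [qMul, qEv_add, ih, qEv_cons, qEv_mulT]; ring

theorem mEv_zero (σ : ℕ → F) (i : ℕ) (m : List ℕ) (hi : i ∈ m) (h : σ i = 0) : mEv σ m = 0 :=
  List.prod_eq_zero (List.mem_map.2 ⟨i, hi, h⟩)

theorem qEv_norm (σ : ℕ → F) (V : ℕ) (hV : ∀ i, V.testBit i = false → σ i = 0) (p : QP) :
    qEv σ (qNorm V p) = qEv σ p := by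
  induction p with
  | nil => rfl
  | cons t l ih =>
    rw [qNorm, List.filter_cons]
    split
    · rw [qEv_cons, qEv_cons, ← ih]; rfl
    · rename_i h
      rw [qEv_cons, ← ih]
      have : (t.1 : F) * mEv σ t.2 = 0 := by
        by_cases h1 : t.1 = 0
        · simp [h1]
        · simp [h1] at h
          obtain ⟨i, hi, h'⟩ := h
          rw [mEv_zero σ i t.2 hi (hV i h'), mul_zero]
      rw [this, zero_add]; rfl

theorem qEv_has_not (σ : ℕ → F) (w : ℕ) (p : QP) : qEv σ p = qEv σ (qHas w p) + qEv σ (qNot w p) := by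
  induction p with
  | nil => simp [qHas, qNot, qEv]
  | cons t l ih =>
    rw [qHas, qNot, List.filter_cons, List.filter_cons, qEv_cons, ih]
    cases h : t.2.contains w
    · simp only [Bool.false_eq_true, if_false, Bool.not_false, if_true, qEv_cons, qHas, qNot]; ring
    · simp only [Bool.not_true, Bool.false_eq_true, if_false, if_true, qEv_cons, qHas, qNot]; ring

theorem mEv_update (σ : ℕ → F) (w : ℕ) (a : F) (m : List ℕ) (h : m.contains w = false) :
    mEv (Function.update σ w a) m = mEv σ m := by
  have h' : w ∉ m := by
    intro hh; rw [← List.contains_iff_mem, h] at hh; simp at hh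
  unfold mEv
  congr 1
  apply List.map_congr_left
  intro i hi
  have : i ≠ w := by rintro rfl; exact h' hi
  simp [this]

theorem qEv_update (σ : ℕ → F) (w : ℕ) (a : F) (p : QP) (h : ∀ t ∈ p, t.2.contains w = false) :
    qEv (Function.update σ w a) p = qEv σ p := by
  unfold qEv
  congr 1
  apply List.map_congr_left
  intro t ht
  rw [mEv_update _ _ _ _ (h t ht)]

theorem mEv_erase (σ : ℕ → F) (w : ℕ) (m : List ℕ) (h : m.contains w = true) :
    mEv σ m = σ w * mEv σ (m.erase w) := by
  have h' : w ∈ m := by rwa [List.contains_iff_mem] at h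
  unfold mEv
  rw [← List.prod_map_erase σ h']

theorem qEv_has (σ : ℕ → F) (w : ℕ) (p : QP) (h : ∀ t ∈ p, t.2.contains w = true) :
    qEv σ p = - σ w * qEv σ (p.map fun t => (-t.1, t.2.erase w)) := by
  induction p with
  | nil => simp [qEv]
  | cons t l ih =>
    rw [List.map_cons, qEv_cons, qEv_cons, ih (fun t ht => h t (by simp [ht])),
      mEv_erase σ w t.2 (h t (by simp))]
    push_cast; ring

theorem not_not (w : ℕ) (p : QP) : ∀ t ∈ qNot w p, t.2.contains w = false := by
  intro t ht
  have := (List.mem_filter.1 ht).2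
  simpa using this

theorem isU_ne (h2 : (2 : F) ≠ 0) {c : ℤ} (h : isU c = true) : (c : F) ≠ 0 := by
  have h4 : (4 : F) ≠ 0 := by
    have : (4 : F) = 2 * 2 := by norm_num
    rw [this]; exact mul_ne_zero h2 h2
  have h8 : (8 : F) ≠ 0 := by
    have : (8 : F) = 2 * 4 := by norm_num
    rw [this]; exact mul_ne_zero h2 h4
  simp only [isU, Bool.or_eq_true, beq_iff_eq] at h
  rcases h with ((h | h) | h) | h <;> rcases Int.natAbs_eq c with hc | hc <;> rw [hc, h] <;> simp [h2, h4, h8]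

theorem mEv_ne (σ : ℕ → F) (U : ℕ) (hU : ∀ i, U.testBit i = true → σ i ≠ 0) (m : List ℕ)
    (h : m.all (fun i => U.testBit i) = true) : mEv σ m ≠ 0 := by
  unfold mEv
  apply List.prod_ne_zero
  intro h0
  obtain ⟨i, hi, h1⟩ := List.mem_map.1 h0
  exact hU i (List.all_eq_true.1 h i hi) h1

structure Sol2 (V U : ℕ) (eqs : List QP) (σ : ℕ → F) : Prop where
  hV : ∀ i, V.testBit i = false → σ i = 0
  hU : ∀ i, U.testBit i = true → σ i ≠ 0
  hE : ∀ p ∈ eqs, qEv σ p = 0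

noncomputable def N2 (F : Type*) [Field F] (V U : ℕ) (eqs : List QP) : ℕ := Nat.card {σ : ℕ → F // Sol2 V U eqs σ}

theorem sol2_clean (V U : ℕ) (eqs : List QP) (σ : ℕ → F) :
    Sol2 V U (qClean V eqs) σ ↔ Sol2 V U eqs σ := by
  constructor
  · rintro ⟨h1, h2, h3⟩
    refine ⟨h1, h2, fun p hp => ?_⟩
    rw [← qEv_norm σ V h1]
    by_cases he : qNorm V p = []
    · rw [he]; rfl
    · exact h3 _ (List.mem_filter.2 ⟨List.mem_map_of_mem hp, by simpa using he⟩)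
  · rintro ⟨h1, h2, h3⟩
    refine ⟨h1, h2, fun p hp => ?_⟩
    obtain ⟨r, hr, rfl⟩ := List.mem_map.1 (List.mem_filter.1 hp).1
    rw [qEv_norm σ V h1]
    exact h3 r hr

theorem N2_clean (V U : ℕ) (eqs : List QP) : N2 F V U (qClean V eqs) = N2 F V U eqs :=
  Nat.card_congr (Equiv.subtypeEquivRight fun σ => sol2_clean V U eqs σ)

theorem tb_xor (V w i : ℕ) : (V ^^^ 2 ^ w).testBit i = if i = w then !V.testBit i else V.testBit i := by
  rw [Nat.testBit_xor, Nat.testBit_two_pow]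
  by_cases h : i = w
  · subst h; simp
  · have : ¬ (w = i) := fun hh => h hh.symm
    simp [h, this]

theorem tb_or (V w i : ℕ) : (V ||| 2 ^ w).testBit i = if i = w then true else V.testBit i := by
  rw [Nat.testBit_or, Nat.testBit_two_pow]
  by_cases h : i = w
  · subst h; simp
  · have : ¬ (w = i) := fun hh => h hh.symm
    simp [h, this]

theorem qSub_ev (σ : ℕ → F) (w : ℕ) (c : ℤ) (m : List ℕ) (rest p : QP) (hm : (c : F) * mEv σ m ≠ 0)
    (hr : (c : F) * mEv σ m * σ w + qEv σ rest = 0) :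
    qEv σ (qSub w c m rest p) = 0 ↔ qEv σ p = 0 := by
  rw [qSub, cond_eq_ite]
  split
  · rfl
  · rw [qEv_add, qEv_mulT, qEv_mul]
    have e1 := qEv_has σ w (qHas w p) (fun t ht => (List.mem_filter.1 ht).2)
    have e2 := qEv_has_not σ w p
    have : (c : F) * mEv σ m * qEv σ (qNot w p) +
        qEv σ ((qHas w p).map fun t => (-t.1, t.2.erase w)) * qEv σ rest = (c : F) * mEv σ m * qEv σ p := by
      rw [e2, e1]
      linear_combination (qEv σ ((qHas w p).map fun t => (-t.1, t.2.erase w))) * hr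
    rw [this]
    simp [hm]

theorem cont_ins (w : ℕ) (c : ℤ) (m : List ℕ) (p : QP) (hm : m.contains w = false)
    (hp : ∀ t ∈ p, t.2.contains w = false) : ∀ t ∈ qIns c m p, t.2.contains w = false := by
  induction p with
  | nil => simpa [qIns] using hm
  | cons t l ih =>
    rw [qIns]
    split
    · intro u hu
      rcases List.mem_cons.1 hu with rfl | hu
      · exact hm
      · exact hp u (by simp [hu])
    · intro u hu
      rcases List.mem_cons.1 hu with rfl | hu
      · exact hp _ (by simp)
      · exact ih (fun t ht => hp t (by simp [ht])) u hu

theorem cont_mIns (w i : ℕ) (m : List ℕ) : (mIns i m).contains w = (i :: m).contains w := by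
  induction m with
  | nil => rfl
  | cons j l ih =>
    rw [mIns]
    split
    · rfl
    · rw [List.contains_cons, ih]
      simp only [List.contains_cons]
      rw [Bool.or_left_comm]

theorem cont_mMul (w : ℕ) (m r : List ℕ) : (mMul m r).contains w = (m.contains w || r.contains w) := by
  induction m with
  | nil => simp [mMul]
  | cons j l ih =>
    rw [mMul, cont_mIns, List.contains_cons, ih, List.contains_cons, Bool.or_assoc]

theorem cont_add (w : ℕ) (p r : QP) (hp : ∀ t ∈ p, t.2.contains w = false)
    (hr : ∀ t ∈ r, t.2.contains w = false) : ∀ t ∈ qAdd p r, t.2.contains w = false := by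
  induction p with
  | nil => exact hr
  | cons t l ih =>
    exact cont_ins w _ _ _ (hp t (by simp)) (ih fun t ht => hp t (by simp [ht]))

theorem cont_mulT (w : ℕ) (c : ℤ) (m : List ℕ) (p : QP) (hm : m.contains w = false)
    (hp : ∀ t ∈ p, t.2.contains w = false) : ∀ t ∈ qMulT c m p, t.2.contains w = false := by
  induction p with
  | nil => simp [qMulT]
  | cons t l ih =>
    refine cont_ins w _ _ _ ?_ (ih fun t ht => hp t (by simp [ht]))
    rw [cont_mMul, hm, hp t (by simp)]; rfl

theorem cont_mul (w : ℕ) (p r : QP) (hp : ∀ t ∈ p, t.2.contains w = false)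
    (hr : ∀ t ∈ r, t.2.contains w = false) : ∀ t ∈ qMul p r, t.2.contains w = false := by
  induction p with
  | nil => simp [qMul]
  | cons t l ih =>
    exact cont_add w _ _ (cont_mulT w _ _ _ (hp t (by simp)) hr) (ih fun t ht => hp t (by simp [ht]))

theorem cont_sub (w : ℕ) (c : ℤ) (m : List ℕ) (rest p : QP) (hm : m.contains w = false)
    (hr : ∀ t ∈ rest, t.2.contains w = false)
    (hp : ((qHas w p).all fun t => !(t.2.erase w).contains w) = true) :
    ∀ t ∈ qSub w c m rest p, t.2.contains w = false := by
  rw [qSub, cond_eq_ite]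
  split
  · rename_i h
    intro t ht
    by_contra hc
    have : t ∈ qHas w p := List.mem_filter.2 ⟨ht, by simpa using hc⟩
    rw [List.isEmpty_iff.1 h] at this
    simp at this
  · refine cont_add w _ _ (cont_mulT w _ _ _ hm (not_not w p)) (cont_mul w _ _ ?_ hr)
    intro t ht
    obtain ⟨u, hu, rfl⟩ := List.mem_map.1 ht
    have := List.all_eq_true.1 hp u hu
    simpa using this

theorem cond_some {α : Type*} {x : Bool} {a r : α} (h : (bif x then some a else none) = some r) :
    x = true ∧ a = r := by
  cases x <;> simp_all

theorem qUnit_some {U : ℕ} {p : QP} (h : qUnit U p = true) :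
    ∃ d k, p = [(d, k)] ∧ (isU d && k.all (fun i => U.testBit i)) = true := by
  unfold qUnit at h
  split at h
  · exact ⟨_, _, rfl, h⟩
  · simp at h

theorem step_sound (h2 : (2 : F) ≠ 0) (V U e w : ℕ) (eqs eqs' : List QP) (h : qStep V U e w eqs = some eqs') :
    N2 F V U eqs = N2 F (V ^^^ 2 ^ w) (bif U.testBit w then U ^^^ 2 ^ w else U) eqs' := by
  unfold qStep at h
  split at h
  swap
  · simp at h
  rename_i c m0 hc
  obtain ⟨hcnd, h⟩ := cond_some h
  simp only [Bool.and_eq_true] at hcnd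
  obtain ⟨⟨⟨⟨⟨c1, c2⟩, c3⟩, c4⟩, c5⟩, c6⟩ := hcnd
  set m := m0.erase w with hm
  set p0 := eqs.getD e [] with hp0
  set rest := qNot w p0 with hrest
  have he : e < eqs.length := by
    by_contra hh
    rw [List.getD_eq_default _ _ (by omega)] at hp0
    rw [hp0] at hc; simp [qHas] at hc
  have hp0e : p0 = eqs[e] := by rw [hp0, List.getD_eq_getElem _ _ he]
  have c2' : m.contains w = false := by simpa using c2
  have hm0 : m0.contains w = true := by
    have : (c, m0) ∈ qHas w p0 := by rw [hc]; simp
    exact (List.mem_filter.1 this).2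
  have hrw := not_not w p0
  have hU' : ∀ i, (bif U.testBit w then U ^^^ 2 ^ w else U).testBit i = (U.testBit i && i != w) := by
    intro i
    cases hw : U.testBit w
    · by_cases hi : i = w
      · subst hi; simp [hw]
      · simp [hi]
    · simp only [cond_true, tb_xor]
      by_cases hi : i = w
      · subst hi; simp [hw]
      · simp [hi]
  have hmem : ∀ p, p ∈ eqs ↔ p = p0 ∨ p ∈ eqs.eraseIdx e := by
    intro p
    rw [hp0e]
    conv_lhs => rw [← List.insertIdx_eraseIdx_getElem he]
    rw [List.mem_insertIdx (by rw [List.length_eraseIdx]; split <;> omega)]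
  have hev0 : ∀ σ : ℕ → F, qEv σ p0 = (c : F) * mEv σ m * σ w + qEv σ rest := by
    intro σ
    rw [qEv_has_not σ w p0, hc, qEv_cons, qEv_nil, mEv_erase σ w m0 hm0]; ring
  have hcm : ∀ σ : ℕ → F, (∀ i, (bif U.testBit w then U ^^^ 2 ^ w else U).testBit i = true → σ i ≠ 0) →
      (c : F) * mEv σ m ≠ 0 := by
    intro σ hσ
    refine mul_ne_zero (isU_ne h2 c1) (mEv_ne σ _ hσ m ?_)
    rw [List.all_eq_true] at c3 ⊢
    intro i hi
    rw [hU', c3 i hi]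
    have : i ≠ w := by
      rintro rfl
      rw [List.contains_eq_mem] at c2'
      simp [hi] at c2'
    simp [this]
  have hsub : ∀ p ∈ eqs.eraseIdx e, ∀ t ∈ qSub w c m rest p, t.2.contains w = false := by
    intro p hp
    exact cont_sub w c m rest p c2' hrw (List.all_eq_true.1 c6 p ((hmem p).2 (Or.inr hp)))
  subst h
  refine Nat.card_congr
    { toFun := fun σ => ⟨Function.update σ.1 w 0, ?_⟩
      invFun := fun σ => ⟨Function.update σ.1 w (-qEv σ.1 rest / ((c : F) * mEv σ.1 m)), ?_⟩
      left_inv := ?_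
      right_inv := ?_ }
  · obtain ⟨σ, hV, hU, hE⟩ := σ
    dsimp only
    have hU2 : ∀ i, (bif U.testBit w then U ^^^ 2 ^ w else U).testBit i = true → σ i ≠ 0 := by
      intro i hi
      rw [hU'] at hi
      exact hU i (Bool.and_eq_true_iff.1 hi).1
    refine ⟨fun i hi => ?_, fun i hi => ?_, fun p hp => ?_⟩
    · by_cases hiw : i = w
      · subst hiw; simp
      · rw [tb_xor, if_neg hiw] at hi
        simp [hiw, hV i hi]
    · have hi0 := hU2 i hi
      rw [hU'] at hi
      have : i ≠ w := by simpa using (Bool.and_eq_true_iff.1 hi).2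
      simpa [this] using hi0
    · obtain ⟨r, hr, rfl⟩ := List.mem_map.1 hp
      rw [qEv_update _ _ _ _ (hsub r hr), qSub_ev σ w c m rest r (hcm σ hU2)]
      · exact hE r ((hmem r).2 (Or.inr hr))
      · rw [← hev0]; exact hE p0 ((hmem p0).2 (Or.inl rfl))
  · obtain ⟨σ, hV, hU, hE⟩ := σ
    dsimp only
    have hcm0 := hcm σ hU
    set τ := Function.update σ w (-qEv σ rest / ((c : F) * mEv σ m)) with hτ
    have t1 : mEv τ m = mEv σ m := mEv_update _ _ _ _ c2'
    have t2 : qEv τ rest = qEv σ rest := qEv_update _ _ _ _ hrw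
    have t3 : (c : F) * mEv τ m * τ w + qEv τ rest = 0 := by
      rw [t1, t2, hτ, Function.update_self]
      rw [← mul_div_assoc, mul_div_cancel_left₀ _ hcm0]
      ring
    refine ⟨fun i hi => ?_, fun i hi => ?_, fun p hp => ?_⟩
    · have hiw : i ≠ w := by rintro rfl; rw [c4] at hi; simp at hi
      rw [hτ, Function.update_of_ne hiw]
      refine hV i ?_
      rw [tb_xor, if_neg hiw, hi]
    · by_cases hiw : i = w
      · subst hiw
        rw [hi] at c5
        simp only [Bool.not_true, Bool.false_or] at c5
        · obtain ⟨d, k, hdk, c5⟩ := qUnit_some c5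
          rw [Bool.and_eq_true] at c5
          rw [hτ, Function.update_self]
          refine div_ne_zero (neg_ne_zero.2 ?_) hcm0
          rw [hdk, qEv_cons, qEv_nil, add_zero]
          refine mul_ne_zero (isU_ne h2 c5.1) (mEv_ne σ _ hU k ?_)
          rw [List.all_eq_true]
          intro j hj
          have hj1 := List.all_eq_true.1 c5.2 j hj
          have hk := hrw (d, k) (by rw [← hrest, hdk]; simp)
          rw [hU', hj1]
          have : j ≠ i := by
            rintro rfl
            rw [List.contains_eq_mem] at hk
            simp [hj] at hk
          simp [this]
      · rw [hτ, Function.update_of_ne hiw]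
        exact hU i (by rw [hU', hi]; simp [hiw])
    · rcases (hmem p).1 hp with rfl | hp
      · rw [hev0]; exact t3
      · rw [← qSub_ev τ w c m rest p (by rw [t1]; exact hcm0) t3, hτ,
          qEv_update _ _ _ _ (hsub p hp)]
        exact hE _ (List.mem_map_of_mem hp)
  · rintro ⟨σ, hV, hU, hE⟩
    have hU2 : ∀ i, (bif U.testBit w then U ^^^ 2 ^ w else U).testBit i = true → σ i ≠ 0 := by
      intro i hi
      rw [hU'] at hi
      exact hU i (Bool.and_eq_true_iff.1 hi).1
    have hcm0 := hcm σ hU2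
    have h0 := hE p0 ((hmem p0).2 (Or.inl rfl))
    rw [hev0] at h0
    simp only [Subtype.mk.injEq, Function.update_idem]
    rw [mEv_update _ _ _ _ c2', qEv_update _ _ _ _ hrw]
    convert Function.update_eq_self w σ using 2
    rw [div_eq_iff hcm0]
    linear_combination -h0
  · rintro ⟨σ, hV, hU, hE⟩
    have : σ w = 0 := hV w (by rw [tb_xor]; simp [c4])
    simp only [Subtype.mk.injEq, Function.update_idem]
    rw [← this, Function.update_eq_self]

variable [Fintype F]

theorem fin_sup (V : ℕ) : Finite {σ : ℕ → F // ∀ i, V.testBit i = false → σ i = 0} := by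
  apply Finite.of_injective (β := Fin V → F) (fun σ i => σ.1 i)
  intro σ τ h
  ext i
  by_cases hi : i < V
  · exact congrFun h ⟨i, hi⟩
  · have : V.testBit i = false := Nat.testBit_lt_two_pow (lt_of_le_of_lt (not_lt.1 hi) Nat.lt_two_pow_self)
    rw [σ.2 i this, τ.2 i this]

theorem card_split' {α : Type*} (P Q : α → Prop) (hfin : Finite {a // P a}) :
    Nat.card {a // P a} = Nat.card {a // P a ∧ Q a} + Nat.card {a // P a ∧ ¬ Q a} := by
  rw [← Nat.card_congr (Equiv.subtypeSubtypeEquivSubtypeInter P Q),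
    ← Nat.card_congr (Equiv.subtypeSubtypeEquivSubtypeInter P (fun a => ¬ Q a))]
  have := card_split (α := {a // P a}) (fun _ => True) (fun a => Q a.1)
  simpa using this

theorem split_sound (V U w : ℕ) (eqs : List QP) (hw : V.testBit w = true) :
    N2 F V U eqs = N2 F (V ^^^ 2 ^ w) U eqs + N2 F V (U ||| 2 ^ w) eqs := by
  have hfin : Finite {σ : ℕ → F // Sol2 V U eqs σ} := by
    have := fin_sup (F := F) V
    exact Finite.of_injective (β := {σ : ℕ → F // ∀ i, V.testBit i = false → σ i = 0})
      (fun σ => ⟨σ.1, σ.2.hV⟩) (fun a b h => Subtype.ext (Subtype.mk.injEq _ _ _ _ ▸ h))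
  rw [N2, card_split' _ (fun σ => σ w = 0) hfin]
  congr 1
  · refine Nat.card_congr (Equiv.subtypeEquivRight fun σ => ⟨?_, ?_⟩)
    · rintro ⟨⟨h1, h2, h3⟩, h4⟩
      refine ⟨fun i hi => ?_, h2, h3⟩
      by_cases hiw : i = w
      · rw [hiw, h4]
      · rw [tb_xor, if_neg hiw] at hi; exact h1 i hi
    · rintro ⟨h1, h2, h3⟩
      refine ⟨⟨fun i hi => ?_, h2, h3⟩, h1 w (by rw [tb_xor]; simp [hw])⟩
      have hiw : i ≠ w := by rintro rfl; rw [hw] at hi; simp at hi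
      exact h1 i (by rw [tb_xor, if_neg hiw, hi])
  · refine Nat.card_congr (Equiv.subtypeEquivRight fun σ => ⟨?_, ?_⟩)
    · rintro ⟨⟨h1, h2, h3⟩, h4⟩
      refine ⟨h1, fun i hi => ?_, h3⟩
      by_cases hiw : i = w
      · rw [hiw]; exact h4
      · rw [tb_or, if_neg hiw] at hi; exact h2 i hi
    · rintro ⟨h1, h2, h3⟩
      refine ⟨⟨h1, fun i hi => h2 i ?_, h3⟩, h2 w (by rw [tb_or]; simp)⟩
      rw [tb_or, hi]; simp

theorem leaf_sound (V U : ℕ) (hV : V < 2 ^ 72) (hU : U ||| V = V) :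
    N2 F V U [] = evP (Nat.card F - 1) (leafP V U 72) := by
  have hU' : ∀ i, U.testBit i = true → V.testBit i = true := by
    intro i hi; rw [← hU, Nat.testBit_or, hi]; rfl
  rw [← card_box V U 72 hU']
  have hb : ∀ i, ¬ i < 72 → V.testBit i = false := by
    intro i hi
    exact Nat.testBit_lt_two_pow (lt_of_lt_of_le hV (Nat.pow_le_pow_right (by norm_num) (not_lt.1 hi)))
  refine Nat.card_congr
    { toFun := fun σ => ⟨fun i => σ.1 i.val, fun i hi => σ.2.hV i hi, fun i hi => σ.2.hU i hi⟩
      invFun := fun f => ⟨fun i => if h : i < 72 then f.1 ⟨i, h⟩ else 0, ?_, ?_, by simp⟩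
      left_inv := ?_
      right_inv := ?_ }
  · intro i hi
    split
    · exact f.2.1 _ hi
    · rfl
  · intro i hi
    have : i < 72 := by
      by_contra hc
      have := hU' i hi
      rw [hb i hc] at this; simp at this
    simp only [this, dif_pos]
    exact f.2.2 ⟨i, this⟩ hi
  · rintro ⟨σ, h⟩
    apply Subtype.ext
    funext i
    dsimp only
    split
    · rfl
    · rename_i hi; exact (h.hV i (hb i hi)).symm
  · rintro ⟨f, h⟩
    ext i
    simp

theorem qRun_sound (h2 : (2 : F) ≠ 0) : ∀ (n V U : ℕ) (eqs : List QP) (s : List (ℕ × ℕ × ℕ)) (P : List ℕ)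
    (s' : List (ℕ × ℕ × ℕ)), qRun n V U eqs s = some (P, s') → N2 F V U eqs = evP (Nat.card F - 1) P := by
  intro n
  induction n with
  | zero => intro V U eqs s P s' h; simp [qRun] at h
  | succ n ih =>
    intro V U eqs s P s' h
    rcases s with _ | ⟨op, s⟩
    · simp [qRun] at h
    rw [qRun] at h
    split at h
    · split at h
      · simp at h
      · rename_i eqs' hst
        rw [step_sound h2 _ _ _ _ _ _ hst, ← N2_clean, ih _ _ _ _ _ _ h]
    · rw [cond_eq_ite] at h
      split at h
      · rename_i hw
        split at h
        · simp at h
        · rename_i P1 s1 h1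
          split at h
          · simp at h
          · rename_i P2 s2 h3
            simp only [Option.some.injEq, Prod.mk.injEq] at h
            rw [split_sound _ _ _ _ hw, ← N2_clean, ih _ _ _ _ _ _ h1, ih _ _ _ _ _ _ h3, ← h.1, evP_pAdd]
      · simp at h
    · rw [cond_eq_ite] at h
      split at h
      · rename_i hc
        simp only [Bool.and_eq_true, List.isEmpty_iff, Nat.blt_eq, Nat.beq_eq] at hc
        simp only [Option.some.injEq, Prod.mk.injEq] at h
        rw [hc.1.1, leaf_sound _ _ hc.1.2 hc.2, h.1]
      · simp at h
end

set_option linter.unusedSectionVars false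
set_option linter.unusedVariables false
section
variable {F : Type*} [Field F] [Fintype F]

def mkS (f x : V36 F) (i : ℕ) : F := if i < 36 then xN f i else xN x (i - 36)

theorem dot_eN (f : V36 F) (k : ℕ) : f ⬝ᵥ (eN k : V36 F) = xN f k := by
  by_cases h : k < 36
  · obtain ⟨a, rfl⟩ : ∃ a : Fin 36, a.val = k := ⟨⟨_, h⟩, rfl⟩
    rw [eN_fin, dot_ee, xN_fin]
  · have : (eN k : V36 F) = 0 := by
      ext i
      have : i.val ≠ k := by omega
      simp [eN, this]
    rw [this]; simp [xN, h]

theorem mk_lo (f x : V36 F) (i : ℕ) (h : i < 36) : mkS f x i = xN f i := by simp [mkS, h]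
theorem mk_hi (f x : V36 F) (i : ℕ) : mkS f x (36 + i) = xN x i := by simp [mkS]

theorem qEv_qEq {b : Bil (Fin 36) F} (hb : RowH b) (X : ℕ) (j : Fin 36) (hj : X.testBit j = true)
    (f x : V36 F) : qEv (mkS f x) (qEq X j) = f ⬝ᵥ resB b (mS X) x (ee j) := by
  rw [res_act hb X j hj, qEq]
  have : ∀ t ∈ spAct X j, t.2.1 < 36 := fun t ht => (tab1 j j.2 t (List.mem_of_mem_filter ht)).2.1
  revert this
  induction spAct X j with
  | nil => intro _; simp [qEv]
  | cons t l ih =>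
    intro h
    rw [List.map_cons, qEv_cons, ih (fun t ht => h t (by simp [ht])), List.map_cons, List.sum_cons,
      dotProduct_add, dotProduct_smul, dot_eN, mEv_cons, mEv_cons, mk_hi, mk_lo _ _ _ (h t (by simp))]
    simp [mEv]; ring

theorem tb_V (X i : ℕ) (hX : X < 2 ^ 36) : (X ||| X <<< 36).testBit i =
    if i < 36 then X.testBit i else X.testBit (i - 36) := by
  rw [Nat.testBit_or, Nat.testBit_shiftLeft]
  split
  · rename_i h; have : ¬ (36 ≤ i) := by omega
    simp [this]
  · rename_i h
    have h' : 36 ≤ i := by omega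
    rw [Nat.testBit_lt_two_pow (lt_of_lt_of_le hX (Nat.pow_le_pow_right (by norm_num) h'))]
    simp [h']

theorem core_iff {b : Bil (Fin 36) F} (hb : RowH b) (X Z : ℕ) (hX : X < 2 ^ 36) (hZ : Z < 2 ^ 36)
    (f x : V36 F) : Sol (resB b (mS X)) (mS X) (mS Z) f x ↔
      Sol2 (X ||| X <<< 36) Z (qInit X) (mkS f x) := by
  have big : ∀ W i, W < 2 ^ 36 → 36 ≤ i → W.testBit i = false := fun W i hW h =>
    Nat.testBit_lt_two_pow (lt_of_lt_of_le hW (Nat.pow_le_pow_right (by norm_num) h))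
  constructor
  · rintro ⟨h1, h2, h3, h4⟩
    refine ⟨fun i hi => ?_, fun i hi => ?_, fun p hp => ?_⟩
    · rw [tb_V _ _ hX] at hi
      rw [mkS]
      split_ifs at hi ⊢ with h
      · rw [xN, dif_pos h]; apply h1; rw [mem_mS, hi]; simp
      · rw [xN]; split
        · apply h2; rw [mem_mS, hi]; simp
        · rfl
    · have h : i < 36 := by
        by_contra hc
        rw [big Z i hZ (by omega)] at hi; simp at hi
      rw [mk_lo _ _ _ h, xN, dif_pos h]
      exact h3 _ ((mem_mS _ _).2 hi)
    · obtain ⟨j, hj, rfl⟩ := List.mem_map.1 hp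
      rw [List.mem_filter, List.mem_range] at hj
      rw [qEv_qEq hb X ⟨j, hj.1⟩ hj.2]
      exact h4 _
  · rintro ⟨h1, h2, h3⟩
    refine ⟨fun i hi => ?_, fun i hi => ?_, fun i hi => ?_, fun y => ?_⟩
    · have := h1 i (by rw [tb_V _ _ hX, if_pos i.2]; rw [mem_mS] at hi; simpa using hi)
      rwa [mk_lo _ _ _ i.2, xN_fin] at this
    · have := h1 (36 + i) (by rw [tb_V _ _ hX, if_neg (by omega)]; rw [mem_mS] at hi; simpa using hi)
      rwa [mk_hi, xN_fin] at this
    · have := h2 i ((mem_mS _ _).1 hi)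
      rwa [mk_lo _ _ _ i.2, xN_fin] at this
    · rw [pi_eq_sum_univ' y, map_sum, dotProduct_sum]
      refine Finset.sum_eq_zero fun j _ => ?_
      rw [map_smul, dotProduct_smul]
      convert smul_zero _
      cases hj : X.testBit j
      · have : prj (mS X) (ee j : V36 F) = 0 := by rw [← eN_fin, prj_eN, hj]; simp
        change f ⬝ᵥ resB b (mS X) x (ee j) = 0
        rw [resB_apply, this]; simp
      · change f ⬝ᵥ resB b (mS X) x (ee j) = 0
        rw [← qEv_qEq hb X j hj]
        exact h3 _ (List.mem_map.2 ⟨j, List.mem_filter.2 ⟨List.mem_range.2 j.2, hj⟩, rfl⟩)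

theorem core_link {b : Bil (Fin 36) F} (hb : RowH b) (X Z : ℕ) (hX : X < 2 ^ 36) (hZ : Z < 2 ^ 36) :
    spT b X Z = N2 F (X ||| X <<< 36) Z (qInit X) := by
  have big : ∀ W i, W < 2 ^ 36 → 36 ≤ i → W.testBit i = false := fun W i hW h =>
    Nat.testBit_lt_two_pow (lt_of_lt_of_le hW (Nat.pow_le_pow_right (by norm_num) h))
  have inv : ∀ σ : ℕ → F, Sol2 (X ||| X <<< 36) Z (qInit X) σ →
      mkS (fun i => σ i) (fun i => σ (36 + i)) = σ := by
    intro σ h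
    funext i
    rw [mkS]
    split
    · rename_i hi; simp [xN, hi]
    · rename_i hi
      rw [xN]
      split
      · congr 1; simp; omega
      · refine (h.hV i ?_).symm
        rw [tb_V _ _ hX, if_neg hi, big X _ hX (by omega)]
  refine Nat.card_congr
    { toFun := fun p => ⟨mkS p.1.1 p.1.2, (core_iff hb X Z hX hZ _ _).1 p.2⟩
      invFun := fun σ => ⟨(fun i => σ.1 i, fun i => σ.1 (36 + i)),
        (core_iff hb X Z hX hZ _ _).2 (by rw [inv _ σ.2]; exact σ.2)⟩
      left_inv := ?_
      right_inv := fun σ => Subtype.ext (inv _ σ.2) }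
  rintro ⟨⟨f, x⟩, h⟩
  apply Subtype.ext
  simp only [Prod.mk.injEq]
  exact ⟨funext fun i => by rw [mk_lo _ _ _ i.2, xN_fin], funext fun i => by rw [mk_hi, xN_fin]⟩

theorem evP_mulQ (v X : ℕ) (p : List ℕ) (n : ℕ) :
    evP v (mulQ X p n) = (∏ i : Fin n, if X.testBit i then v + 1 else 1) * evP v p := by
  induction n with
  | zero => simp [mulQ]
  | succ n ih =>
    rw [Fin.prod_univ_castSucc, mulQ]
    cases h : X.testBit n <;> simp [h, evP_pAdd, evP, ih]
    ring

theorem evP_mulQ' (v X : ℕ) (p : List ℕ) :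
    evP v (mulQ X p 36) = (v + 1) ^ (mS X).card * evP v p := by
  rw [evP_mulQ, mS, Finset.prod_ite]; simp

theorem cores_lt : ∀ c ∈ spCores, c.1 < 2 ^ 36 ∧ c.2.1 < 2 ^ 36 := by decide +kernel

theorem hcore {b : Bil (Fin 36) F} (hb : RowH b) (h2 : (2 : F) ≠ 0) : ∀ c ∈ spCores,
    spT b c.1 c.2.1 = Nat.card F ^ (mS c.1).card * evP (Nat.card F - 1) c.2.2.1 := by
  intro c hc
  have h := List.all_eq_true.1 cores_ok c hc
  rw [core_link hb _ _ (cores_lt c hc).1 (cores_lt c hc).2, ← N2_clean]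
  rw [coreOk] at h
  split at h
  · rename_i P s' hr
    rw [qRun_sound h2 _ _ _ _ _ _ _ hr, eq_of_beq h, evP_mulQ', Nat.sub_add_cancel Nat.card_pos]
  · simp at h

theorem mS_top : mS (2 ^ 36 - 1) = Finset.univ := by decide +kernel
theorem mS_bot : mS 0 = ∅ := by simp [mS]

theorem TT_final {b : Bil (Fin 36) F} (hb : RowH b) (hl : IsLieB b) (h2 : (2 : F) ≠ 0) :
    Nat.card {p : V36 F × V36 F // ∀ y, p.1 ⬝ᵥ b p.2 y = 0} = Nat.card F ^ 36 *
      evP (Nat.card F - 1) [1, 36, 410, 1960, 4560, 5701, 4121, 1845, 547, 112, 15, 1] := by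
  have pt : ∀ x : V36 F, prj Finset.univ x = x := fun x => by ext i; simp [prj_apply]
  have hr : resB b Finset.univ = b := by
    ext x y i; simp [resB_apply, pt]
  have h := spRun_eq
  rw [Option.map_eq_some_iff] at h
  obtain ⟨⟨P, s'⟩, h, rfl⟩ := h
  have := spRun_sound hb h2 (hcore hb h2) _ _ _ _ _ _ h
    ⟨by rw [mS_top, hr]; exact hl, by simp, by simp⟩
  rw [spT, mS_top, hr, mS_bot, Finset.card_univ, Fintype.card_fin] at this
  rw [← this]
  refine Nat.card_congr (Equiv.subtypeEquivRight fun p => ⟨fun h => ⟨?_, ?_, ?_, h⟩, fun h => h.h⟩)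
  · intro i hi; simp at hi
  · intro i hi; simp at hi
  · simp
end

section
abbrev S12 := Fin 6 ⊕ Fin 6

def tA (i j : ℕ) : ℕ := ([[0,0,6,11,16,20],[0,0,1,7,12,17],[0,0,0,2,8,13],[0,0,0,0,3,9],[0,0,0,0,0,4],[]].getD i []).getD j 0
def tB (i j : ℕ) : ℕ := ([[35,34,32,30,27,24],[34,33,31,28,25,21],[32,31,29,26,22,18],[30,28,26,23,19,14],
  [27,25,22,19,15,10],[24,21,18,14,10,5]].getD i []).getD j 0
theorem tA_lt : ∀ i j : Fin 6, tA i j < 36 := by decide +kernel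
theorem tB_lt : ∀ i j : Fin 6, tB i j < 36 := by decide +kernel
def iA (i j : Fin 6) : Fin 36 := ⟨tA i j, tA_lt i j⟩
def iB (i j : Fin 6) : Fin 36 := ⟨tB i j, tB_lt i j⟩
theorem iB_symm : ∀ i j, iB i j = iB j i := by decide +kernel

def mM {R : Type*} [Ring R] (x : Fin 36 → R) : Matrix S12 S12 R
  | .inl i, .inl j => if i < j then x (iA i j) else 0
  | .inl i, .inr j => x (iB i j)
  | .inr _, .inl _ => 0
  | .inr i, .inr j => if j < i then - x (iA j i) else 0

def pos (a : Fin 36) : Option (Fin 6 × Fin 6 × Bool) :=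
  ((List.finRange 6 ×ˢ List.finRange 6 ×ˢ [true, false]).filter fun t =>
    bif t.2.2 then t.1 < t.2.1 && iA t.1 t.2.1 == a else t.1 ≤ t.2.1 && iB t.1 t.2.1 == a).head?

theorem pos_ex : ∀ a : Fin 36, (∃ i j, i < j ∧ iA i j = a) ∨ ∃ i j, i ≤ j ∧ iB i j = a := by decide +kernel
theorem pos_A : ∀ i j : Fin 6, i < j → pos (iA i j) = some (i, j, true) := by decide +kernel
theorem pos_B : ∀ i j : Fin 6, i ≤ j → pos (iB i j) = some (i, j, false) := by decide +kernel

def ent (a : Fin 36) : List (S12 × S12 × ℤ) :=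
  match pos a with
  | some (i, j, true) => [(.inl i, .inl j, 1), (.inr j, .inr i, -1)]
  | some (i, j, false) => if i = j then [(.inl i, .inr j, 1)] else [(.inl i, .inr j, 1), (.inl j, .inr i, 1)]
  | none => []

def lAt (l : List (S12 × S12 × ℤ)) (i j : S12) : ℤ :=
  ((l.filter fun t => decide (t.1 = i) && decide (t.2.1 = j)).map fun t => t.2.2).sum

def EntP (a : Fin 36) (i : S12) : Prop := ∀ j : S12, mM (Pi.single a (1 : ℤ)) i j = lAt (ent a) i j
instance (a i) : Decidable (EntP a i) := inferInstanceAs (Decidable (∀ _ : S12, _))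
theorem ent_ok : ∀ a i, EntP a i := by decide +kernel

def lMul (l m : List (S12 × S12 × ℤ)) : List (S12 × S12 × ℤ) :=
  l.flatMap fun s => (m.filter fun t => decide (t.1 = s.2.1)).map fun t => (s.1, t.2.1, s.2.2 * t.2.2)
def lSmul (c : ℤ) (l : List (S12 × S12 × ℤ)) : List (S12 × S12 × ℤ) := l.map fun t => (t.1, t.2.1, c * t.2.2)
def eR (a : ℕ) : List (S12 × S12 × ℤ) := if h : a < 36 then ent ⟨a, h⟩ else []

def bra (a b : ℕ) : List (S12 × S12 × ℤ) :=
  lMul (eR a) (eR b) ++ (lSmul (-1) (lMul (eR b) (eR a)) ++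
  lSmul (-1) (((spRows.getD b []).filter fun t => t.1 == a).flatMap fun t => lSmul t.2.2 (eR t.2.1)))

theorem bra_ok : ∀ a < 36, ∀ b < 36, ∀ t ∈ bra a b, lAt (bra a b) t.1 t.2.1 = 0 := by decide +kernel
end

set_option linter.unusedSectionVars false
section
variable {F : Type*} [Field F] [Fintype F]

theorem mM_inj {x y : V36 F} (h : mM x = mM y) : x = y := by
  funext a
  rcases pos_ex a with ⟨i, j, hij, rfl⟩ | ⟨i, j, hij, rfl⟩
  · have := congrFun (congrFun h (.inl i)) (.inl j)
    simpa [mM, hij] using this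
  · exact congrFun (congrFun h (.inl i)) (.inr j)

theorem mM_add (x y : V36 F) : mM (x + y) = mM x + mM y := by
  ext i j
  rcases i with i | i <;> rcases j with j | j <;> simp only [mM, Matrix.add_apply, Pi.add_apply]
  · split <;> simp
  · simp
  · split <;> simp; ring

theorem mM_smul (c : F) (x : V36 F) : mM (c • x) = c • mM x := by
  ext i j
  rcases i with i | i <;> rcases j with j | j <;> simp [mM, Matrix.smul_apply]

def mL : V36 F →ₗ[F] Matrix S12 S12 F := { toFun := mM, map_add' := mM_add, map_smul' := mM_smul }

def lEv (F : Type*) [Field F] (l : List (S12 × S12 × ℤ)) : Matrix S12 S12 F :=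
  (l.map fun t => Matrix.single t.1 t.2.1 ((t.2.2 : ℤ) : F)).sum

theorem lEv_nil : lEv F [] = 0 := rfl
theorem lEv_cons (t l) : lEv F (t :: l) = Matrix.single t.1 t.2.1 ((t.2.2 : ℤ) : F) + lEv F l := by simp [lEv]
theorem lEv_append (l m) : lEv F (l ++ m) = lEv F l + lEv F m := by simp [lEv]

theorem lEv_at (l) (i j : S12) : lEv F l i j = ((lAt l i j : ℤ) : F) := by
  induction l with
  | nil => simp [lEv, lAt]
  | cons t l ih =>
    rw [lEv_cons, Matrix.add_apply, ih, lAt, lAt, List.filter_cons, Matrix.single_apply]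
    by_cases h1 : t.1 = i <;> by_cases h2 : t.2.1 = j <;> simp [h1, h2]

theorem lEv_smul (c : ℤ) (l) : lEv F (lSmul c l) = (c : F) • lEv F l := by
  induction l with
  | nil => simp [lEv, lSmul]
  | cons t l ih =>
    rw [lSmul, List.map_cons, lEv_cons, ← lSmul, ih, lEv_cons, smul_add]
    simp [Matrix.smul_single]

theorem lEv_mul (l m) : lEv F (lMul l m) = lEv F l * lEv F m := by
  induction l with
  | nil => simp [lEv, lMul]
  | cons s l ih =>
    rw [lMul, List.flatMap_cons, lEv_append, ← lMul, ih, lEv_cons, add_mul]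
    congr 1
    clear ih
    induction m with
    | nil => simp [lEv]
    | cons t m ih =>
      rw [List.filter_cons, lEv_cons, mul_add, ← ih]
      by_cases h : t.1 = s.2.1
      · simp [h, lEv_cons]
      · rw [Matrix.single_mul_single_of_ne _ _ _ _ (fun hh => h hh.symm)]; simp [h]

theorem mM_ent (a : Fin 36) : mM (ee a : V36 F) = lEv F (ent a) := by
  ext i j
  rw [lEv_at, ← ent_ok a i j]
  rcases i with i | i <;> rcases j with j | j <;> simp only [mM]
  · split <;> simp [Pi.single_apply]
  · simp [Pi.single_apply]
  · simp
  · split <;> simp [Pi.single_apply]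

theorem mM_eR (a : ℕ) (h : a < 36) : mM (eN a : V36 F) = lEv F (eR a) := by
  obtain ⟨a, rfl⟩ : ∃ b : Fin 36, b.val = a := ⟨⟨_, h⟩, rfl⟩
  rw [eN_fin, mM_ent]; simp [eR]

theorem bra_zero (a b : ℕ) (ha : a < 36) (hb : b < 36) : lEv F (bra a b) = 0 := by
  ext i j
  rw [lEv_at]
  by_cases h : ∃ t ∈ bra a b, t.1 = i ∧ t.2.1 = j
  · obtain ⟨t, ht, rfl, rfl⟩ := h
    rw [bra_ok a ha b hb t ht]; simp
  · have : lAt (bra a b) i j = 0 := by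
      rw [lAt, List.filter_eq_nil_iff.2]; · rfl
      intro t ht hc
      simp only [Bool.and_eq_true, decide_eq_true_eq] at hc
      exact h ⟨t, ht, hc⟩
    rw [this]; simp

def xL (a : ℕ) : V36 F →ₗ[F] F :=
  { toFun := fun x => xN x a
    map_add' := fun x y => by simp only [xN]; split <;> simp
    map_smul' := fun c x => by simp only [xN]; split <;> simp }

def rowF (j : Fin 36) (x : V36 F) : V36 F :=
  ((spRows.getD j.val []).map fun t => (((t.2.2 : ℤ) : F) * xN x t.1) • (eN t.2.1 : V36 F)).sum

def rowL (j : Fin 36) : V36 F →ₗ[F] V36 F :=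
  { toFun := rowF j
    map_add' := fun x y => by
      unfold rowF
      induction spRows.getD j.val [] with
      | nil => simp
      | cons t l ih =>
        simp only [List.map_cons, List.sum_cons, ih]
        rw [show xN (x + y) t.1 = xN x t.1 + xN y t.1 from (xL t.1).map_add x y, mul_add, add_smul]
        abel
    map_smul' := fun c x => by
      unfold rowF
      induction spRows.getD j.val [] with
      | nil => simp
      | cons t l ih =>
        simp only [List.map_cons, List.sum_cons, ih, smul_add]
        rw [show xN (c • x) t.1 = c * xN x t.1 from (xL t.1).map_smul c x, smul_smul]
        simp only [RingHom.id_apply, mul_left_comm] }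

def b0 (F : Type*) [Field F] : Bil (Fin 36) F :=
  LinearMap.mk₂ F (fun x y => ∑ j, y j • rowL j x)
    (by intros; simp [smul_add, Finset.sum_add_distrib])
    (by intro c x y; rw [Finset.smul_sum]; refine Finset.sum_congr rfl fun j _ => ?_; rw [map_smul, smul_comm])
    (by intros; simp [add_smul, Finset.sum_add_distrib]) (by intros; simp [Finset.smul_sum, mul_smul])

theorem b0_ee (x : V36 F) (j : Fin 36) : b0 F x (ee j) = rowF j x := by
  rw [b0, LinearMap.mk₂_apply, Finset.sum_eq_single j]
  · simp [ee, rowL]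
  · intro k _ hk; simp [ee, hk]
  · simp

theorem rowH_b0 : RowH (b0 F) := fun j x => b0_ee x j

theorem mM_b0_ee (a b : Fin 36) : mM (b0 F (ee a) (ee b)) = mM (ee a) * mM (ee b) - mM (ee b) * mM (ee a) := by
  have h := bra_zero (F := F) a b a.2 b.2
  have ea : ∀ a : Fin 36, lEv F (eR a) = mM (ee a) := fun a => by rw [← mM_eR _ a.2, eN_fin]
  rw [bra, lEv_append, lEv_append, lEv_smul, lEv_smul, lEv_mul, lEv_mul, ea, ea] at h
  have : lEv F (((spRows.getD b.val []).filter fun t => t.1 == a.val).flatMap fun t => lSmul t.2.2 (eR t.2.1)) =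
      mM (b0 F (ee a) (ee b)) := by
    rw [b0_ee, rowF]
    have ht : ∀ t ∈ spRows.getD b.val [], t.2.1 < 36 := fun t ht => (tab1 b b.2 t ht).2.1
    revert ht
    induction spRows.getD b.val [] with
    | nil => intro _; exact (mL.map_zero).symm
    | cons t l ih =>
      intro ht
      rw [List.map_cons, List.sum_cons, mM_add, ← ih fun t h => ht t (by simp [h]), mM_smul,
        mM_eR _ (ht t (by simp)), List.filter_cons]
      have hx : xN (ee a : V36 F) t.1 = if t.1 = a.val then 1 else 0 := by
        simp only [xN]
        split
        · simp [ee, Pi.single_apply, Fin.ext_iff]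
        · rename_i hh; have : t.1 ≠ a.val := by omega
          simp [this]
      rw [hx]
      by_cases hc : t.1 = a.val
      · simp [hc, lEv_append, lEv_smul]
      · simp [hc]
  rw [this] at h
  simp only [Int.cast_neg, Int.cast_one, neg_smul, one_smul] at h
  rw [← sub_eq_zero, ← neg_eq_zero, ← h]; abel

theorem mM_b0 (x y : V36 F) : mM (b0 F x y) = mM x * mM y - mM y * mM x := by
  let B1 : V36 F →ₗ[F] V36 F →ₗ[F] Matrix S12 S12 F := (b0 F).compr₂ mL
  let B2 : V36 F →ₗ[F] V36 F →ₗ[F] Matrix S12 S12 F :=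
    LinearMap.mk₂ F (fun x y => mL x * mL y - mL y * mL x)
      (by intros; simp only [map_add]; noncomm_ring) (by intros; simp [smul_sub])
      (by intros; simp only [map_add]; noncomm_ring) (by intros; simp [smul_sub])
  have : B1 = B2 := by
    refine LinearMap.ext_basis (Pi.basisFun F (Fin 36)) (Pi.basisFun F (Fin 36)) fun i j => ?_
    simp only [Pi.basisFun_apply]
    exact mM_b0_ee i j
  exact congrArg (fun B : V36 F →ₗ[F] V36 F →ₗ[F] Matrix S12 S12 F => B x y) this

theorem lie_b0 : IsLieB (b0 F) where
  anti x y := by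
    apply mM_inj
    rw [show mM (-b0 F y x) = -mM (b0 F y x) from (mL (F := F)).map_neg _, mM_b0, mM_b0]; abel
  jac x y z := by
    apply mM_inj
    rw [show mM (b0 F x (b0 F y z) - b0 F y (b0 F x z)) = mM (b0 F x (b0 F y z)) - mM (b0 F y (b0 F x z)) from
      (mL (F := F)).map_sub _ _]
    simp only [mM_b0]; noncomm_ring
end

set_option linter.unusedSectionVars false
section
open Matrix
variable {F : Type*} [Field F] [Fintype F]

theorem card_ker_dual (B : V36 F →ₗ[F] V36 F) :
    Nat.card {y : V36 F // B y = 0} = Nat.card {f : V36 F // ∀ y, f ⬝ᵥ B y = 0} := by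
  classical
  set A := LinearMap.toMatrix' B with hA
  have hB : ∀ y, B y = A *ᵥ y := fun y => by rw [hA, LinearMap.toMatrix'_mulVec]
  have key : ∀ A : Matrix (Fin 36) (Fin 36) F, Nat.card {y : V36 F // A *ᵥ y = 0} = Nat.card F ^ (36 - A.rank) := by
    intro A
    have e : Nat.card {y : V36 F // A *ᵥ y = 0} = Nat.card (LinearMap.ker A.mulVecLin) :=
      Nat.card_congr (Equiv.subtypeEquivRight fun y => by rw [LinearMap.mem_ker, Matrix.mulVecLin_apply])
    rw [e, Module.natCard_eq_pow_finrank (K := F)]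
    have := A.mulVecLin.finrank_range_add_finrank_ker
    rw [Module.finrank_fin_fun] at this
    congr 1
    rw [Matrix.rank]; omega
  have e1 : Nat.card {y : V36 F // B y = 0} = Nat.card {y : V36 F // A *ᵥ y = 0} :=
    Nat.card_congr (Equiv.subtypeEquivRight fun y => by rw [hB])
  have e2 : Nat.card {f : V36 F // ∀ y, f ⬝ᵥ B y = 0} = Nat.card {f : V36 F // Aᵀ *ᵥ f = 0} := by
    refine Nat.card_congr (Equiv.subtypeEquivRight fun f => ?_)
    rw [Matrix.mulVec_transpose]
    constructor
    · intro h
      apply dotProduct_eq_zero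
      intro y
      rw [← Matrix.dotProduct_mulVec, ← hB]; exact h y
    · intro h y
      rw [hB, Matrix.dotProduct_mulVec, h, zero_dotProduct]
  rw [e1, e2, key, key, Matrix.rank_transpose]

theorem card_pairs_dual (b : Bil (Fin 36) F) :
    Nat.card {p : V36 F × V36 F // b p.1 p.2 = 0} =
    Nat.card {p : V36 F × V36 F // ∀ y, p.1 ⬝ᵥ b p.2 y = 0} := by
  classical
  have e1 : {p : V36 F × V36 F // b p.1 p.2 = 0} ≃ (Σ x : V36 F, {y : V36 F // b x y = 0}) :=
    { toFun := fun p => ⟨p.1.1, p.1.2, p.2⟩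
      invFun := fun p => ⟨(p.1, p.2.1), p.2.2⟩
      left_inv := fun p => rfl
      right_inv := fun p => rfl }
  have e2 : {p : V36 F × V36 F // ∀ y, p.1 ⬝ᵥ b p.2 y = 0} ≃
      (Σ x : V36 F, {f : V36 F // ∀ y, f ⬝ᵥ b x y = 0}) :=
    { toFun := fun p => ⟨p.1.2, p.1.1, p.2⟩
      invFun := fun p => ⟨(p.2.1, p.1), p.2.2⟩
      left_inv := fun p => rfl
      right_inv := fun p => rfl }
  rw [Nat.card_congr e1, Nat.card_congr e2, Nat.card_sigma, Nat.card_sigma]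
  exact Finset.sum_congr rfl fun x _ => card_ker_dual _

theorem card_comm_pairs (h2 : (2 : F) ≠ 0) :
    Nat.card {p : V36 F × V36 F // Commute (mM p.1) (mM p.2)} = Nat.card F ^ 36 *
      evP (Nat.card F - 1) [1, 36, 410, 1960, 4560, 5701, 4121, 1845, 547, 112, 15, 1] := by
  rw [← TT_final rowH_b0 lie_b0 h2, ← card_pairs_dual]
  refine Nat.card_congr (Equiv.subtypeEquivRight fun p => ?_)
  have h0 : mM (0 : V36 F) = 0 := (mL (F := F)).map_zero
  constructor
  · intro h
    apply mM_inj
    rw [mM_b0, h0, h.eq, sub_self]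
  · intro h
    have := mM_b0 p.1 p.2
    rw [h, h0] at this
    exact (sub_eq_zero.1 this.symm)
end

set_option linter.unusedSectionVars false
section
open Matrix
variable {F : Type*} [Field F] [Fintype F]

def rk : S12 → ℕ
  | .inl i => i.val
  | .inr i => 11 - i.val

def wk (k : ℕ) (N : Matrix S12 S12 F) : Prop := ∀ i j, N i j ≠ 0 → rk i + k ≤ rk j

theorem rk_lt (i : S12) : rk i < 12 := by
  rcases i with i | i <;> simp only [rk] <;> omega

theorem wk.add {k} {A B : Matrix S12 S12 F} (hA : wk k A) (hB : wk k B) : wk k (A + B) := by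
  intro i j h
  by_cases h1 : A i j = 0
  · exact hB i j (by simpa [h1] using h)
  · exact hA i j h1
theorem wk.neg {k} {A : Matrix S12 S12 F} (hA : wk k A) : wk k (-A) := fun i j h => hA i j (by simpa using h)
theorem wk.smul {k} (c : F) {A : Matrix S12 S12 F} (hA : wk k A) : wk k (c • A) :=
  fun i j h => hA i j (by intro h'; simp [h'] at h)
theorem wk_one : wk 0 (1 : Matrix S12 S12 F) := by
  intro i j h
  by_cases hij : i = j
  · simp [hij]
  · simp [hij] at h
theorem wk_zero (k) : wk k (0 : Matrix S12 S12 F) := fun i j h => by simp at h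
theorem wk.mul {k l} {A B : Matrix S12 S12 F} (hA : wk k A) (hB : wk l B) : wk (k + l) (A * B) := by
  intro i j h
  rw [Matrix.mul_apply] at h
  obtain ⟨m, _, hm⟩ := Finset.exists_ne_zero_of_sum_ne_zero h
  have h1 := hA i m (left_ne_zero_of_mul hm)
  have h2 := hB m j (right_ne_zero_of_mul hm)
  omega
theorem wk.pow {A : Matrix S12 S12 F} (hA : wk 1 A) (n : ℕ) : wk n (A ^ n) := by
  induction n with
  | zero => simpa using wk_one
  | succ n ih => rw [pow_succ]; exact ih.mul hA
theorem wk.mono {k l} (h : l ≤ k) {A : Matrix S12 S12 F} (hA : wk k A) : wk l A := fun i j hh => by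
  have := hA i j hh; omega
theorem wk_big {A : Matrix S12 S12 F} (hA : wk 12 A) : A = 0 := by
  ext i j
  by_contra h
  have := hA i j h
  have := rk_lt j
  omega
theorem wk_sum {ι : Type*} (s : Finset ι) (f : ι → Matrix S12 S12 F) {k} (h : ∀ i ∈ s, wk k (f i)) :
    wk k (∑ i ∈ s, f i) := by
  classical
  induction s using Finset.induction_on with
  | empty => simpa using wk_zero k
  | insert a s ha ih =>
    rw [Finset.sum_insert ha]
    exact (h a (by simp)).add (ih fun i hi => h i (by simp [hi]))

theorem wk_inv {N : Matrix S12 S12 F} (h : wk 1 N) : (1 - N) * (1 - N)⁻¹ = 1 ∧ (1 - N)⁻¹ * (1 - N) = 1 ∧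
    wk 1 ((1 - N)⁻¹ - 1) := by
  have e : (1 - N) * ∑ i ∈ Finset.range 12, N ^ i = 1 := by
    rw [mul_neg_geom_sum, wk_big (h.pow 12), sub_zero]
  have ei : (1 - N)⁻¹ = ∑ i ∈ Finset.range 12, N ^ i := Matrix.inv_eq_right_inv e
  refine ⟨by rw [ei, e], by rw [ei, mul_eq_one_comm, e], ?_⟩
  have : (1 - N)⁻¹ - 1 = N * ∑ i ∈ Finset.range 12, N ^ i := by
    rw [sub_mul, one_mul, sub_eq_iff_eq_add] at e
    rw [ei, sub_eq_iff_eq_add, add_comm]; exact e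
  rw [this]
  exact h.mul (wk_sum _ _ fun i _ => (h.pow i).mono (Nat.zero_le _))

def isp (N : Matrix S12 S12 F) : Prop := N * J (Fin 6) F + J (Fin 6) F * Nᵀ = 0

theorem mM_wk (x : V36 F) : wk 1 (mM x) := by
  intro i j h
  rcases i with i | i <;> rcases j with j | j <;> simp only [mM, rk] at h ⊢
  · split at h
    · rename_i hh; omega
    · simp at h
  · omega
  · simp at h
  · split at h
    · rename_i hh; omega
    · simp at h

theorem isp_iff (A B D : Matrix (Fin 6) (Fin 6) F) :
    isp (fromBlocks A B 0 D) ↔ Bᵀ = B ∧ D = -Aᵀ := by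
  rw [isp, J, fromBlocks_transpose, fromBlocks_multiply, fromBlocks_multiply, fromBlocks_add, ← fromBlocks_zero, fromBlocks_inj]
  simp only [Matrix.mul_zero, Matrix.mul_one, Matrix.zero_mul, Matrix.one_mul, Matrix.mul_neg, Matrix.neg_mul,
    zero_add, add_zero, neg_zero, transpose_zero]
  constructor
  · rintro ⟨h1, h2, h3, -⟩
    exact ⟨(add_neg_eq_zero.1 h1).symm, eq_neg_of_add_eq_zero_left h3⟩
  · rintro ⟨h1, rfl⟩
    simp [h1]

def bA (x : V36 F) : Matrix (Fin 6) (Fin 6) F := Matrix.of fun i j => if i < j then x (iA i j) else 0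
def bB (x : V36 F) : Matrix (Fin 6) (Fin 6) F := Matrix.of fun i j => x (iB i j)

theorem mM_blocks (x : V36 F) : mM x = fromBlocks (bA x) (bB x) 0 (-(bA x)ᵀ) := by
  ext i j
  rcases i with i | i <;> rcases j with j | j
  · rfl
  · rfl
  · rfl
  · simp only [mM, fromBlocks_apply₂₂, bA, Matrix.neg_apply, Matrix.transpose_apply, Matrix.of_apply]
    split <;> simp

theorem mM_isp (x : V36 F) : isp (mM x) := by
  rw [mM_blocks, isp_iff]
  exact ⟨by ext i j; simp [bB, iB_symm i j], rfl⟩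

theorem mM_surj (N : Matrix S12 S12 F) (h1 : wk 1 N) (h2 : isp N) : ∃ x : V36 F, mM x = N := by
  have hz : N.toBlocks₂₁ = 0 := by
    ext i j
    by_contra h
    have := h1 (.inr i) (.inl j) h
    simp only [rk] at this; omega
  rw [← fromBlocks_toBlocks N, hz, isp_iff] at h2
  have hx : ∃ x : V36 F, (∀ i j, i < j → x (iA i j) = N (.inl i) (.inl j)) ∧
      ∀ i j, i ≤ j → x (iB i j) = N (.inl i) (.inr j) :=
    ⟨fun a => match pos a with
      | some (i, j, true) => N (.inl i) (.inl j)
      | some (i, j, false) => N (.inl i) (.inr j)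
      | none => 0, fun i j h => by dsimp only; simp only [pos_A i j h], fun i j h => by dsimp only; simp only [pos_B i j h]⟩
  obtain ⟨x, hA, hB⟩ := hx
  have e1 : bA x = N.toBlocks₁₁ := by
    ext i j
    simp only [bA, toBlocks₁₁, Matrix.of_apply]
    split
    · rename_i h; exact hA i j h
    · rename_i h; by_contra hc
      have := h1 (.inl i) (.inl j) (fun h => hc h.symm)
      simp only [rk] at this; omega
  have e2 : bB x = N.toBlocks₁₂ := by
    ext i j
    simp only [bB, toBlocks₁₂, Matrix.of_apply]
    rcases le_total i j with h | h
    · exact hB i j h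
    · rw [iB_symm i j, hB j i h]
      exact congrFun (congrFun h2.1 i) j
  refine ⟨x, ?_⟩
  rw [mM_blocks, e1, e2, ← h2.2, ← hz, fromBlocks_toBlocks]

noncomputable def cay (N : Matrix S12 S12 F) : Matrix S12 S12 F := (2 : F) • (1 - N)⁻¹ - 1

theorem cay_wk {N : Matrix S12 S12 F} (h : wk 1 N) : wk 1 (cay N - 1) := by
  have : cay N - 1 = (2 : F) • ((1 - N)⁻¹ - 1) := by
    rw [cay, smul_sub, two_smul F (1 : Matrix S12 S12 F)]; abel
  rw [this]; exact (wk_inv h).2.2.smul _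

theorem cay_inj (h2 : (2 : F) ≠ 0) {N M : Matrix S12 S12 F} (hN : wk 1 N) (hM : wk 1 M) (h : cay N = cay M) : N = M := by
  have h' : (1 - N)⁻¹ = (1 - M)⁻¹ := smul_right_injective _ h2 (sub_left_injective h)
  have : 1 - N = 1 - M := by
    calc 1 - N = (1 - N) * ((1 - M)⁻¹ * (1 - M)) := by rw [(wk_inv hM).2.1, mul_one]
      _ = 1 - M := by rw [← h', ← mul_assoc, (wk_inv hN).1, one_mul]
  exact sub_right_injective this

theorem cay_surj (h2 : (2 : F) ≠ 0) {g : Matrix S12 S12 F} (hg : wk 1 (g - 1)) : ∃ N, wk 1 N ∧ cay N = g := by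
  have hn : wk 1 (-((2 : F)⁻¹ • (g - 1))) := (hg.smul _).neg
  obtain ⟨e1, e2, e3⟩ := wk_inv hn
  refine ⟨-((1 - -((2 : F)⁻¹ • (g - 1)))⁻¹ - 1), e3.neg, ?_⟩
  rw [cay]
  have : (1 : Matrix S12 S12 F) - -((1 - -((2 : F)⁻¹ • (g - 1)))⁻¹ - 1) = (1 - -((2 : F)⁻¹ • (g - 1)))⁻¹ := by abel
  rw [this, Matrix.inv_eq_right_inv e2, sub_neg_eq_add, smul_add, smul_smul, mul_inv_cancel₀ h2, one_smul, two_smul]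
  abel

theorem cay_comm (h2 : (2 : F) ≠ 0) {N M : Matrix S12 S12 F} (hN : wk 1 N) (hM : wk 1 M) :
    Commute (cay N) (cay M) ↔ Commute N M := by
  constructor
  · intro h
    have h1 : Commute (1 - N)⁻¹ (1 - M)⁻¹ := by
      have e : ∀ N : Matrix S12 S12 F, (1 - N)⁻¹ = (2 : F)⁻¹ • (cay N + 1) := by
        intro N
        rw [cay, sub_add_cancel, smul_smul, inv_mul_cancel₀ h2, one_smul]
      rw [e, e]
      exact (((h.add_left (Commute.one_left _)).add_right (Commute.one_right _)).smul_left _).smul_right _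
    have h3 : Commute (1 - N) (1 - M) := by
      have := congrArg (·⁻¹) h1.eq
      simp only [Matrix.mul_inv_rev] at this
      rw [Matrix.inv_eq_right_inv (wk_inv hN).2.1, Matrix.inv_eq_right_inv (wk_inv hM).2.1] at this
      exact this.symm
    have e : ∀ N : Matrix S12 S12 F, N = 1 - (1 - N) := fun N => by abel
    rw [e N, e M]
    exact ((Commute.one_left _).sub_left (((Commute.one_right _).sub_right h3)))
  · intro h
    have h3 : Commute (1 - N) (1 - M) :=
      ((Commute.one_left _).sub_left (((Commute.one_right _).sub_right h)))
    have h1 : Commute (1 - N)⁻¹ (1 - M)⁻¹ := by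
      have := congrArg (·⁻¹) h3.eq
      simp only [Matrix.mul_inv_rev] at this
      exact this.symm
    rw [cay, cay]
    exact (((h1.smul_left _).smul_right _).sub_right (Commute.one_right _)).sub_left
      ((Commute.one_left _).sub_right (Commute.one_right _))

theorem cay_sp (h2 : (2 : F) ≠ 0) {N : Matrix S12 S12 F} (hN : wk 1 N) :
    cay N ∈ symplecticGroup (Fin 6) F ↔ isp N := by
  obtain ⟨e1, e2, -⟩ := wk_inv hN
  have hc : (1 - N) * cay N = 1 + N := by
    rw [cay, mul_sub, Matrix.mul_smul, e1, two_smul, mul_one]; abel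
  have hd : (1 - N) * (cay N * J (Fin 6) F * (cay N)ᵀ) * (1 - N)ᵀ = (1 + N) * J (Fin 6) F * (1 + N)ᵀ := by
    rw [← hc, Matrix.transpose_mul]; simp only [mul_assoc]
  have he : (1 + N) * J (Fin 6) F * (1 + N)ᵀ - (1 - N) * J (Fin 6) F * (1 - N)ᵀ =
      (2 : F) • (N * J (Fin 6) F + J (Fin 6) F * Nᵀ) := by
    rw [two_smul, Matrix.transpose_add, Matrix.transpose_sub, Matrix.transpose_one]; noncomm_ring
  have e1' : (1 - N)ᵀ * ((1 - N)⁻¹)ᵀ = 1 := by rw [← Matrix.transpose_mul, e2, Matrix.transpose_one]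
  rw [SymplecticGroup.mem_iff, isp]
  constructor
  · intro h
    rw [← hd, h, sub_self] at he
    exact (smul_eq_zero.1 he.symm).resolve_left h2
  · intro h
    rw [h, smul_zero, ← hd, sub_eq_zero] at he
    calc cay N * J (Fin 6) F * (cay N)ᵀ
        = (1 - N)⁻¹ * ((1 - N) * (cay N * J (Fin 6) F * (cay N)ᵀ) * (1 - N)ᵀ) * ((1 - N)⁻¹)ᵀ := by
          simp only [mul_assoc, e1', mul_one]; simp only [← mul_assoc, e2, one_mul]
      _ = J (Fin 6) F := by
          rw [he]; simp only [mul_assoc, e1', mul_one]; simp only [← mul_assoc, e2, one_mul]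

/-- the maximal unipotent subgroup -/
def uU (F : Type*) [Field F] [Fintype F] : Subgroup (symplecticGroup (Fin 6) F) where
  carrier := {g | wk 1 ((g : Matrix S12 S12 F) - 1)}
  one_mem' := by
    change wk 1 ((1 : Matrix S12 S12 F) - 1)
    rw [sub_self]; exact wk_zero 1
  mul_mem' {g h} hg hh := by
    change wk 1 ((g : Matrix S12 S12 F) * (h : Matrix S12 S12 F) - 1)
    have : (g : Matrix S12 S12 F) * (h : Matrix S12 S12 F) - 1 =
        ((g : Matrix S12 S12 F) - 1) * ((h : Matrix S12 S12 F) - 1) + ((g : Matrix S12 S12 F) - 1) + ((h : Matrix S12 S12 F) - 1) := by noncomm_ring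
    rw [this]
    exact (((hg.mul hh).mono (by norm_num)).add hg).add hh
  inv_mem' {g} hg := by
    change wk 1 (((g⁻¹ : symplecticGroup (Fin 6) F) : Matrix S12 S12 F) - 1)
    have hn : wk 1 (-((g : Matrix S12 S12 F) - 1)) := wk.neg hg
    have := (wk_inv hn).2.2
    rw [SymplecticGroup.coe_inv']
    convert this using 3
    abel

theorem mem_uU {g : symplecticGroup (Fin 6) F} : g ∈ uU F ↔ wk 1 ((g : Matrix S12 S12 F) - 1) := Iff.rfl

noncomputable def cE (h2 : (2 : F) ≠ 0) : V36 F ≃ uU F :=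
  Equiv.ofBijective (fun x => ⟨⟨cay (mM x), (cay_sp h2 (mM_wk x)).2 (mM_isp x)⟩, cay_wk (mM_wk x)⟩) (by
    constructor
    · intro x y h
      exact mM_inj (cay_inj h2 (mM_wk x) (mM_wk y) (congrArg (fun g : uU F => ((g : symplecticGroup (Fin 6) F) : Matrix S12 S12 F)) h))
    · rintro ⟨⟨g, hg⟩, hu⟩
      obtain ⟨N, h1, rfl⟩ := cay_surj h2 hu
      obtain ⟨x, rfl⟩ := mM_surj N h1 ((cay_sp h2 h1).1 hg)
      exact ⟨x, rfl⟩)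

theorem cE_comm (h2 : (2 : F) ≠ 0) (x y : V36 F) : Commute (cE h2 x) (cE h2 y) ↔ Commute (mM x) (mM y) := by
  rw [← cay_comm h2 (mM_wk x) (mM_wk y)]
  constructor
  · intro h
    exact congrArg (fun g : uU F => ((g : symplecticGroup (Fin 6) F) : Matrix S12 S12 F)) h.eq
  · intro h
    exact Subtype.ext (Subtype.ext h.eq)

theorem card_uU (h2 : (2 : F) ≠ 0) : Nat.card (uU F) = Nat.card F ^ 36 := by
  rw [← Nat.card_congr (cE h2), Nat.card_pi]; simp
end

set_option linter.unusedSectionVars false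
section
open Matrix
variable {F : Type*} [Field F] [Fintype F]

theorem rk_inj : ∀ i j : S12, rk i = rk j → i = j := by decide +kernel
theorem rk_ex : ∀ m < 12, ∃ j : S12, rk j = m := by decide +kernel

theorem reg_elt (h2 : (2 : F) ≠ 0) : ∃ g ∈ uU F, ∀ i j : S12, rk j = rk i + 1 →
    ((g : Matrix S12 S12 F) - 1) i j ≠ 0 := by
  set N : Matrix S12 S12 F := mM (fun _ => 1) with hN
  refine ⟨cE h2 (fun _ => 1), (cE h2 (fun _ => 1)).2, fun i j hij => ?_⟩
  have hw : wk 1 N := mM_wk _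
  obtain ⟨e1, e2, e3⟩ := wk_inv hw
  change (cay N - 1) i j ≠ 0
  have : cay N - 1 = (2 : F) • (N + N * ((1 - N)⁻¹ - 1)) := by
    have h : N + N * ((1 - N)⁻¹ - 1) = (1 - N)⁻¹ - 1 := by
      rw [sub_mul, one_mul] at e1
      rw [mul_sub, mul_one, add_sub_cancel, eq_sub_iff_add_eq]
      exact ((sub_eq_iff_eq_add.1 e1).trans (add_comm _ _)).symm
    rw [h, cay, smul_sub, two_smul F (1 : Matrix S12 S12 F)]; abel
  have h0 : (N * ((1 - N)⁻¹ - 1)) i j = 0 := by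
    by_contra h
    have := (hw.mul e3) i j h
    omega
  rw [this, Matrix.smul_apply, Matrix.add_apply, h0, add_zero, smul_eq_mul]
  refine mul_ne_zero h2 ?_
  rw [hN]
  rcases i with i | i <;> rcases j with j | j <;> simp only [mM, rk] at hij ⊢
  · rw [if_pos (by omega)]; exact one_ne_zero
  · exact one_ne_zero
  · omega
  · rw [if_pos (by omega)]; exact neg_ne_zero.2 one_ne_zero

def wS (F : Type*) [Field F] (m : ℕ) : Submodule F (S12 → F) where
  carrier := {w | ∀ i, rk i < m → w i = 0}
  add_mem' ha hb i hi := by simp [ha i hi, hb i hi]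
  zero_mem' i hi := rfl
  smul_mem' c x hx i hi := by simp [hx i hi]

def tr (m : ℕ) (w : S12 → F) : wS F m := ⟨fun i => if rk i < m then 0 else w i, fun i hi => by simp [hi]⟩

/-- condition that the first `m` columns are unitriangular -/
def colU (m : ℕ) (g : Matrix S12 S12 F) : Prop := ∀ i j, rk j < m → (g - 1) i j ≠ 0 → rk i < rk j

theorem tr_mul {m : ℕ} {g : Matrix S12 S12 F} (hg : colU m g) (v : S12 → F) :
    tr m (g *ᵥ (tr m v : wS F m).1) = tr m (g *ᵥ v) := by
  apply Subtype.ext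
  funext i
  simp only [tr]
  split
  · rfl
  · rename_i hi
    simp only [Matrix.mulVec, dotProduct]
    refine Finset.sum_congr rfl fun j _ => ?_
    split
    · rename_i hj
      have h0 : g i j = 0 := by
        by_contra hc
        have hij : i ≠ j := by rintro rfl; exact hi hj
        have := hg i j hj (by simpa [Matrix.one_apply, hij] using hc)
        omega
      rw [h0]; simp
    · rfl

theorem tr_self {m : ℕ} (w : wS F m) : tr m w.1 = w := by
  apply Subtype.ext
  funext i
  simp only [tr]
  split
  · rename_i hi; exact (w.2 i hi).symm
  · rfl

theorem colU_step {p : ℕ} [Fact p.Prime] (hp : p ∣ Nat.card F) (h2 : (2 : F) ≠ 0)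
    (Q : Subgroup (symplecticGroup (Fin 6) F)) (hQ : IsPGroup p Q) (hU : uU F ≤ Q)
    (m : ℕ) (hm : m < 12) (ih : ∀ g ∈ Q, colU m (g : Matrix S12 S12 F)) :
    ∀ g ∈ Q, colU (m + 1) (g : Matrix S12 S12 F) := by
  let _ : MulAction Q (wS F m) :=
    { smul := fun g w => tr m (((g : symplecticGroup (Fin 6) F) : Matrix S12 S12 F) *ᵥ w.1)
      one_smul := fun w => by
        change tr m ((1 : Matrix S12 S12 F) *ᵥ w.1) = w
        rw [Matrix.one_mulVec, tr_self]
      mul_smul := fun g h w => by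
        change tr m ((((g : symplecticGroup (Fin 6) F) : Matrix S12 S12 F) *
          ((h : symplecticGroup (Fin 6) F) : Matrix S12 S12 F)) *ᵥ w.1) = tr m (_ *ᵥ (tr m _ : wS F m).1)
        rw [tr_mul (ih _ g.2), Matrix.mulVec_mulVec] }
  have hs : ∀ (g : Q) (w : wS F m), g • w = tr m (((g : symplecticGroup (Fin 6) F) : Matrix S12 S12 F) *ᵥ w.1) :=
    fun _ _ => rfl
  obtain ⟨j0, hj0⟩ := rk_ex m hm
  have hd : p ∣ Nat.card (wS F m) := by
    rw [Module.natCard_eq_pow_finrank (K := F)]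
    refine dvd_pow hp ?_
    have : Nontrivial (wS F m) := by
      refine ⟨⟨⟨Pi.single j0 1, ?_⟩, 0, ?_⟩⟩
      · intro i hi
        have : i ≠ j0 := by rintro rfl; omega
        simp [this]
      · intro h
        have := congrFun (congrArg Subtype.val h) j0
        simp at this
    exact Module.finrank_pos.ne'
  have h0 : (0 : wS F m) ∈ MulAction.fixedPoints Q (wS F m) := by
    intro g
    rw [hs]
    apply Subtype.ext
    funext i
    simp [tr]
  obtain ⟨w, hw, hne⟩ := hQ.exists_fixed_point_of_prime_dvd_card_of_fixed_point _ hd h0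
  have hfix : ∀ g ∈ Q, ∀ i, m ≤ rk i → (((g : symplecticGroup (Fin 6) F) : Matrix S12 S12 F) - 1) i ⬝ᵥ w.1 = 0 := by
    intro g hg i hi
    have h := congrFun (congrArg Subtype.val (hw ⟨g, hg⟩)) i
    rw [hs] at h
    simp only [tr, if_neg (not_lt.2 hi)] at h
    change ((g : Matrix S12 S12 F) - 1).mulVec w.1 i = 0
    rw [Matrix.sub_mulVec, Matrix.one_mulVec, Pi.sub_apply, h, sub_self]
  obtain ⟨u, hu, hreg⟩ := reg_elt h2
  -- vanishing above m
  have hv : ∀ n i, rk i + n = 12 → m < rk i → w.1 i = 0 := by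
    intro n
    induction n using Nat.strong_induction_on with
    | _ n ihn =>
      intro i hi hmi
      obtain ⟨k, hk⟩ := rk_ex (rk i - 1) (by have := rk_lt i; omega)
      have h := hfix u (hU hu) k (by omega)
      rw [dotProduct, Finset.sum_eq_single i] at h
      · exact (mul_eq_zero.1 h).resolve_left (hreg k i (by omega))
      · intro j _ hj
        by_cases hc : ((u : Matrix S12 S12 F) - 1) k j = 0
        · rw [hc, zero_mul]
        have h1 := (mem_uU.1 hu) k j hc
        have h3 : rk j ≠ rk i := fun h => hj (rk_inj _ _ h)
        have h4 := rk_lt j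
        rw [ihn (12 - rk j) (by omega) j (by omega) (by omega), mul_zero]
      · simp
  have hz : ∀ i, i ≠ j0 → w.1 i = 0 := by
    intro i hi
    have h3 : rk i ≠ rk j0 := fun h => hi (rk_inj _ _ h)
    have h4 := rk_lt i
    rcases Nat.lt_or_ge (rk i) m with h | h
    · exact w.2 i h
    · exact hv (12 - rk i) i (by omega) (by omega)
  have hj : w.1 j0 ≠ 0 := by
    intro h
    apply hne
    apply Subtype.ext
    funext i
    by_cases hi : i = j0
    · rw [hi, h]; rfl
    · rw [hz i hi]; rfl
  intro g hg i j hjm hij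
  rcases Nat.lt_or_ge (rk j) m with h | h
  · exact ih g hg i j h hij
  · have : j = j0 := rk_inj _ _ (by omega)
    subst this
    by_contra hc
    have h := hfix g hg i (by omega)
    rw [dotProduct, Finset.sum_eq_single j] at h
    · exact hij ((mul_eq_zero.1 h).resolve_right hj)
    · intro k _ hk; rw [hz k hk, mul_zero]
    · simp

theorem uU_max {p : ℕ} [Fact p.Prime] (hp : p ∣ Nat.card F) (h2 : (2 : F) ≠ 0)
    (Q : Subgroup (symplecticGroup (Fin 6) F)) (hQ : IsPGroup p Q) (hU : uU F ≤ Q) : Q = uU F := by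
  have h : ∀ m ≤ 12, ∀ g ∈ Q, colU m (g : Matrix S12 S12 F) := by
    intro m
    induction m with
    | zero => intro _ g _ i j h; omega
    | succ m ih => intro hm; exact colU_step hp h2 Q hQ hU m (by omega) (ih (by omega))
  refine le_antisymm (fun g hg => mem_uU.2 fun i j hij => ?_) hU
  have := h 12 le_rfl g hg i j (rk_lt j) hij
  omega

def ccE {G H : Type*} [Group G] [Group H] (e : G ≃* H) : ConjClasses G ≃ ConjClasses H where
  toFun := ConjClasses.map e.toMonoidHom
  invFun := ConjClasses.map e.symm.toMonoidHom
  left_inv c := by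
    obtain ⟨a, rfl⟩ := ConjClasses.exists_rep c
    exact congrArg ConjClasses.mk (e.symm_apply_apply a)
  right_inv c := by
    obtain ⟨a, rfl⟩ := ConjClasses.exists_rep c
    exact congrArg ConjClasses.mk (e.apply_symm_apply a)
end

theorem card_conjClasses_sylow_sp12 (p q : ℕ) (hp : p.Prime) (hodd : Odd p)
    (hq : ∃ n : ℕ, 0 < n ∧ q = p ^ n)
    (F : Type*) [Field F] [Fintype F] (hF : Fintype.card F = q)
    (P : Sylow p (Matrix.symplecticGroup (Fin 6) F)) (v : ℕ) (hv : v = q - 1) :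
    Nat.card (ConjClasses (P : Subgroup (Matrix.symplecticGroup (Fin 6) F))) =
      v ^ 11 + 15 * v ^ 10 + 112 * v ^ 9 + 547 * v ^ 8 + 1845 * v ^ 7 + 4121 * v ^ 6 + 5701 * v ^ 5 + 4560 * v ^ 4 + 1960 * v ^ 3 + 410 * v ^ 2 + 36 * v + 1 := by
  have : Fact p.Prime := ⟨hp⟩
  obtain ⟨n, hn, rfl⟩ := hq
  have hFc : Nat.card F = p ^ n := by rw [Nat.card_eq_fintype_card, hF]
  have h2 : (2 : F) ≠ 0 := by
    apply Ring.two_ne_zero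
    intro hc
    have := FiniteField.even_card_iff_char_two.1 hc
    rw [hF] at this
    have := (hodd.pow (n := n))
    rw [Nat.odd_iff] at this
    omega
  have hpd : p ∣ Nat.card F := by rw [hFc]; exact dvd_pow_self p hn.ne'
  have hpg : IsPGroup p (uU F) := IsPGroup.of_card (n := n * 36) (by rw [card_uU h2, hFc, pow_mul])
  let S : Sylow p (Matrix.symplecticGroup (Fin 6) F) :=
    { uU F with
      isPGroup' := hpg
      is_maximal' := fun {Q} hQ hU => uU_max hpd h2 Q hQ hU }
  have e : (P : Subgroup (Matrix.symplecticGroup (Fin 6) F)) ≃* uU F := Sylow.equiv P S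
  rw [Nat.card_congr (ccE e)]
  have h := card_comm_eq_card_conjClasses_mul_card (uU F)
  have hc : Nat.card {p : V36 F × V36 F // Commute (mM p.1) (mM p.2)} =
      Nat.card {p : uU F × uU F // Commute p.1 p.2} := by
    refine Nat.card_congr (Equiv.subtypeEquiv (Equiv.prodCongr (cE h2) (cE h2)) fun p => ?_)
    exact (cE_comm h2 p.1 p.2).symm
  rw [← hc, card_comm_pairs h2, card_uU h2, mul_comm] at h
  have h3 := Nat.eq_of_mul_eq_mul_right (pow_pos Nat.card_pos 36) h
  rw [← h3, hFc, ← hv]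
  simp only [evP]
  ring
end

section
/- Let Φ be an irreducible reduced crystallographic root system of rank r ≥ 3 in a finite-dimensional real vector space, with a fixed base Δ, corresponding set of positive roots Φ⁺, and height function ht (the sum of the coefficients of a positive root when written in the base Δ). Let α, β, γ ∈ Φ⁺ be pairwise distinct, linearly dependent roots with ht γ ≥ max(ht α, ht β). Then at least one of the following holds: (i) β − α ∈ Φ; (ii) γ − β ∈ Φ and γ − α ∈ Φ; (iii) γ − α ∈ Φ and β + γ − α ∉ Φ; (iv) γ − β ∈ Φ and α + γ − β ∉ Φ. -/
open RealInnerProductSpace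

lemma g2_arith (k N : ℝ) (hk : 0 < k) (x y u v : ℤ)
    (hN : k * (2 * x^2 + 6 * x * y + 6 * y^2) < N)
    (hu : 2 * x * k = u * N) (hv : 6 * y * k = v * N) : x = 0 ∧ y = 0 := by
  have hQ : (0:ℝ) ≤ 2 * x^2 + 6 * x * y + 6 * y^2 := by
    nlinarith [sq_nonneg ((x:ℝ) + 3/2 * y), sq_nonneg (y:ℝ)]
  have hNpos : 0 < N := lt_of_le_of_lt (mul_nonneg hk.le hQ) hN
  obtain ⟨T, rfl⟩ : ∃ T, N = k * T := ⟨N / k, by field_simp⟩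
  have hT : 0 < T := by exact pos_of_mul_pos_right hNpos hk.le
  have hQT : 2 * (x:ℝ)^2 + 6 * x * y + 6 * y^2 < T := lt_of_mul_lt_mul_left hN hk.le
  have hu' : 2 * (x:ℝ) = u * T := by
    apply mul_left_cancel₀ hk.ne'; linarith
  have hv' : 6 * (y:ℝ) = v * T := by
    apply mul_left_cancel₀ hk.ne'; linarith
  have key : ∀ (w z : ℤ), (w:ℝ) = z * T → w ≠ 0 → 2 * x^2 + 6 * x * y + 6 * y^2 < |w| := by
    intro w z h hw
    have hz : z ≠ 0 := by
      rintro rfl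
      apply hw
      have : (w:ℝ) = 0 := by simpa using h
      exact_mod_cast this
    have h1 : (1:ℝ) ≤ |(z:ℝ)| := by
      have := Int.one_le_abs hz
      exact_mod_cast this
    have h2 : T ≤ |(w:ℝ)| := by
      rw [h, abs_mul, abs_of_pos hT]; nlinarith
    have h3 : (2 * (x:ℝ)^2 + 6 * x * y + 6 * y^2) < |(w:ℝ)| := lt_of_lt_of_le hQT h2
    exact_mod_cast h3
  have kx : x ≠ 0 → 2 * x^2 + 6 * x * y + 6 * y^2 < |2 * x| := fun h =>
    key (2 * x) u (by push_cast; exact hu') (by omega)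
  have ky : y ≠ 0 → 2 * x^2 + 6 * x * y + 6 * y^2 < |6 * y| := fun h =>
    key (6 * y) v (by push_cast; exact hv') (by omega)
  have bx : -4 < x ∧ x < 4 := by
    by_cases h : x = 0
    · subst h; norm_num
    · have := kx h
      rcases abs_cases (2 * x) with ⟨h1, h2⟩ | ⟨h1, h2⟩ <;> rw [h1] at this <;> constructor <;>
        nlinarith [sq_nonneg (2 * y + x)]
  have bY : -4 < y ∧ y < 4 := by
    by_cases h : y = 0
    · subst h; norm_num
    · have := ky h
      rcases abs_cases (6 * y) with ⟨h1, h2⟩ | ⟨h1, h2⟩ <;> rw [h1] at this <;> constructor <;>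
        nlinarith [sq_nonneg (2 * x + 3 * y)]
  obtain ⟨b1, b2⟩ := bx
  obtain ⟨b3, b4⟩ := bY
  have fin : (x = 0 ∧ y = 0) ∨ (x = 2 ∧ y = -1) ∨ (x = -2 ∧ y = 1) := by
    clear key hu hv hN hu' hv' hQT hQ
    interval_cases x <;> interval_cases y <;> simp_all
  rcases fin with h | ⟨rfl, rfl⟩ | ⟨rfl, rfl⟩
  · exact h
  · exfalso
    push_cast at *
    have h1 : 0 < u := by
      by_contra hh
      have : (u:ℝ) ≤ 0 := by exact_mod_cast not_lt.mp hh
      nlinarith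
    have h2 : u < 2 := by
      by_contra hh
      have : (2:ℝ) ≤ u := by exact_mod_cast not_lt.mp hh
      nlinarith
    obtain rfl : u = 1 := by omega
    have h3 : (2 * v : ℝ) = -3 := by push_cast at *; nlinarith
    have h4 : 2 * v = -3 := by exact_mod_cast h3
    omega
  · exfalso
    push_cast at *
    have h1 : u < 0 := by
      by_contra hh
      have : (0:ℝ) ≤ u := by exact_mod_cast not_lt.mp hh
      nlinarith
    have h2 : -2 < u := by
      by_contra hh
      have : (u:ℝ) ≤ -2 := by exact_mod_cast not_lt.mp hh
      nlinarith
    obtain rfl : u = -1 := by omega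
    have h3 : (2 * v : ℝ) = 3 := by push_cast at *; nlinarith
    have h4 : 2 * v = 3 := by exact_mod_cast h3
    omega

section rs
variable {V : Type*} [NormedAddCommGroup V] [InnerProductSpace ℝ V]

lemma rs_pos {Φ : Set V} (h0 : (0 : V) ∉ Φ) {x : V} (hx : x ∈ Φ) : 0 < ⟪x, x⟫ := by
  apply real_inner_self_pos.mpr
  rintro rfl
  exact h0 hx

lemma rs_neg {Φ : Set V} (h0 : (0 : V) ∉ Φ)
    (hrefl : ∀ α ∈ Φ, ∀ β ∈ Φ, β - (2 * ⟪β, α⟫ / ⟪α, α⟫) • α ∈ Φ)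
    {x : V} (hx : x ∈ Φ) : -x ∈ Φ := by
  have := hrefl x hx x hx
  rw [mul_div_assoc, div_self (rs_pos h0 hx).ne'] at this
  convert this using 1
  module

lemma rs_cartan {Φ : Set V} (h0 : (0 : V) ∉ Φ)
    (hcrys : ∀ α ∈ Φ, ∀ β ∈ Φ, ∃ m : ℤ, 2 * ⟪β, α⟫ / ⟪α, α⟫ = (m : ℝ))
    {x y : V} (hx : x ∈ Φ) (hy : y ∈ Φ) :
    ∃ m n : ℤ, 2 * ⟪x, y⟫ / ⟪x, x⟫ = m ∧ 2 * ⟪x, y⟫ / ⟪y, y⟫ = n ∧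
      2 * ⟪x, y⟫ = m * ⟪x, x⟫ ∧ 2 * ⟪x, y⟫ = n * ⟪y, y⟫ ∧ 0 ≤ m * n ∧ m * n ≤ 4 := by
  obtain ⟨m, hm⟩ := hcrys x hx y hy
  obtain ⟨n, hn⟩ := hcrys y hy x hx
  rw [real_inner_comm] at hm
  have px := rs_pos h0 hx
  have py := rs_pos h0 hy
  have hm' := (div_eq_iff px.ne').mp hm
  have hn' := (div_eq_iff py.ne').mp hn
  have hp : ((m:ℝ) * n) * (⟪x, x⟫ * ⟪y, y⟫) = 4 * (⟪x, y⟫ * ⟪x, y⟫) := by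
    linear_combination (-2 * ⟪x, y⟫) * hn' - (n * ⟪y, y⟫) * hm'
  have hcs := real_inner_mul_inner_self_le x y
  have pp := mul_pos px py
  refine ⟨m, n, hm, hn, hm', hn', ?_, ?_⟩
  · have : (0:ℝ) ≤ m * n := by
      by_contra hh
      nlinarith [mul_self_nonneg ⟪x, y⟫]
    exact_mod_cast this
  · have : (m:ℝ) * n ≤ 4 := by
      by_contra hh
      nlinarith [mul_self_nonneg ⟪x, y⟫]
    exact_mod_cast this

lemma rs_sub {Φ : Set V} (h0 : (0 : V) ∉ Φ)
    (hcrys : ∀ α ∈ Φ, ∀ β ∈ Φ, ∃ m : ℤ, 2 * ⟪β, α⟫ / ⟪α, α⟫ = (m : ℝ))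
    (hrefl : ∀ α ∈ Φ, ∀ β ∈ Φ, β - (2 * ⟪β, α⟫ / ⟪α, α⟫) • α ∈ Φ)
    {x y : V} (hx : x ∈ Φ) (hy : y ∈ Φ) (hxy : x ≠ y) (hpos : 0 < ⟪x, y⟫) : x - y ∈ Φ := by
  obtain ⟨m, n, hm, hn, hm', hn', h1, h2⟩ := rs_cartan h0 hcrys hx hy
  have px := rs_pos h0 hx
  have py := rs_pos h0 hy
  have mpos : 0 < m := by
    by_contra hh
    have : (m:ℝ) ≤ 0 := by exact_mod_cast not_lt.mp hh
    nlinarith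
  have npos : 0 < n := by
    by_contra hh
    have : (n:ℝ) ≤ 0 := by exact_mod_cast not_lt.mp hh
    nlinarith
  by_cases hn1 : n = 1
  · have := hrefl y hy x hx
    rw [hn, hn1] at this
    simpa using this
  by_cases hm1 : m = 1
  · have := hrefl x hx y hy
    rw [real_inner_comm, hm, hm1] at this
    have := rs_neg h0 hrefl this
    simpa using this
  exfalso
  have hm2 : 2 ≤ m := by omega
  have hn2 : 2 ≤ n := by omega
  obtain rfl : m = 2 := by nlinarith
  obtain rfl : n = 2 := by omega
  push_cast at hm' hn'
  apply hxy
  rw [← sub_eq_zero, ← inner_self_eq_zero (𝕜 := ℝ)]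
  rw [inner_sub_left, inner_sub_right, inner_sub_right, real_inner_comm x y]
  linarith

/-- independence gives product at most three -/
lemma rs_cartan_lt {Φ : Set V} (h0 : (0 : V) ∉ Φ)
    {x y : V} (hx : x ∈ Φ) (m n : ℤ)
    (hm : 2 * ⟪x, y⟫ = m * ⟪x, x⟫) (hn : 2 * ⟪x, y⟫ = n * ⟪y, y⟫)
    (hind : ∀ c : ℝ, y ≠ c • x) : m * n ≠ 4 := by
  intro h
  have h' : (m:ℝ) * n = 4 := by exact_mod_cast h
  have px := rs_pos h0 hx
  apply hind (⟪x, y⟫ / ⟪x, x⟫)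
  rw [← sub_eq_zero, ← inner_self_eq_zero (𝕜 := ℝ)]
  simp only [inner_sub_left, inner_sub_right, inner_smul_left, inner_smul_right,
    real_inner_comm x y]
  have e : ⟪x, y⟫ * ⟪x, y⟫ = ⟪x, x⟫ * ⟪y, y⟫ := by
    linear_combination (1/2 * ⟪x, y⟫) * hn + (n * ⟪y, y⟫ / 4) * hm
      + (⟪x, x⟫ * ⟪y, y⟫ / 4) * h'
  simp only [conj_trivial]
  field_simp
  linarith

lemma g2_orth {Φ : Set V} (h0 : (0 : V) ∉ Φ)
    (hcrys : ∀ α ∈ Φ, ∀ β ∈ Φ, ∃ m : ℤ, 2 * ⟪β, α⟫ / ⟪α, α⟫ = (m : ℝ))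
    {a b d : V} (ha : a ∈ Φ) (hb : b ∈ Φ) (hd : d ∈ Φ)
    (hab : 2 * ⟪a, b⟫ = -3 * ⟪a, a⟫) (hbb : ⟪b, b⟫ = 3 * ⟪a, a⟫)
    (hind : ∀ p q : ℝ, d ≠ p • a + q • b) : ⟪d, a⟫ = 0 ∧ ⟪d, b⟫ = 0 := by
  obtain ⟨u, x, -, -, hu, hx, -, -⟩ := rs_cartan h0 hcrys hd ha
  obtain ⟨v, y, -, -, hv, hy, -, -⟩ := rs_cartan h0 hcrys hd hb
  have pa := rs_pos h0 ha
  have hw : 0 < ⟪d - ((2 * x + 3 * y : ℝ) • a + (x + 2 * y : ℝ) • b),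
      d - ((2 * x + 3 * y : ℝ) • a + (x + 2 * y : ℝ) • b)⟫ := by
    apply real_inner_self_pos.mpr
    rw [sub_ne_zero]
    exact hind _ _
  simp only [inner_sub_left, inner_sub_right, inner_add_left, inner_add_right, inner_smul_left,
    inner_smul_right, conj_trivial] at hw
  have e1 : ⟪a, b⟫ = -3/2 * ⟪a, a⟫ := by linarith
  have e2 : ⟪d, a⟫ = x / 2 * ⟪a, a⟫ := by linarith
  have e3 : ⟪d, b⟫ = 3 * y / 2 * ⟪a, a⟫ := by rw [hbb] at hy; linarith
  have e4 : ⟪b, a⟫ = -3/2 * ⟪a, a⟫ := by rw [real_inner_comm]; exact e1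
  have e5 : ⟪a, d⟫ = x / 2 * ⟪a, a⟫ := by rw [real_inner_comm]; exact e2
  have e6 : ⟪b, d⟫ = 3 * y / 2 * ⟪a, a⟫ := by rw [real_inner_comm]; exact e3
  simp only [e1, e2, e3, e4, e5, e6, hbb] at hw
  have := g2_arith (⟪a, a⟫ / 2) ⟪d, d⟫ (by positivity) x y u v (by nlinarith)
    (by rw [e2] at hu; linarith) (by rw [e3] at hv; linarith)
  rw [e2, e3, this.1, this.2]
  simp

lemma no_three {Φ : Set V} [FiniteDimensional ℝ V] (h0 : (0 : V) ∉ Φ)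
    (hspan : Submodule.span ℝ Φ = ⊤)
    (hcrys : ∀ α ∈ Φ, ∀ β ∈ Φ, ∃ m : ℤ, 2 * ⟪β, α⟫ / ⟪α, α⟫ = (m : ℝ))
    (hirr : ¬ ∃ Φ₁ Φ₂ : Set V, Φ₁.Nonempty ∧ Φ₂.Nonempty ∧ Φ₁ ∪ Φ₂ = Φ ∧
      Disjoint Φ₁ Φ₂ ∧ ∀ x ∈ Φ₁, ∀ y ∈ Φ₂, ⟪x, y⟫ = 0)
    (hrank : 3 ≤ Module.finrank ℝ V)
    {a b : V} (ha : a ∈ Φ) (hb : b ∈ Φ)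
    (hab : 2 * ⟪a, b⟫ = -3 * ⟪a, a⟫) (hbb : ⟪b, b⟫ = 3 * ⟪a, a⟫) : False := by
  classical
  set W := Submodule.span ℝ ({a, b} : Set V) with hW
  apply hirr
  refine ⟨Φ ∩ W, Φ \ W, ⟨a, ha, Submodule.subset_span (by simp)⟩, ?_, Set.inter_union_sdiff _ _,
    Set.disjoint_sdiff_inter.symm, ?_⟩
  · by_contra hne
    rw [Set.not_nonempty_iff_eq_empty, Set.sdiff_eq_empty] at hne
    have h1 : W = ⊤ := by
      rw [eq_top_iff, ← hspan]
      exact Submodule.span_le.mpr hne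
    have h2 : Module.finrank ℝ W ≤ 2 := by
      have := finrank_span_finset_le_card (R := ℝ) ({a, b} : Finset V)
      simp only [Finset.coe_insert, Finset.coe_singleton] at this
      exact this.trans Finset.card_le_two
    rw [h1, finrank_top] at h2
    omega
  · rintro x ⟨-, hx⟩ d ⟨hd, hdW⟩
    have := g2_orth h0 hcrys ha hb hd hab hbb (by
      intro p q h
      exact hdW (Submodule.mem_span_pair.mpr ⟨p, q, h.symm⟩))
    obtain ⟨p, q, rfl⟩ := Submodule.mem_span_pair.mp hx
    rw [real_inner_comm]
    simp [inner_add_right, inner_smul_right, this.1, this.2]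

lemma rs_cartan_le_two {Φ : Set V} [FiniteDimensional ℝ V] (h0 : (0 : V) ∉ Φ)
    (hspan : Submodule.span ℝ Φ = ⊤)
    (hcrys : ∀ α ∈ Φ, ∀ β ∈ Φ, ∃ m : ℤ, 2 * ⟪β, α⟫ / ⟪α, α⟫ = (m : ℝ))
    (hrefl : ∀ α ∈ Φ, ∀ β ∈ Φ, β - (2 * ⟪β, α⟫ / ⟪α, α⟫) • α ∈ Φ)
    (hirr : ¬ ∃ Φ₁ Φ₂ : Set V, Φ₁.Nonempty ∧ Φ₂.Nonempty ∧ Φ₁ ∪ Φ₂ = Φ ∧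
      Disjoint Φ₁ Φ₂ ∧ ∀ x ∈ Φ₁, ∀ y ∈ Φ₂, ⟪x, y⟫ = 0)
    (hrank : 3 ≤ Module.finrank ℝ V)
    {x y : V} (hx : x ∈ Φ) (hy : y ∈ Φ) (hind : ∀ c : ℝ, y ≠ c • x) :
    ∃ m n : ℤ, 2 * ⟪x, y⟫ = m * ⟪x, x⟫ ∧ 2 * ⟪x, y⟫ = n * ⟪y, y⟫ ∧
      0 ≤ m * n ∧ m * n ≤ 2 := by
  obtain ⟨m, n, -, -, hm, hn, h1, h2⟩ := rs_cartan h0 hcrys hx hy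
  have h4 := rs_cartan_lt h0 hx m n hm hn hind
  have h3 : m * n ≠ 3 := by
    intro h
    have hmd : m = 1 ∨ m = 3 ∨ m = -1 ∨ m = -3 := by
      have h5 : m ∣ 3 := ⟨n, h.symm⟩
      have h6 : m ≤ 3 := Int.le_of_dvd (by norm_num) h5
      have h7 : -m ≤ 3 := Int.le_of_dvd (by norm_num) (by simpa using h5)
      have h8 : -3 ≤ m := by omega
      interval_cases m <;> omega
    have nt := fun {a b : V} => @no_three V _ _ Φ _ h0 hspan hcrys hirr hrank a b
    have hnx := rs_neg h0 hrefl hx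
    have hny := rs_neg h0 hrefl hy
    rcases hmd with rfl | rfl | rfl | rfl
    · obtain rfl : n = 3 := by omega
      push_cast at hm hn
      refine nt hy hnx ?_ ?_
      · rw [inner_neg_right, real_inner_comm]; linarith
      · rw [inner_neg_neg]; linarith
    · obtain rfl : n = 1 := by omega
      push_cast at hm hn
      refine nt hx hny ?_ ?_
      · rw [inner_neg_right]; linarith
      · rw [inner_neg_neg]; linarith
    · obtain rfl : n = -3 := by omega
      push_cast at hm hn
      refine nt hy hx ?_ ?_
      · rw [real_inner_comm]; linarith
      · linarith
    · obtain rfl : n = -1 := by omega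
      push_cast at hm hn
      refine nt hx hy ?_ ?_
      · linarith
      · linarith
  exact ⟨m, n, hm, hn, h1, by omega⟩

/-- Three pairwise non-acute dependent vectors cannot lie in an open half plane. -/
lemma obtuse_false (f : V →ₗ[ℝ] ℝ) {α β γ : V} (fa : 0 < f α) (fb : 0 < f β) (fc : 0 < f γ)
    (p q : ℝ) (h : γ = p • α + q • β)
    (s : ⟪α, β⟫ ≤ 0) (t : ⟪β, γ⟫ ≤ 0) (u : ⟪α, γ⟫ ≤ 0) : False := by
  have hf : f γ = p * f α + q * f β := by rw [h]; simp
  rcases le_or_gt 0 p with hp | hp <;> rcases le_or_gt 0 q with hq | hq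
  · have : ⟪γ, γ⟫ = p * ⟪α, γ⟫ + q * ⟪β, γ⟫ := by
      nth_rewrite 1 [h]; simp [inner_add_left, inner_smul_left]
    have h0 : 0 < ⟪γ, γ⟫ := by
      apply real_inner_self_pos.mpr
      rintro rfl; simp at fc
    nlinarith
  · have e : γ + (-q) • β = p • α := by rw [h]; module
    have h2 : ⟪γ + (-q) • β, γ + (-q) • β⟫ = p * (⟪α, γ⟫ + (-q) * ⟪α, β⟫) := by
      nth_rewrite 1 [e]; simp [inner_add_right, inner_smul_left, inner_smul_right]; ring
    have h3 : 0 < ⟪γ + (-q) • β, γ + (-q) • β⟫ := by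
      apply real_inner_self_pos.mpr
      intro h
      have : f (γ + (-q) • β) = 0 := by rw [h]; simp
      simp at this
      nlinarith
    rw [h2] at h3
    have : ⟪α, γ⟫ + (-q) * ⟪α, β⟫ ≤ 0 := by nlinarith
    nlinarith
  · have e : γ + (-p) • α = q • β := by rw [h]; module
    have h2 : ⟪γ + (-p) • α, γ + (-p) • α⟫ = q * (⟪β, γ⟫ + (-p) * ⟪α, β⟫) := by
      nth_rewrite 1 [e]
      simp [inner_add_right, inner_smul_left, inner_smul_right, real_inner_comm]; ring
    have h3 : 0 < ⟪γ + (-p) • α, γ + (-p) • α⟫ := by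
      apply real_inner_self_pos.mpr
      intro h
      have : f (γ + (-p) • α) = 0 := by rw [h]; simp
      simp at this
      nlinarith
    rw [h2] at h3
    have : ⟪β, γ⟫ + (-p) * ⟪α, β⟫ ≤ 0 := by nlinarith
    nlinarith
  · nlinarith

lemma int_cases (m1 m2 n1 n2 k1 k2 : ℤ) (hm : 0 ≤ m1 * m2) (hm' : m1 * m2 ≤ 2)
    (hn : 0 ≤ n1 * n2) (hn' : n1 * n2 ≤ 2) (hk' : k1 * k2 ≤ 2)
    (sm1 : m1 ≤ 0) (sn1 : n1 ≤ 0) (sk1 : 0 < k1)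
    (sm2 : m2 ≤ 0) (sn2 : n2 ≤ 0) (sk2 : 0 < k2)
    (z : m1 = 0 ↔ m2 = 0) (z' : n1 = 0 ↔ n2 = 0)
    (g : n1 * n2 + k1 * k2 + m1 * m2 = 4 + m2 * n2 * k1) 
    (g' : m2 * n2 * k1 = m1 * n1 * k2) :
    (m1 = 0 ∧ n1 * n2 = 2 ∧ k1 * k2 = 2) ∨ (n1 = 0 ∧ m1 * m2 = 2 ∧ k1 * k2 = 2) := by
  have a1 : k1 ≤ 2 := by nlinarith
  have a2 : k2 ≤ 2 := by nlinarith
  have key : ∀ a b : ℤ, a ≤ 0 → b ≤ 0 → (a = 0 ↔ b = 0) → a * b ≤ 2 → -2 ≤ a ∧ -2 ≤ b := by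
    intro a b ha hb hz h
    by_cases h0 : a = 0
    · have := hz.mp h0; omega
    · have h1 : b ≠ 0 := fun h => h0 (hz.mpr h)
      have : a ≤ -1 := by omega
      have : b ≤ -1 := by omega
      constructor <;> nlinarith
  obtain ⟨b1, b2⟩ := key m1 m2 sm1 sm2 z hm'
  obtain ⟨c1, c2⟩ := key n1 n2 sn1 sn2 z' hn'
  clear key
  have hm4 : (m1 = 0 ∧ m2 = 0) ∨ (m1 = -1 ∧ m2 = -1) ∨ (m1 = -1 ∧ m2 = -2) ∨
      (m1 = -2 ∧ m2 = -1) := by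
    clear g g' hk' hn hn'
    interval_cases m1 <;> interval_cases m2 <;> omega
  have hn4 : (n1 = 0 ∧ n2 = 0) ∨ (n1 = -1 ∧ n2 = -1) ∨ (n1 = -1 ∧ n2 = -2) ∨
      (n1 = -2 ∧ n2 = -1) := by
    clear g g' hk' hm hm' hm4
    interval_cases n1 <;> interval_cases n2 <;> omega
  have hk4 : (k1 = 1 ∧ k2 = 1) ∨ (k1 = 1 ∧ k2 = 2) ∨ (k1 = 2 ∧ k2 = 1) := by
    clear g g' hn hn' hn4 hm hm' hm4
    interval_cases k1 <;> interval_cases k2 <;> omega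
  clear hm hm' hn hn' hk' sm1 sn1 sk1 sm2 sn2 sk2 z z' a1 a2 b1 b2 c1 c2
  rcases hm4 with ⟨rfl, rfl⟩ | ⟨rfl, rfl⟩ | ⟨rfl, rfl⟩ | ⟨rfl, rfl⟩ <;>
  rcases hn4 with ⟨rfl, rfl⟩ | ⟨rfl, rfl⟩ | ⟨rfl, rfl⟩ | ⟨rfl, rfl⟩ <;>
  rcases hk4 with ⟨rfl, rfl⟩ | ⟨rfl, rfl⟩ | ⟨rfl, rfl⟩ <;> omega

lemma rs_main {Φ : Set V} [FiniteDimensional ℝ V] (h0 : (0 : V) ∉ Φ)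
    (hspan : Submodule.span ℝ Φ = ⊤)
    (hcrys : ∀ α ∈ Φ, ∀ β ∈ Φ, ∃ m : ℤ, 2 * ⟪β, α⟫ / ⟪α, α⟫ = (m : ℝ))
    (hrefl : ∀ α ∈ Φ, ∀ β ∈ Φ, β - (2 * ⟪β, α⟫ / ⟪α, α⟫) • α ∈ Φ)
    (hred : ∀ α ∈ Φ, ∀ c : ℝ, c • α ∈ Φ → c = 1 ∨ c = -1)
    (hirr : ¬ ∃ Φ₁ Φ₂ : Set V, Φ₁.Nonempty ∧ Φ₂.Nonempty ∧ Φ₁ ∪ Φ₂ = Φ ∧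
      Disjoint Φ₁ Φ₂ ∧ ∀ x ∈ Φ₁, ∀ y ∈ Φ₂, ⟪x, y⟫ = 0)
    (hrank : 3 ≤ Module.finrank ℝ V)
    (f : V →ₗ[ℝ] ℝ) {α β γ : V} (fa : 0 < f α) (fb : 0 < f β) (fc : 0 < f γ)
    (ha : α ∈ Φ) (hb : β ∈ Φ) (hc : γ ∈ Φ)
    (iab : ∀ c : ℝ, β ≠ c • α) (iac : ∀ c : ℝ, γ ≠ c • α) (ibc : ∀ c : ℝ, γ ≠ c • β)
    (p q : ℝ) (h : γ = p • α + q • β) (hle : f α ≤ f γ)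
    (s : ⟪α, β⟫ ≤ 0) (t : ⟪β, γ⟫ ≤ 0) : γ - α ∈ Φ ∧ β + γ - α ∉ Φ := by
  have u : 0 < ⟪α, γ⟫ := by
    by_contra hh
    exact obtuse_false f fa fb fc p q h s t (not_lt.mp hh)
  refine ⟨rs_sub h0 hcrys hrefl hc ha (fun e => iac 1 (by simpa using e))
    (by rw [real_inner_comm]; exact u), ?_⟩
  intro hrho
  have le2 := fun {a b : V} => @rs_cartan_le_two V _ _ Φ _ h0 hspan hcrys hrefl hirr hrank a b
  obtain ⟨m1, m2, hm1, hm2, m0, m3⟩ := le2 ha hb iab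
  obtain ⟨n1, n2, hn1, hn2, n0, n3⟩ := le2 hb hc ibc
  obtain ⟨k1, k2, hk1, hk2, -, k3⟩ := le2 ha hc iac
  have pa := rs_pos h0 ha
  have pb := rs_pos h0 hb
  have pc := rs_pos h0 hc
  have nonpos : ∀ (m : ℤ) (w A : ℝ), 0 < A → w ≤ 0 → 2 * w = m * A → m ≤ 0 := by
    intro m w A hA hw e
    by_contra hh
    have : (1:ℝ) ≤ m := by exact_mod_cast not_le.mp hh
    nlinarith
  have pos : ∀ (m : ℤ) (w A : ℝ), 0 < A → 0 < w → 2 * w = m * A → 0 < m := by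
    intro m w A hA hw e
    by_contra hh
    have : (m:ℝ) ≤ 0 := by exact_mod_cast not_lt.mp hh
    nlinarith
  have zz : ∀ (m n : ℤ) (A B : ℝ), 0 < A → 0 < B → (m:ℝ) * A = n * B → m = 0 → n = 0 := by
    intro m n A B hA hB e hm
    subst hm
    have : (n:ℝ) = 0 := by
      have : (n:ℝ) * B = 0 := by rw [← e]; simp
      exact (mul_eq_zero.mp this).resolve_right hB.ne'
    exact_mod_cast this
  have eu : ⟪α, γ⟫ = p * ⟪α, α⟫ + q * ⟪α, β⟫ := by
    rw [h]; simp [inner_add_right, inner_smul_right]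
  have et : ⟪β, γ⟫ = p * ⟪α, β⟫ + q * ⟪β, β⟫ := by
    rw [h]; simp [inner_add_right, inner_smul_right, real_inner_comm]
  have ec : ⟪γ, γ⟫ = p * ⟪α, γ⟫ + q * ⟪β, γ⟫ := by
    nth_rewrite 1 [h]; simp [inner_add_left, inner_smul_left]
  have lin : ∀ x y z : ℝ, ⟪x • α + y • β + z • γ, x • α + y • β + z • γ⟫ =
      x^2 * ⟪α, α⟫ + y^2 * ⟪β, β⟫ + z^2 * ⟪γ, γ⟫ + 2*x*y*⟪α, β⟫ + 2*x*z*⟪α, γ⟫ + 2*y*z*⟪β, γ⟫ := by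
    intro x y z
    simp only [inner_add_left, inner_add_right, inner_smul_left, inner_smul_right, conj_trivial,
      real_inner_comm α β, real_inner_comm α γ, real_inner_comm β γ]
    ring
  have lin2 : ∀ x y z : ℝ, ⟪x • α + y • β + z • γ, γ⟫ =
      x * ⟪α, γ⟫ + y * ⟪β, γ⟫ + z * ⟪γ, γ⟫ := by
    intro x y z
    simp only [inner_add_left, inner_smul_left, conj_trivial]
  set A := ⟪α, α⟫
  set B := ⟪β, β⟫
  set C := ⟪γ, γ⟫
  set S := ⟪α, β⟫
  set T := ⟪β, γ⟫
  set U := ⟪α, γ⟫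
  have gram : A * B * C + 2 * S * T * U - A * T^2 - B * U^2 - C * S^2 = 0 := by
    rw [ec, et, eu]; ring
  have hABC : A * B * C ≠ 0 := by positivity
  have gR : (n1:ℝ) * n2 + k1 * k2 + m1 * m2 = 4 + m2 * n2 * k1 := by
    apply mul_right_cancel₀ hABC
    have e1 : (n1:ℝ) * n2 * (A * B * C) = 4 * A * T^2 := by
      have : (2 * T) * (2 * T) = (n1 * B) * (n2 * C) := by rw [← hn1, ← hn2]
      linear_combination (-A) * this
    have e2 : (k1:ℝ) * k2 * (A * B * C) = 4 * B * U^2 := by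
      have : (2 * U) * (2 * U) = (k1 * A) * (k2 * C) := by rw [← hk1, ← hk2]
      linear_combination (-B) * this
    have e3 : (m1:ℝ) * m2 * (A * B * C) = 4 * C * S^2 := by
      have : (2 * S) * (2 * S) = (m1 * A) * (m2 * B) := by rw [← hm1, ← hm2]
      linear_combination (-C) * this
    have e4 : (m2:ℝ) * n2 * k1 * (A * B * C) = 8 * S * T * U := by
      have : (2 * S) * (2 * T) * (2 * U) = (m2 * B) * (n2 * C) * (k1 * A) := by
        rw [← hm2, ← hn2, ← hk1]
      linear_combination -this
    linear_combination e1 + e2 + e3 - e4 - 4 * gram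
  have gR' : (m2:ℝ) * n2 * k1 = m1 * n1 * k2 := by
    apply mul_right_cancel₀ hABC
    have : (m2 * B) * (n2 * C) * (k1 * A) = (m1 * A) * (n1 * B) * (k2 * C) := by
      rw [← hm2, ← hn2, ← hk1, ← hm1, ← hn1, ← hk2]
    linear_combination this
  have sm2 := nonpos m2 S B pb s hm2
  have sn1 := nonpos n1 T B pb t hn1
  have sk1 := pos k1 U A pa u hk1
  have sk2 := pos k2 U C pc u hk2
  rcases int_cases m1 m2 n1 n2 k1 k2 m0 m3 n0 n3 k3 (nonpos m1 S A pa s hm1) sn1 sk1 sm2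
    (nonpos n2 T C pc t hn2) sk2
    ⟨zz _ _ A B pa pb (by rw [← hm1, ← hm2]), zz _ _ B A pb pa (by rw [← hm1, ← hm2])⟩
    ⟨zz _ _ B C pb pc (by rw [← hn1, ← hn2]), zz _ _ C B pc pb (by rw [← hn1, ← hn2])⟩
    (by exact_mod_cast gR) (by exact_mod_cast gR') with ⟨hz, hn, hk⟩ | ⟨hz, hm, hk⟩
  · -- α ⊥ β
    have S0 : S = 0 := by rw [hz] at hm1; simpa using hm1
    have hp : 2 * p = k1 := by
      apply mul_right_cancel₀ pa.ne'
      rw [← hk1, eu, S0]; ring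
    have hq : 2 * q = n1 := by
      apply mul_right_cancel₀ pb.ne'
      rw [← hn1, et, S0]; ring
    have hf : f γ = p * f α + q * f β := by rw [h]; simp
    have k1le : (k1:ℝ) ≤ 2 := by
      have : k1 ≤ 2 := by nlinarith
      exact_mod_cast this
    have n1le : (n1:ℝ) ≤ -1 := by
      have : n1 ≤ -1 := by
        rcases sn1.lt_or_eq with h | h
        · omega
        · rw [h] at hn; simp at hn
      exact_mod_cast this
    nlinarith
  · -- β ⊥ γ
    have T0 : T = 0 := by rw [hz] at hn1; simpa using hn1
    have hA : α = (m2 / 2 : ℝ) • β + (k2 / 2 : ℝ) • γ := by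
      have hp : p ≠ 0 := by
        rintro rfl
        exact ibc q (by simpa using h)
      have e1 : p * m2 = -2 * q := by
        apply mul_right_cancel₀ pb.ne'
        have := et
        rw [T0] at this
        linear_combination -p * hm2 - 2 * this
      have e2 : p * k2 = 2 := by
        apply mul_right_cancel₀ pc.ne'
        have := ec
        rw [T0] at this
        linear_combination -p * hk2 - 2 * this
      have : p • α = p • ((m2 / 2 : ℝ) • β + (k2 / 2 : ℝ) • γ) := by
        rw [smul_add, smul_smul, smul_smul, show p * (m2 / 2 : ℝ) = -q by linarith,
          show p * (k2 / 2 : ℝ) = 1 by linarith, h]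
        module
      exact smul_right_injective V hp this
    have hk2' : k2 = 2 ∨ k2 = 1 ∧ k1 = 2 := by
      have : k2 ≤ 2 := by nlinarith
      interval_cases k2
      · right; omega
      · left; rfl
    have hm2' : m2 = -1 ∨ m2 = -2 := by
      have : m1 ≤ 0 := nonpos m1 S A pa s hm1
      have h1 : m1 ≠ 0 := by rintro rfl; simp at hm
      have : m1 ≤ -1 := by omega
      have : -2 ≤ m2 := by nlinarith
      have : m2 ≠ 0 := by rintro rfl; simp at hm
      omega
    rcases hk2' with rfl | ⟨rfl, rfl⟩
    · have e : β + γ - α = (1 - m2 / 2 : ℝ) • β := by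
        rw [hA]; push_cast; module
      rw [e] at hrho
      rcases hm2' with rfl | rfl <;> rcases hred β hb _ hrho with h | h <;> norm_num at h
    · have e : β + γ - α = (0:ℝ) • α + (1 - m2 / 2 : ℝ) • β + (1/2:ℝ) • γ := by
        nth_rewrite 1 [hA]; push_cast; module
      have i1 := lin 0 (1 - m2 / 2 : ℝ) (1/2)
      have i2 := lin2 0 (1 - m2 / 2 : ℝ) (1/2)
      rw [← e] at i1 i2
      obtain ⟨w, z, -, -, hw, hz, -, -⟩ := rs_cartan h0 hcrys hrho hc
      rw [i1, i2, T0] at hw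
      push_cast at hk1 hk2
      rw [eu] at hk1 hk2
      have hAn : A = m2^2 / 4 * B + C / 4 := by
        have := lin 0 (m2/2:ℝ) (1/2)
        rw [T0, show (0:ℝ) • α + (m2/2:ℝ) • β + (1/2:ℝ) • γ = α by
          nth_rewrite 2 [hA]; push_cast; module] at this
        change A = _ at this
        linarith
      have hC : C = m2^2 * B := by linarith
      rw [hC] at hw
      rcases hm2' with rfl | rfl
      · push_cast at hw
        have : (2:ℝ) = 5 * w := by
          apply mul_right_cancel₀ pb.ne'; linarith
        have : (2:ℤ) = 5 * w := by exact_mod_cast this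
        omega
      · push_cast at hw
        have : (4:ℝ) = 5 * w := by
          apply mul_right_cancel₀ pb.ne'; linarith
        have : (4:ℤ) = 5 * w := by exact_mod_cast this
        omega

end rs

/-- Lemma 5.1 of the paper.  Let `Φ` be an irreducible reduced crystallographic root
system of rank `≥ 3` in a finite-dimensional real inner product space `V`, with base `Δ`,
set of positive roots `Pos`, and height function `ht`.  If `α`, `β`, `γ` are pairwise
distinct linearly dependent positive roots with `ht γ ≥ max (ht α) (ht β)`, then
`β - α ∈ Φ`, or (`γ - β ∈ Φ` and `γ - α ∈ Φ`), or (`γ - α ∈ Φ` but `β + γ - α ∉ Φ`),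
or (`γ - β ∈ Φ` but `α + γ - β ∉ Φ`). -/
theorem root_system_dependent_triple
    {V : Type*} [NormedAddCommGroup V] [InnerProductSpace ℝ V] [FiniteDimensional ℝ V]
    (Φ : Set V) (hfin : Φ.Finite) (h0 : (0 : V) ∉ Φ)
    (hspan : Submodule.span ℝ Φ = ⊤)
    -- the Cartan integers `⟨β, α∨⟩ = 2⟪β, α⟫/⟪α, α⟫` are integers (crystallographic)
    (hcrys : ∀ α ∈ Φ, ∀ β ∈ Φ, ∃ m : ℤ, 2 * ⟪β, α⟫ / ⟪α, α⟫ = (m : ℝ))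
    -- `Φ` is closed under the reflections associated to its elements
    (hrefl : ∀ α ∈ Φ, ∀ β ∈ Φ, β - (2 * ⟪β, α⟫ / ⟪α, α⟫) • α ∈ Φ)
    -- `Φ` is reduced: the only multiples of a root `α` in `Φ` are `±α`
    (hred : ∀ α ∈ Φ, ∀ c : ℝ, c • α ∈ Φ → c = 1 ∨ c = -1)
    -- `Φ` is irreducible: no partition into two nonempty mutually orthogonal subsets
    (hirr : ¬ ∃ Φ₁ Φ₂ : Set V, Φ₁.Nonempty ∧ Φ₂.Nonempty ∧ Φ₁ ∪ Φ₂ = Φ ∧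
      Disjoint Φ₁ Φ₂ ∧ ∀ x ∈ Φ₁, ∀ y ∈ Φ₂, ⟪x, y⟫ = 0)
    -- the rank of `Φ` is at least 3
    (hrank : 3 ≤ Module.finrank ℝ V)
    -- `Δ` is a base of `Φ`: a linearly independent subset such that every root is an
    -- integer combination of `Δ` with coefficients all `≥ 0` or all `≤ 0`;
    -- `coeff β δ` is the coefficient of `δ ∈ Δ` in the expression of the root `β`
    (Δ : Set V) (hΔΦ : Δ ⊆ Φ) (hΔli : LinearIndependent ℝ ((↑) : Δ → V))
    (coeff : V → V → ℤ)
    (hcoeffsupp : ∀ β ∈ Φ, ∀ δ : V, coeff β δ ≠ 0 → δ ∈ Δ)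
    (hcoeff : ∀ β ∈ Φ, β = ∑ᶠ δ : V, (coeff β δ : ℝ) • δ)
    (hsign : ∀ β ∈ Φ, (∀ δ : V, 0 ≤ coeff β δ) ∨ (∀ δ : V, coeff β δ ≤ 0))
    -- `Pos` is the set of positive roots and `ht` the height function
    (Pos : Set V) (hPos : Pos = {β ∈ Φ | ∀ δ : V, 0 ≤ coeff β δ})
    (ht : V → ℤ) (hht : ∀ β ∈ Φ, ht β = ∑ᶠ δ : V, coeff β δ)
    -- `α`, `β`, `γ` are pairwise distinct linearly dependent positive roots,
    -- with `γ` of maximal height among them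
    (α β γ : V) (hα : α ∈ Pos) (hβ : β ∈ Pos) (hγ : γ ∈ Pos)
    (hαβ : α ≠ β) (hαγ : α ≠ γ) (hβγ : β ≠ γ)
    (hdep : ¬ LinearIndependent ℝ ![α, β, γ])
    (hhtγ : max (ht α) (ht β) ≤ ht γ) :
    β - α ∈ Φ ∨ (γ - β ∈ Φ ∧ γ - α ∈ Φ) ∨ (γ - α ∈ Φ ∧ β + γ - α ∉ Φ) ∨
      (γ - β ∈ Φ ∧ α + γ - β ∉ Φ) := by

  classical
  have hΔfin : Δ.Finite := hfin.subset hΔΦ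
  -- the height functional
  obtain ⟨f, hf⟩ : ∃ f : V →ₗ[ℝ] ℝ, ∀ δ ∈ Δ, f δ = 1 := by
    let b := Module.Basis.extend hΔli
    refine ⟨b.constr ℝ (fun _ => (1:ℝ)), fun δ hδ => ?_⟩
    have hm : δ ∈ LinearIndepOn.extend (K := ℝ) (v := id) hΔli (Set.subset_univ _) := Module.Basis.subset_extend hΔli hδ
    have : b ⟨δ, hm⟩ = δ := Module.Basis.extend_apply_self hΔli _
    rw [← this, Module.Basis.constr_basis]
  have hsupp : ∀ x ∈ Φ, ∀ δ, coeff x δ ≠ 0 → δ ∈ hΔfin.toFinset := by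
    intro x hx δ h
    simpa using hcoeffsupp x hx δ h
  have hsum : ∀ x ∈ Φ, x = ∑ δ ∈ hΔfin.toFinset, (coeff x δ : ℝ) • δ := by
    intro x hx
    conv_lhs => rw [hcoeff x hx]
    apply finsum_eq_sum_of_support_subset
    intro δ hδ
    apply hsupp x hx
    intro h
    simp [h] at hδ
  have hfht : ∀ x ∈ Φ, f x = ht x := by
    intro x hx
    have h1 : ht x = ∑ δ ∈ hΔfin.toFinset, coeff x δ := by
      rw [hht x hx]
      apply finsum_eq_sum_of_support_subset
      intro δ hδ
      exact hsupp x hx δ hδ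
    conv_lhs => rw [hsum x hx]
    rw [h1, map_sum]
    push_cast
    apply Finset.sum_congr rfl
    intro δ hδ
    rw [map_smul, hf δ (by simpa using hδ)]
    simp
  have hfpos : ∀ x ∈ Pos, 0 < f x := by
    intro x hx
    rw [hPos] at hx
    obtain ⟨hx, hn⟩ := hx
    have e : f x = ∑ δ ∈ hΔfin.toFinset, (coeff x δ : ℝ) := by
      conv_lhs => rw [hsum x hx]
      rw [map_sum]
      apply Finset.sum_congr rfl
      intro δ hδ
      rw [map_smul, hf δ (by simpa using hδ)]
      simp
    have hnn : ∀ δ ∈ hΔfin.toFinset, (0:ℝ) ≤ coeff x δ := fun δ _ => by exact_mod_cast hn δ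
    rw [e]
    refine lt_of_le_of_ne (Finset.sum_nonneg hnn) ?_
    intro h
    have hz := (Finset.sum_eq_zero_iff_of_nonneg hnn).mp h.symm
    apply h0
    have : x = 0 := by
      rw [hsum x hx]
      apply Finset.sum_eq_zero
      intro δ hδ
      rw [hz δ hδ]; simp
    rwa [← this]
  have fa := hfpos α hα
  have fb := hfpos β hβ
  have fc := hfpos γ hγ
  have hPΦ : ∀ x ∈ Pos, x ∈ Φ := by
    intro x hx; rw [hPos] at hx; exact hx.1
  have hind : ∀ x ∈ Pos, ∀ y ∈ Pos, x ≠ y → ∀ c : ℝ, y ≠ c • x := by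
    intro x hx y hy hxy c h
    have hy' := hPΦ y hy
    rw [h] at hy'
    rcases hred x (hPΦ x hx) c hy' with rfl | rfl
    · exact hxy (by simpa using h.symm)
    · have h1 := hfpos x hx
      have h2 := hfpos y hy
      rw [h] at h2
      simp at h2
      linarith
  obtain ⟨p, q, h⟩ : ∃ p q : ℝ, γ = p • α + q • β := by
    rw [Fintype.not_linearIndependent_iff] at hdep
    obtain ⟨g, hg, i, hi⟩ := hdep
    rw [Fin.sum_univ_three] at hg
    change g 0 • α + g 1 • β + g 2 • γ = 0 at hg
    have hg2 : g 2 ≠ 0 := by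
      intro h2
      rw [h2, zero_smul, add_zero] at hg
      have hg1 : g 1 = 0 := by
        by_contra hne
        apply hind α hα β hβ hαβ (-(g 0) / g 1)
        have e : g 1 • β = g 1 • ((-(g 0) / g 1) • α) := by
          rw [smul_smul, mul_div_cancel₀ _ hne, neg_smul]
          exact eq_neg_of_add_eq_zero_right hg
        exact smul_right_injective V hne e
      rw [hg1, zero_smul, add_zero] at hg
      have hα0 : α ≠ 0 := by rintro rfl; simp at fa
      have hg0 : g 0 = 0 := (smul_eq_zero.mp hg).resolve_right hα0
      apply hi
      fin_cases i
      · exact hg0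
      · exact hg1
      · exact h2
    refine ⟨-(g 0) / g 2, -(g 1) / g 2, ?_⟩
    have e : g 2 • γ = g 2 • ((-(g 0) / g 2) • α + (-(g 1) / g 2) • β) := by
      rw [smul_add, smul_smul, smul_smul, mul_div_cancel₀ _ hg2, mul_div_cancel₀ _ hg2,
        eq_neg_of_add_eq_zero_right hg]
      module
    exact smul_right_injective V hg2 e
  have ha := hPΦ α hα
  have hb := hPΦ β hβ
  have hc := hPΦ γ hγ
  have lea : f α ≤ f γ := by
    rw [hfht α ha, hfht γ hc]; exact_mod_cast (le_max_left _ _).trans hhtγ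
  have leb : f β ≤ f γ := by
    rw [hfht β hb, hfht γ hc]; exact_mod_cast (le_max_right _ _).trans hhtγ
  by_cases s : 0 < ⟪β, α⟫
  · exact Or.inl (rs_sub h0 hcrys hrefl hb ha hαβ.symm s)
  have s' := not_lt.mp s
  have s'' : ⟪α, β⟫ ≤ 0 := by rw [real_inner_comm]; exact s'
  right
  by_cases t : 0 < ⟪β, γ⟫
  · by_cases u : 0 < ⟪α, γ⟫
    · left
      rw [real_inner_comm] at t u
      exact ⟨rs_sub h0 hcrys hrefl hc hb hβγ.symm t, rs_sub h0 hcrys hrefl hc ha hαγ.symm u⟩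
    · right; right
      exact rs_main h0 hspan hcrys hrefl hred hirr hrank f fb fa fc hb ha hc
        (hind β hβ α hα hαβ.symm) (hind β hβ γ hγ hβγ) (hind α hα γ hγ hαγ) q p
        (by rw [h, add_comm]) leb s' (not_lt.mp u)
  · right; left
    exact rs_main h0 hspan hcrys hrefl hred hirr hrank f fa fb fc ha hb hc
      (hind α hα β hβ hαβ) (hind α hα γ hγ hαγ) (hind β hβ γ hγ hβγ) p q
      h lea s'' (not_lt.mp t)
end

section
/- Let q be a prime power and set v = q − 1. Let r, k be natural numbers with k ≤ r, let M be an r × k integer matrix whose columns are linearly independent over ℚ, and let d_1, …, d_k be the diagonal entries of a Smith normal form of M (so there exist invertible integer matrices P ∈ GL_r(ℤ) and Q ∈ GL_k(ℤ) such that P·M·Q has (l, l)-entry d_l for 1 ≤ l ≤ k and all other entries zero). Then the number of tuples b = (b_1, …, b_r) ∈ ((F_q)ˣ)^r satisfying ∏_{l=1}^{r} b_l^{M(l, j)} = 1 for all 1 ≤ j ≤ k equals v^{r − k} · ∏_{l=1}^{k} gcd(d_l, v). -/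
def torusAct {A : Type*} [CommGroup A] {m n : Type*} [Fintype m] (M : Matrix m n ℤ) (b : m → A) :
    n → A := fun j => ∏ l, b l ^ M l j

lemma torusAct_mul {A : Type*} [CommGroup A] {m n o : Type*} [Fintype m] [Fintype n]
    (M : Matrix m n ℤ) (N : Matrix n o ℤ) (b : m → A) :
    torusAct (M * N) b = torusAct N (torusAct M b) := by
  funext j
  simp only [torusAct, Matrix.mul_apply, Finset.prod_zpow, ← Finset.prod_zpow, ← zpow_mul]
  rw [Finset.prod_comm]
  refine Finset.prod_congr rfl fun l _ => ?_
  generalize b l = x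
  exact map_sum (zpowersHom A x).toAdditiveRight _ _

lemma torusAct_one {A : Type*} [CommGroup A] {m : Type*} [Fintype m] [DecidableEq m]
    (b : m → A) : torusAct (1 : Matrix m m ℤ) b = b := by
  funext j
  rw [torusAct, Finset.prod_eq_single j]
  · simp
  · intro i _ h
    simp [Matrix.one_apply, h]
  · simp

lemma torusAct_const_one {A : Type*} [CommGroup A] {m n : Type*} [Fintype m] (M : Matrix m n ℤ) :
    torusAct M (1 : m → A) = 1 := by
  funext j
  simp [torusAct]

lemma card_zpow_eq_one {A : Type*} [CommGroup A] [IsCyclic A] [Finite A] (d : ℤ) :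
    Nat.card {x : A // x ^ d = 1} = Int.gcd d (Nat.card A) := by
  have h := IsCyclic.card_powMonoidHom_ker A d.natAbs
  rw [Int.gcd_eq_natAbs, Int.natAbs_natCast, Nat.gcd_comm, ← h]
  refine Nat.card_congr (Equiv.subtypeEquivRight fun x => ?_)
  rw [MonoidHom.mem_ker, powMonoidHom_apply]
  rcases Int.natAbs_eq d with h' | h'
  · conv_lhs => rw [h', zpow_natCast]
  · conv_lhs => rw [h', zpow_neg, inv_eq_one, zpow_natCast]

/-- Let `q` be a prime power, `v = q - 1`, and `M` an `r × k` integer matrix with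
`ℚ`-linearly independent columns, with Smith normal form diagonal entries `d 1, …, d k`
(witnessed by `P ∈ GL_r(ℤ)`, `Q ∈ GL_k(ℤ)`).  Then the number of tuples
`b ∈ ((F_q)ˣ)^r` with `∏ l, b l ^ M l j = 1` for all `j` is
`v ^ (r - k) * ∏ l, gcd (d l) v`. -/
theorem card_torus_kernel_eq_smith (q : ℕ)
    (hq : ∃ p n : ℕ, p.Prime ∧ 0 < n ∧ q = p ^ n)
    (F : Type*) [Field F] [Fintype F] (hF : Fintype.card F = q)
    (r k : ℕ) (hk : k ≤ r) (M : Matrix (Fin r) (Fin k) ℤ)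
    (hM : LinearIndependent ℚ (fun j : Fin k => fun l : Fin r => (M l j : ℚ)))
    (d : Fin k → ℤ) (P : Matrix (Fin r) (Fin r) ℤ) (Q : Matrix (Fin k) (Fin k) ℤ)
    (hP : IsUnit P.det) (hQ : IsUnit Q.det)
    (hSNF : ∀ (l : Fin r) (j : Fin k),
      (P * M * Q) l j = if (l : ℕ) = (j : ℕ) then d j else 0) :
    Nat.card {b : Fin r → Fˣ // ∀ j : Fin k, (∏ l : Fin r, b l ^ M l j) = 1} =
      (q - 1) ^ (r - k) * ∏ l : Fin k, Int.gcd (d l) (q - 1) := by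
  classical
  have hcard : Nat.card Fˣ = q - 1 := by
    rw [Nat.card_eq_fintype_card, Fintype.card_units, hF]
  have hq1 : 1 ≤ q := by rw [← hF]; exact Fintype.card_pos
  have hcast : ((q : ℤ) - 1) = ((Nat.card Fˣ : ℕ) : ℤ) := by rw [hcard]; push_cast [hq1]; rfl
  obtain ⟨m, rfl⟩ := Nat.exists_eq_add_of_le hk
  let e : (Fin (k + m) → Fˣ) ≃ (Fin (k + m) → Fˣ) :=
    { toFun := torusAct P
      invFun := torusAct P⁻¹
      left_inv := fun b => by
        rw [← torusAct_mul, Matrix.mul_nonsing_inv _ hP, torusAct_one]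
      right_inv := fun b => by
        rw [← torusAct_mul, Matrix.nonsing_inv_mul _ hP, torusAct_one] }
  let T : Fin (k + m) → Set Fˣ := fun l =>
    Fin.addCases (fun j : Fin k => {x : Fˣ | x ^ d j = 1}) (fun _ => Set.univ) l
  have key : ∀ c : Fin (k + m) → Fˣ, (∀ l, c l ∈ T l) ↔
      ∀ j : Fin k, (∏ l, (e c) l ^ M l j) = 1 := by
    intro c
    have h1 : (∀ j : Fin k, (∏ l, (e c) l ^ M l j) = 1) ↔ torusAct M (torusAct P c) = 1 :=
      ⟨fun h => funext h, fun h j => congrFun h j⟩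
    have h2 : torusAct M (torusAct P c) = 1 ↔ torusAct (P * M * Q) c = 1 := by
      rw [torusAct_mul, torusAct_mul]
      refine ⟨fun h => by rw [h, torusAct_const_one], fun h => ?_⟩
      have := congrArg (torusAct Q⁻¹) h
      rwa [← torusAct_mul, Matrix.mul_nonsing_inv _ hQ, torusAct_one, torusAct_const_one] at this
    have h3 : ∀ j, torusAct (P * M * Q) c j = c (Fin.castAdd m j) ^ d j := by
      intro j
      rw [torusAct, Finset.prod_eq_single (Fin.castAdd m j)]
      · rw [hSNF]; simp
      · intro i _ h
        rw [hSNF, if_neg, zpow_zero]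
        intro h'
        exact h (Fin.ext (by simpa using h'))
      · simp
    rw [h1, h2, funext_iff]
    simp only [h3, Pi.one_apply]
    constructor
    · intro h j
      simpa [T] using h (Fin.castAdd m j)
    · intro h l
      refine Fin.addCases (fun j => ?_) (fun j => ?_) l
      · simpa [T] using h j
      · simp [T]
  rw [← Nat.card_congr (Equiv.subtypeEquiv e key),
    Nat.card_congr (Equiv.subtypePiEquivPi (p := fun l x => x ∈ T l)), Nat.card_pi,
    Fin.prod_univ_add, mul_comm]
  congr 1
  · rw [← hcard]; simp [T]
  · refine Finset.prod_congr rfl fun j _ => ?_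
    rw [hcast, ← card_zpow_eq_one]
    simp [T]
end
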